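/- arXiv:1506.03741 — 2 statements merged into one kernel-verified Lean document; each statement's English description precedes it below -/
import Mathlib

section
/- Assume the Riemann Hypothesis. There exists an absolute constant C > 0 such that for all X ≥ 1 and all h with 0 < h ≤ X, ∫_{1}^{X} (ψ(x+h) − ψ(x) − h)² dx ≤ C·h·X·(log(2X/h))². -/
open Real MeasureTheory

/-- The Chebyshev function `ψ(x) = ∑_{n ≤ x} Λ(n)`. -/
noncomputable def chebyshevPsi (x : ℝ) : ℝ :=
  ∑ n ∈ Finset.range (⌊x⌋₊ + 1), ArithmeticFunction.vonMangoldt n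

/-!
Let `ξ(s) = s (s - 1) π^(-s/2) Γ(s/2) ζ(s)`. Under the Riemann Hypothesis, Phragmén–Lindelöf applied
to `ξ(s - η) / ξ(s + η)` gives `|ξ(s - η)| ≤ |ξ(s + η)|`, so `re (ξ'/ξ) ≥ 0` to the right of the
critical line. This positivity replaces sums over zeros: a nonnegative harmonic function has its
mass against a Poisson kernel controlled by one value, so, after a shift of contour towards the
critical line, the Fourier transform at frequency `t` of `Λ(n) n^(-1/2)` minus its main term,
localized near `log n = U`, is `O(log (2 + |t|))` uniformly in `U`.

By Plancherel, `∫_1^Y (ψ(x + δx) - ψ(x) - δx)² dx ≪ δ Y² log² (2 + 1/δ)`. With `δ = 1`, doubling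
yields Cramér's bound `∫_1^Y (ψ(x) - x)² dx ≪ Y²`, which settles `x ≤ h`. For `x ≥ h`, the
Saffari–Vaughan device writes the interval of length `h` as the difference of the intervals of
lengths `v` and `v - h` and averages over `v ∈ [2h, 3h]`; after the substitution `v = δx` and an
exchange of the integrations, the bound at fixed `δ` applies.
-/

namespace SaffariVaughan

open Complex Metric Set Filter Topology ComplexConjugate

/-! ### Zero-free holomorphic functions on a disc -/

section ZeroFree

variable {f : ℂ → ℂ} {c : ℂ} {R : ℝ}

lemma exists_log_of_ne_zero_on_ball (hf : DifferentiableOn ℂ f (ball c R))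
    (hf0 : ∀ z ∈ ball c R, f z ≠ 0) :
    ∃ L : ℂ → ℂ, L c = 0 ∧ (∀ z ∈ ball c R, HasDerivAt L (logDeriv f z) z) ∧
      ∀ z ∈ ball c R, f z = f c * cexp (L z) := by
  obtain ⟨G, hG⟩ := ((hf.deriv isOpen_ball).div hf hf0).isExactOn_ball
  have hG : ∀ z ∈ ball c R, HasDerivAt G (logDeriv f z) z := hG
  refine ⟨fun z ↦ G z - G c, by simp, fun z hz ↦ (hG z hz).sub_const _, fun z hz ↦ ?_⟩
  have hder (x : ℂ) (hx : x ∈ ball c R) :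
      HasDerivAt (fun z ↦ f z * cexp (-(G z - G c))) 0 x := by
    have hfx := (hf.differentiableAt (isOpen_ball.mem_nhds hx)).hasDerivAt
    refine (hfx.mul ((hG x hx).sub_const (G c)).neg.cexp).congr_deriv ?_
    have hcancel : f x * logDeriv f x = deriv f x := mul_div_cancel₀ _ (hf0 x hx)
    linear_combination -cexp (-(G x - G c)) * hcancel
  have hconst : f z * cexp (-(G z - G c)) = f c * cexp (-(G c - G c)) :=
    isOpen_ball.is_const_of_deriv_eq_zero (convex_ball c R).isPreconnected
      (fun x hx ↦ (hder x hx).differentiableAt.differentiableWithinAt)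
      (fun x hx ↦ (hder x hx).deriv) hz (mem_ball_self (pos_of_mem_ball hz))
  rw [sub_self, neg_zero, Complex.exp_zero, mul_one] at hconst
  rw [← hconst, mul_assoc, ← Complex.exp_add, neg_add_cancel, Complex.exp_zero, mul_one]

lemma norm_le_of_re_le_on_ball {M : ℝ} {z : ℂ} (hM : 0 < M) (hf : DifferentiableOn ℂ f (ball c R))
    (hfM : ∀ w ∈ ball c R, (f w).re ≤ M) (hfc : f c = 0) (hz : z ∈ ball c R) :
    ‖f z‖ ≤ 2 * M * ‖z - c‖ / (R - ‖z - c‖) := by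
  have hshift : MapsTo (fun w ↦ w + c) (ball 0 R) (ball c R) := fun w hw ↦ by
    simpa [mem_ball, dist_eq_norm] using hw
  have hg : DifferentiableOn ℂ (fun w ↦ f (w + c)) (ball 0 R) :=
    hf.comp (by fun_prop : DifferentiableOn ℂ (fun w ↦ w + c) (ball 0 R)) hshift
  simpa using borelCaratheodory_zero (z := z - c) hM hg (fun w hw ↦ hfM _ (hshift hw))
    (pos_of_mem_ball hz) (by simpa [mem_ball, dist_eq_norm] using hz) (by simpa using hfc)

variable {M r : ℝ}

lemma exists_log_norm_le_of_ne_zero_on_ball (hM : 1 < M) (hf : DifferentiableOn ℂ f (ball c R))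
    (hf0 : ∀ z ∈ ball c R, f z ≠ 0) (hfM : ∀ z ∈ ball c R, ‖f z‖ ≤ M * ‖f c‖) :
    ∃ L : ℂ → ℂ, (∀ z ∈ ball c R, HasDerivAt L (logDeriv f z) z) ∧
      (∀ z ∈ ball c R, f z = f c * cexp (L z)) ∧
      ∀ z ∈ ball c R, ‖L z‖ ≤ 2 * Real.log M * ‖z - c‖ / (R - ‖z - c‖) := by
  obtain ⟨L, hLc, hL, hfL⟩ := exists_log_of_ne_zero_on_ball hf hf0
  refine ⟨L, hL, hfL, fun z hz ↦ norm_le_of_re_le_on_ball (Real.log_pos hM)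
    (fun w hw ↦ (hL w hw).differentiableAt.differentiableWithinAt) (fun w hw ↦ ?_) hLc hz⟩
  have hfc : 0 < ‖f c‖ := norm_pos_iff.2 (hf0 c (mem_ball_self (pos_of_mem_ball hz)))
  have hle := hfM w hw
  rw [hfL w hw, norm_mul, Complex.norm_exp, mul_comm] at hle
  exact (Real.le_log_iff_exp_le (by linarith)).2 (le_of_mul_le_mul_right hle hfc)

lemma mul_exp_neg_le_norm_of_ne_zero_on_ball (hrR : r < R) (hM : 1 < M)
    (hf : DifferentiableOn ℂ f (ball c R)) (hf0 : ∀ z ∈ ball c R, f z ≠ 0)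
    (hfM : ∀ z ∈ ball c R, ‖f z‖ ≤ M * ‖f c‖) {z : ℂ} (hz : ‖z - c‖ ≤ r) :
    ‖f c‖ * Real.exp (-(2 * Real.log M * R / (R - r))) ≤ ‖f z‖ := by
  obtain ⟨L, -, hfL, hLb⟩ := exists_log_norm_le_of_ne_zero_on_ball hM hf hf0 hfM
  have hzR : z ∈ ball c R := by rw [mem_ball, dist_eq_norm]; linarith
  have hR : 0 < R := pos_of_mem_ball hzR
  have hlM : 0 < Real.log M := Real.log_pos hM
  rw [hfL z hzR, norm_mul, Complex.norm_exp]
  gcongr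
  have hLz : ‖L z‖ ≤ 2 * Real.log M * R / (R - r) := (hLb z hzR).trans (by gcongr; linarith)
  linarith [(abs_le.1 (abs_re_le_norm (L z))).1]

lemma norm_logDeriv_le_of_ne_zero_on_ball (hrR : r < R) (hM : 1 < M)
    (hf : DifferentiableOn ℂ f (ball c R)) (hf0 : ∀ z ∈ ball c R, f z ≠ 0)
    (hfM : ∀ z ∈ ball c R, ‖f z‖ ≤ M * ‖f c‖) {z : ℂ} (hz : ‖z - c‖ ≤ r) :
    ‖logDeriv f z‖ ≤ 8 * R / (R - r) ^ 2 * Real.log M := by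
  obtain ⟨L, hL, -, hLb⟩ := exists_log_norm_le_of_ne_zero_on_ball hM hf hf0 hfM
  have hlM : 0 < Real.log M := Real.log_pos hM
  have hr : 0 ≤ r := (norm_nonneg _).trans hz
  have hR : 0 < R := by linarith
  have hρ : 0 < (R - r) / 2 := by linarith
  have hnear (x : ℂ) (hx : x ∈ closedBall z ((R - r) / 2)) : ‖x - c‖ ≤ (R + r) / 2 := by
    rw [mem_closedBall, dist_eq_norm] at hx
    linarith [norm_sub_le_norm_sub_add_norm_sub x z c]
  have hball (x : ℂ) (hx : x ∈ closedBall z ((R - r) / 2)) : x ∈ ball c R := by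
    rw [mem_ball, dist_eq_norm]; linarith [hnear x hx]
  have hdc : DiffContOnCl ℂ L (ball z ((R - r) / 2)) := by
    refine DifferentiableOn.diffContOnCl (fun x hx ↦ ?_)
    rw [closure_ball z hρ.ne'] at hx
    exact (hL x (hball x hx)).differentiableAt.differentiableWithinAt
  have hsphere (x : ℂ) (hx : x ∈ sphere z ((R - r) / 2)) :
      ‖L x‖ ≤ 2 * Real.log M * R / ((R - r) / 2) := by
    have hx := sphere_subset_closedBall hx
    have hxc := hnear x hx
    exact (hLb x (hball x hx)).trans (by gcongr <;> linarith)
  rw [← (hL z (hball z (mem_closedBall_self hρ.le))).deriv]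
  refine (norm_deriv_le_of_forall_mem_sphere_norm_le hρ hdc hsphere).trans_eq ?_
  have : R - r ≠ 0 := by linarith
  field_simp
  ring

end ZeroFree

lemma re_logDeriv_nonneg_of_norm_sub_le_norm_add {f : ℂ → ℂ} {s : ℂ} (hf : DifferentiableAt ℂ f s)
    (hmono : ∀ᶠ η : ℝ in 𝓝[>] 0, ‖f (s - η)‖ ≤ ‖f (s + η)‖) : 0 ≤ (logDeriv f s).re := by
  have hright : HasDerivAt (fun η : ℝ ↦ f (s + η)) (deriv f s) 0 :=
    (HasDerivAt.comp_const_add s (0 : ℝ) (by simpa using hf.hasDerivAt)).comp_ofReal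
  have hleft : HasDerivAt (fun η : ℝ ↦ f (s - η)) (-deriv f s) 0 :=
    (HasDerivAt.comp_const_sub s (0 : ℝ) (by simpa using hf.hasDerivAt)).comp_ofReal
  have hdiff := hright.norm_sq.sub hleft.norm_sq
  have hnonneg := ge_of_tendsto (b := 0) hdiff.tendsto_slope_zero_right (by
    filter_upwards [hmono, self_mem_nhdsWithin] with η hη hη0
    have hη0 : 0 < η := hη0
    have hsq : 0 ≤ ‖f (s + η)‖ ^ 2 - ‖f (s - η)‖ ^ 2 := sub_nonneg.2 (by gcongr)
    simp only [Pi.sub_apply, zero_add, ofReal_zero, add_zero, sub_zero, sub_self, smul_eq_mul]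
    positivity)
  simp only [ofReal_zero, add_zero, sub_zero, inner_neg_right, Complex.inner] at hnonneg
  have hinner : 0 ≤ (conj (f s) * deriv f s).re := by rw [mul_comm]; linarith
  have hlog : logDeriv f s = conj (f s) * deriv f s * ((normSq (f s))⁻¹ : ℝ) := by
    rw [logDeriv_apply, div_eq_mul_inv, Complex.inv_def]; push_cast; ring
  rw [hlog, re_mul_ofReal]
  exact mul_nonneg hinner (inv_nonneg.2 (normSq_nonneg _))

/-! ### Shifting vertical lines of integration -/

section VerticalLine

variable {F : ℂ → ℂ} {a b : ℝ} {B : ℝ → ℝ}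

lemma integrable_verticalLine {σ : ℝ} (hF : ∀ z : ℂ, z.re = σ → DifferentiableAt ℂ F z)
    (hB : Integrable B) (hFB : ∀ z : ℂ, z.re = σ → ‖F z‖ ≤ B z.im) :
    Integrable (fun τ : ℝ ↦ F (σ + τ * I)) := by
  have hcont : Continuous (fun τ : ℝ ↦ F (σ + τ * I)) := continuous_iff_continuousAt.2 fun τ ↦
    ContinuousAt.comp (f := fun τ : ℝ ↦ (σ + τ * I : ℂ)) (hF _ (by simp)).continuousAt (by fun_prop)
  refine hB.mono' hcont.aestronglyMeasurable (.of_forall fun τ ↦ ?_)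
  simpa using hFB (σ + τ * I) (by simp)

lemma norm_integral_segment_sub_le (hab : a ≤ b)
    (hF : ∀ z : ℂ, a ≤ z.re → z.re ≤ b → DifferentiableAt ℂ F z)
    (hFB : ∀ z : ℂ, a ≤ z.re → z.re ≤ b → ‖F z‖ ≤ B z.im) (T : ℝ) :
    ‖(∫ y : ℝ in (-T)..T, F (b + y * I)) - ∫ y : ℝ in (-T)..T, F (a + y * I)‖
      ≤ (B T + B (-T)) * (b - a) := by
  have hside (S : ℝ) : ‖∫ x : ℝ in a..b, F (x + S * I)‖ ≤ B S * (b - a) := by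
    rw [← abs_of_nonneg (sub_nonneg.2 hab)]
    refine intervalIntegral.norm_integral_le_of_norm_le_const fun x hx ↦ ?_
    rw [uIoc_of_le hab] at hx
    simpa using hFB (x + S * I) (by simpa using hx.1.le) (by simpa using hx.2)
  have hrect := integral_boundary_rect_eq_zero_of_differentiableOn F (⟨a, -T⟩ : ℂ) (⟨b, T⟩ : ℂ)
    fun z hz ↦ by
      rw [mem_reProdIm, uIcc_of_le hab] at hz
      exact (hF z hz.1.1 hz.1.2).differentiableWithinAt
  simp only [smul_eq_mul] at hrect
  have hsides : I * ((∫ y : ℝ in (-T)..T, F (b + y * I)) - ∫ y : ℝ in (-T)..T, F (a + y * I))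
      = (∫ x : ℝ in a..b, F (x + T * I)) - ∫ x : ℝ in a..b, F (x + (-T : ℝ) * I) := by
    linear_combination hrect
  rw [← one_mul ‖_‖, ← norm_I, ← norm_mul, hsides]
  linarith [norm_sub_le (∫ x : ℝ in a..b, F (x + T * I)) (∫ x : ℝ in a..b, F (x + (-T : ℝ) * I)),
    hside T, hside (-T)]

lemma integral_verticalLine_eq (hab : a ≤ b)
    (hF : ∀ z : ℂ, a ≤ z.re → z.re ≤ b → DifferentiableAt ℂ F z)
    (hB : Integrable B) (hB0 : Tendsto B (cocompact ℝ) (𝓝 0))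
    (hFB : ∀ z : ℂ, a ≤ z.re → z.re ≤ b → ‖F z‖ ≤ B z.im) :
    ∫ τ : ℝ, F (a + τ * I) = ∫ τ : ℝ, F (b + τ * I) := by
  have hlim (σ : ℝ) (ha : a ≤ σ) (hb : σ ≤ b) :
      Tendsto (fun T : ℝ ↦ ∫ τ : ℝ in (-T)..T, F (σ + τ * I)) atTop (𝓝 (∫ τ : ℝ, F (σ + τ * I))) :=
    intervalIntegral_tendsto_integral (integrable_verticalLine
      (fun z hz ↦ hF z (hz ▸ ha) (hz ▸ hb)) hB (fun z hz ↦ hFB z (hz ▸ ha) (hz ▸ hb)))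
      tendsto_neg_atTop_atBot tendsto_id
  have hB_top : Tendsto B atTop (𝓝 0) := hB0.mono_left atTop_le_cocompact
  have hB_bot : Tendsto (fun T ↦ B (-T)) atTop (𝓝 0) :=
    (hB0.mono_left atBot_le_cocompact).comp tendsto_neg_atTop_atBot
  have hzero := squeeze_zero_norm (norm_integral_segment_sub_le hab hF hFB)
    (by simpa using (hB_top.add hB_bot).mul_const (b - a))
  have hsub := tendsto_nhds_unique ((hlim b hab le_rfl).sub (hlim a le_rfl hab)) hzero
  exact (sub_eq_zero.1 hsub).symm

end VerticalLine

/-! ### The entire function `(s - 1) ζ(s)` -/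

lemma riemannZeta₁_eq_sub_one_mul {s : ℂ} (hs : s ≠ 1) :
    riemannZeta₁ s = (s - 1) * riemannZeta s := by
  rw [riemannZeta_eq_inv_sub_mul hs, mul_inv_cancel_left₀ (sub_ne_zero.2 hs)]

/-- The fractional part, cut off to `(1, ∞)`; its Mellin transform at `-s` is
`∫_1^∞ {t} t^{-s-1} dt`, which continues `ζ` to `Re s > 0`. -/
noncomputable def truncFract (t : ℝ) : ℂ :=
  (Ioi (1 : ℝ)).indicator (fun t ↦ ((Int.fract t : ℝ) : ℂ)) t

lemma norm_truncFract_le_one (t : ℝ) : ‖truncFract t‖ ≤ 1 :=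
  (norm_indicator_le_norm_self _ t).trans <| by
    rw [norm_real, Real.norm_of_nonneg (Int.fract_nonneg t)]
    exact (Int.fract_lt_one t).le

lemma measurable_truncFract : Measurable truncFract :=
  (measurable_ofReal.comp measurable_fract).indicator measurableSet_Ioi

lemma differentiableAt_mellin_truncFract {s : ℂ} (hs : s.re < 0) :
    DifferentiableAt ℂ (mellin truncFract) s := by
  refine mellin_differentiableAt_of_isBigO_rpow (a := 0) (b := s.re - 1) ?_ ?_ hs ?_ (by linarith)
  · refine LocallyIntegrable.locallyIntegrableOn ?_ _
    exact (locallyIntegrable_const (1 : ℝ)).mono measurable_truncFract.aestronglyMeasurable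
      (.of_forall fun x ↦ by simpa using norm_truncFract_le_one x)
  · exact Asymptotics.IsBigO.of_bound 1 (.of_forall fun x ↦ by simpa using norm_truncFract_le_one x)
  · have hzero : truncFract =ᶠ[𝓝[>] (0 : ℝ)] fun _ ↦ 0 := by
      filter_upwards [mem_nhdsWithin_of_mem_nhds (Iio_mem_nhds zero_lt_one)] with x hx
      exact indicator_of_notMem (notMem_Ioi.2 (le_of_lt hx)) _
    exact (Asymptotics.isBigO_zero _ _).congr' hzero.symm .rfl

lemma mellin_truncFract_neg (s : ℂ) :
    mellin truncFract (-s) =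
      ∫ t in Ioi (1 : ℝ), ((Int.fract t : ℝ) : ℂ) * (t : ℂ) ^ (-(s + 1)) := by
  have hind (t : ℝ) : (t : ℂ) ^ (-s - 1) • truncFract t = (Ioi (1 : ℝ)).indicator
      (fun t : ℝ ↦ ((Int.fract t : ℝ) : ℂ) * (t : ℂ) ^ (-(s + 1))) t := by
    rw [truncFract, indicator_mul_left, smul_eq_mul, mul_comm, neg_add']
  simp_rw [mellin, hind]
  rw [setIntegral_indicator measurableSet_Ioi, inter_eq_right.2 (Ioi_subset_Ioi zero_le_one)]

lemma norm_fract_mul_cpow_le (s : ℂ) {t : ℝ} (ht : 0 < t) :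
    ‖((Int.fract t : ℝ) : ℂ) * (t : ℂ) ^ (-(s + 1))‖ ≤ t ^ (-(s.re + 1)) := by
  rw [norm_mul, norm_cpow_eq_rpow_re_of_pos ht, norm_real, Real.norm_of_nonneg (Int.fract_nonneg _)]
  exact mul_le_of_le_one_left (by positivity) (Int.fract_lt_one t).le

lemma integrableOn_fract_mul_cpow {s : ℂ} (hs : 0 < s.re) :
    IntegrableOn (fun t : ℝ ↦ ((Int.fract t : ℝ) : ℂ) * (t : ℂ) ^ (-(s + 1))) (Ioi 1) := by
  refine Integrable.mono' (integrableOn_Ioi_rpow_of_lt (a := -(s.re + 1)) (by linarith) one_pos)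
    (.mul (measurable_ofReal.comp measurable_fract).aestronglyMeasurable ?_) ?_
  · exact ContinuousOn.aestronglyMeasurable (fun t ht ↦ (continuousAt_ofReal_cpow_const t _
      (.inr (zero_lt_one.trans ht).ne')).continuousWithinAt) measurableSet_Ioi
  · exact (ae_restrict_iff' measurableSet_Ioi).2
      (.of_forall fun t ht ↦ norm_fract_mul_cpow_le s (zero_lt_one.trans ht))

lemma norm_mellin_truncFract_neg_le {s : ℂ} (hs : 0 < s.re) :
    ‖mellin truncFract (-s)‖ ≤ 1 / s.re := by
  have hint : ∫ t in Ioi (1 : ℝ), t ^ (-(s.re + 1)) = 1 / s.re := by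
    rw [integral_Ioi_rpow_of_lt (by linarith) one_pos]
    simp
  rw [mellin_truncFract_neg, ← hint]
  exact norm_integral_le_of_norm_le (integrableOn_Ioi_rpow_of_lt (by linarith) one_pos)
    ((ae_restrict_iff' measurableSet_Ioi).2
      (.of_forall fun t ht ↦ norm_fract_mul_cpow_le s (zero_lt_one.trans ht)))

lemma integral_floor_mul_cpow {s : ℂ} (hs : 1 < s.re) :
    ∫ t in Ioi (1 : ℝ), (⌊t⌋₊ : ℂ) * (t : ℂ) ^ (-(s + 1))
      = (∫ t in Ioi (1 : ℝ), (t : ℂ) ^ (-s)) - mellin truncFract (-s) := by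
  rw [mellin_truncFract_neg, ← integral_sub
    (integrableOn_Ioi_cpow_of_lt (by simpa using hs) one_pos)
    (integrableOn_fract_mul_cpow (by linarith))]
  refine setIntegral_congr_fun measurableSet_Ioi fun t ht ↦ ?_
  have ht : 0 < t := zero_lt_one.trans ht
  have hpow : (t : ℂ) ^ (-s) = t * (t : ℂ) ^ (-(s + 1)) := by
    rw [show -s = 1 + -(s + 1) by ring, cpow_add _ _ (ofReal_ne_zero.2 ht.ne'), cpow_one]
  have hfloor : (⌊t⌋₊ : ℝ) = t - Int.fract t := by
    rw [Int.self_sub_fract, natCast_floor_eq_intCast_floor ht.le]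
  have hfloor' : (⌊t⌋₊ : ℂ) = t - (Int.fract t : ℝ) := by exact_mod_cast congrArg ofReal hfloor
  simp only [hpow, hfloor']
  ring

lemma riemannZeta₁_eq_of_one_lt_re {s : ℂ} (hs : 1 < s.re) :
    riemannZeta₁ s = s - s * (s - 1) * mellin truncFract (-s) := by
  have hs1 : s ≠ 1 := by rintro rfl; simp at hs
  have habel : riemannZeta s = s * ∫ t in Ioi (1 : ℝ), (⌊t⌋₊ : ℂ) * (t : ℂ) ^ (-(s + 1)) := by
    rw [← LSeries_one_eq_riemannZeta hs]
    simpa using LSeries_eq_mul_integral (1 : ℕ → ℂ) zero_le_one (by simpa using hs)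
      (LSeriesSummable_one_iff.2 hs) (.of_bound 1 (.of_forall fun x ↦ by simp))
  rw [integral_floor_mul_cpow hs, integral_Ioi_cpow_of_lt (by simpa using hs) one_pos] at habel
  rw [riemannZeta₁_eq_sub_one_mul hs1, habel, ofReal_one, one_cpow]
  have : -s + 1 ≠ 0 := fun h ↦ hs1 (by linear_combination -h)
  field_simp
  ring

lemma riemannZeta₁_eq_sub_mul_mellin {s : ℂ} (hs : 0 < s.re) :
    riemannZeta₁ s = s - s * (s - 1) * mellin truncFract (-s) := by
  have hopen : IsOpen {z : ℂ | 0 < z.re} := isOpen_lt continuous_const continuous_re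
  have hζ : AnalyticOnNhd ℂ riemannZeta₁ {z : ℂ | 0 < z.re} :=
    differentiable_riemannZeta₁.differentiableOn.analyticOnNhd hopen
  have hmellin : AnalyticOnNhd ℂ (fun s ↦ s - s * (s - 1) * mellin truncFract (-s))
      {z : ℂ | 0 < z.re} := by
    refine DifferentiableOn.analyticOnNhd (fun z (hz : 0 < z.re) ↦ ?_) hopen
    have h : DifferentiableAt ℂ (fun z ↦ mellin truncFract (-z)) z :=
      (differentiableAt_mellin_truncFract (by simpa using hz)).comp z differentiableAt_id.neg
    exact DifferentiableAt.differentiableWithinAt (by fun_prop)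
  refine hζ.eqOn_of_preconnected_of_eventuallyEq hmellin (convex_halfSpace_re_gt 0).isPreconnected
    (z₀ := 2) (by simp) ?_ hs
  have hnhds : {z : ℂ | 1 < z.re} ∈ 𝓝 (2 : ℂ) :=
    (isOpen_lt continuous_const continuous_re).mem_nhds (by simp)
  filter_upwards [hnhds] with z hz using riemannZeta₁_eq_of_one_lt_re hz

lemma norm_riemannZeta₁_le {s : ℂ} (hs : 1 / 8 ≤ s.re) :
    ‖riemannZeta₁ s‖ ≤ 9 * (1 + ‖s‖) ^ 2 := by
  have hmellin : ‖mellin truncFract (-s)‖ ≤ 8 :=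
    (norm_mellin_truncFract_neg_le (by linarith)).trans <| by
      rw [div_le_iff₀ (by linarith)]; linarith
  have hsub : ‖s - 1‖ ≤ ‖s‖ + 1 := by simpa using norm_sub_le s 1
  rw [riemannZeta₁_eq_sub_mul_mellin (by linarith)]
  calc ‖s - s * (s - 1) * mellin truncFract (-s)‖
      ≤ ‖s‖ + ‖s‖ * ‖s - 1‖ * ‖mellin truncFract (-s)‖ := by
        rw [← norm_mul, ← norm_mul]; exact norm_sub_le _ _
    _ ≤ ‖s‖ + ‖s‖ * (‖s‖ + 1) * 8 := by gcongr
    _ ≤ 9 * (1 + ‖s‖) ^ 2 := by nlinarith [norm_nonneg s]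

lemma riemannZeta₁_conj (s : ℂ) : riemannZeta₁ (conj s) = conj (riemannZeta₁ s) := by
  obtain rfl | hs := eq_or_ne s 1
  · simp
  have hs' : conj s ≠ 1 := fun h ↦ hs (by simpa using congrArg conj h)
  rw [riemannZeta₁_eq_sub_one_mul hs, riemannZeta₁_eq_sub_one_mul hs', riemannZeta_conj]
  simp

lemma norm_riemannZeta_sub_one_le {s : ℂ} (hs : 2 ≤ s.re) : ‖riemannZeta s - 1‖ ≤ 3 / 4 := by
  have hterm (n : ℕ) : ‖1 / ((n : ℂ) + 1) ^ s‖ ≤ 1 / ((n : ℝ) + 1) ^ 2 := by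
    rw [norm_div, norm_one, ← Nat.cast_succ, ← Nat.cast_succ, ← ofReal_natCast,
      norm_cpow_eq_rpow_re_of_pos (by positivity), ← Real.rpow_natCast]
    gcongr
    · simp
    · exact_mod_cast hs
  have hζ2 : HasSum (fun n : ℕ ↦ 1 / ((n : ℝ) + 1) ^ 2) (π ^ 2 / 6) := by
    simpa using (hasSum_nat_add_iff' 1).2 hasSum_zeta_two
  have htail : HasSum (fun n : ℕ ↦ 1 / (((n + 1 : ℕ) : ℝ) + 1) ^ 2) (π ^ 2 / 6 - 1) := by
    simpa using (hasSum_nat_add_iff' 1).2 hζ2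
  rw [zeta_eq_tsum_one_div_nat_add_one_cpow (by linarith),
    (Summable.of_norm_bounded hζ2.summable hterm).tsum_eq_zero_add]
  simp only [Nat.cast_zero, zero_add, one_cpow, div_one, add_sub_cancel_left]
  refine (tsum_of_norm_bounded htail fun n ↦ hterm (n + 1)).trans ?_
  nlinarith [Real.pi_lt_d2, Real.pi_gt_three]

lemma quarter_le_norm_riemannZeta {s : ℂ} (hs : 2 ≤ s.re) : 1 / 4 ≤ ‖riemannZeta s‖ := by
  have hle := norm_riemannZeta_sub_one_le hs
  have htri := norm_sub_norm_le (1 : ℂ) (1 - riemannZeta s)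
  rw [norm_sub_rev] at hle
  rw [sub_sub_cancel, norm_one] at htri
  linarith

lemma norm_riemannZeta_le_two {s : ℂ} (hs : 2 ≤ s.re) : ‖riemannZeta s‖ ≤ 2 := by
  have hle := norm_riemannZeta_sub_one_le hs
  have htri := norm_le_norm_sub_add (riemannZeta s) 1
  rw [norm_one] at htri
  linarith

lemma quarter_le_norm_riemannZeta₁ {s : ℂ} (hs : 2 ≤ s.re) : 1 / 4 ≤ ‖riemannZeta₁ s‖ := by
  have hs1 : s ≠ 1 := by rintro rfl; norm_num at hs
  have hsub : 1 ≤ ‖s - 1‖ := le_trans (by simp; linarith) (re_le_norm (s - 1))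
  rw [riemannZeta₁_eq_sub_one_mul hs1, norm_mul]
  nlinarith [quarter_le_norm_riemannZeta hs]

lemma riemannZeta₁_ne_zero (hRH : RiemannHypothesis) {s : ℂ} (hs : 1 / 2 < s.re) :
    riemannZeta₁ s ≠ 0 := by
  intro h0
  have hs1 : s ≠ 1 := by rintro rfl; simp at h0
  have hζ : riemannZeta s = 0 := by rw [riemannZeta_eq_inv_sub_mul hs1, h0, mul_zero]
  refine hs.ne' (hRH s hζ ?_ hs1)
  rintro ⟨n, rfl⟩
  simp at hs
  linarith [n.cast_nonneg (α := ℝ)]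

/-! ### The digamma function -/

lemma norm_betaIntegral_le {a b : ℝ} {z w : ℂ} (ha : 0 < a) (hb : 0 < b) (hz : a ≤ z.re)
    (hw : b ≤ w.re) : ‖betaIntegral z w‖ ≤
      ∫ x : ℝ in (0 : ℝ)..1, ‖(x : ℂ) ^ ((a : ℂ) - 1) * (1 - (x : ℂ)) ^ ((b : ℂ) - 1)‖ := by
  have hconv := betaIntegral_convergent (u := a) (v := b) (by simpa using ha) (by simpa using hb)
  refine intervalIntegral.norm_integral_le_of_norm_le zero_le_one ?_ hconv.norm
  filter_upwards [Measure.ae_ne volume (1 : ℝ)] with x hx1 hx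
  have hx0 : 0 < x := hx.1
  have hx1 : 0 < 1 - x := sub_pos.2 (lt_of_le_of_ne hx.2 hx1)
  rw [← ofReal_one, ← ofReal_sub, norm_mul, norm_mul, norm_cpow_eq_rpow_re_of_pos hx0,
    norm_cpow_eq_rpow_re_of_pos hx0, norm_cpow_eq_rpow_re_of_pos hx1,
    norm_cpow_eq_rpow_re_of_pos hx1]
  gcongr ?_ * ?_
  · exact Real.rpow_le_rpow_of_exponent_ge hx0 (by linarith) (by simpa using hz)
  · exact Real.rpow_le_rpow_of_exponent_ge hx1 (by linarith) (by simpa using hw)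

lemma exists_norm_Gamma_div_Gamma_add_le {a b : ℝ} (ha : 0 < a) (hb : 0 < b) :
    ∃ K : ℝ, 0 ≤ K ∧ ∀ z w : ℂ, a ≤ z.re → b ≤ w.re →
      ‖Complex.Gamma z / Complex.Gamma (z + w)‖ ≤ K * ‖(Complex.Gamma w)⁻¹‖ := by
  refine ⟨_, (norm_nonneg _).trans (norm_betaIntegral_le (z := a) (w := b) ha hb le_rfl le_rfl),
    fun z w hz hw ↦ ?_⟩
  have hbeta := Gamma_mul_Gamma_eq_betaIntegral (ha.trans_le hz) (hb.trans_le hw)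
  have hw0 : Complex.Gamma w ≠ 0 := Gamma_ne_zero_of_re_pos (hb.trans_le hw)
  have hzw0 : Complex.Gamma (z + w) ≠ 0 := Gamma_ne_zero_of_re_pos (by rw [add_re]; linarith)
  have hratio : Complex.Gamma z / Complex.Gamma (z + w)
      = betaIntegral z w * (Complex.Gamma w)⁻¹ := by
    field_simp
    exact hbeta
  rw [hratio, norm_mul]
  gcongr
  exact norm_betaIntegral_le ha hb hz hw

lemma exists_norm_Gamma_div_Gamma_add_le_of_mem_ball {a : ℝ} (ha : 0 < a) :
    ∃ K : ℝ, 0 ≤ K ∧ ∀ z : ℂ, a ≤ z.re → ∀ w ∈ ball (2 : ℂ) 1,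
      ‖Complex.Gamma z / Complex.Gamma (z + w)‖ ≤ K := by
  obtain ⟨B, hB⟩ := (isCompact_closedBall (2 : ℂ) 1).exists_bound_of_continuousOn
    (f := fun w ↦ (Complex.Gamma w)⁻¹) differentiable_one_div_Gamma.continuous.continuousOn
  have hB0 : 0 ≤ B := (norm_nonneg _).trans (hB 2 (by simp))
  obtain ⟨K, hK0, hK⟩ := exists_norm_Gamma_div_Gamma_add_le ha one_pos
  refine ⟨K * B, by positivity, fun z hz w hw ↦ (hK z w hz ?_).trans ?_⟩
  · rw [mem_ball, dist_eq_norm] at hw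
    have := (abs_le.1 ((abs_re_le_norm (w - 2)).trans hw.le)).1
    rw [sub_re, re_ofNat] at this
    linarith
  · gcongr
    exact hB w (ball_subset_closedBall hw)

lemma ne_neg_natCast_of_re_pos {z : ℂ} (hz : 0 < z.re) (m : ℕ) : z ≠ -m := by
  rintro rfl
  simp only [neg_re, natCast_re] at hz
  linarith [m.cast_nonneg (α := ℝ)]

lemma hasDerivAt_Gamma_div_Gamma_add (z : ℂ) {w : ℂ} (hzw : 0 < (z + w).re) :
    HasDerivAt (fun w ↦ Complex.Gamma z / Complex.Gamma (z + w))
      (-digamma (z + w) * (Complex.Gamma z / Complex.Gamma (z + w))) w := by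
  have hne : Complex.Gamma (z + w) ≠ 0 := Gamma_ne_zero_of_re_pos hzw
  have hΓ : HasDerivAt (fun w ↦ Complex.Gamma (z + w)) (deriv Complex.Gamma (z + w)) w :=
    (differentiableAt_Gamma _ (ne_neg_natCast_of_re_pos hzw)).hasDerivAt.comp_const_add z w
  refine ((hΓ.inv hne).const_mul (Complex.Gamma z)).congr_deriv ?_
  rw [digamma_def, logDeriv_apply]
  field_simp

lemma Gamma_div_Gamma_add_two {z : ℂ} (hz : 0 < z.re) :
    Complex.Gamma z / Complex.Gamma (z + 2) = 1 / (z * (z + 1)) := by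
  have hz0 : z ≠ 0 := by rintro rfl; simp at hz
  have hz1 : z + 1 ≠ 0 := fun h ↦ by
    have := congrArg re h
    simp at this; linarith
  have hΓ : Complex.Gamma z ≠ 0 := Gamma_ne_zero_of_re_pos hz
  rw [show z + 2 = z + 1 + 1 by ring, Gamma_add_one _ hz1, Gamma_add_one _ hz0]
  field_simp

lemma norm_mul_add_one_le (z : ℂ) : ‖z * (z + 1)‖ ≤ (2 + ‖z‖) ^ 2 := by
  have htri : ‖z + 1‖ ≤ ‖z‖ + 1 := by simpa using norm_add_le z 1
  rw [norm_mul]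
  nlinarith [norm_nonneg z, norm_nonneg (z + 1)]

/- `w ↦ Γ(z) / Γ(z + w)` is zero-free and bounded on the disc around `2`, with value
`1 / (z (z + 1))` at the centre, so its logarithmic derivative `-digamma (z + 2)` there is
`O(log |z|)`. -/
lemma exists_norm_digamma_add_two_le {a : ℝ} (ha : 0 < a) :
    ∃ K : ℝ, 1 ≤ K ∧ ∀ z : ℂ, a ≤ z.re →
      ‖digamma (z + 2)‖ ≤ 8 * Real.log (K * (2 + ‖z‖) ^ 2) := by
  obtain ⟨K, hK0, hK⟩ := exists_norm_Gamma_div_Gamma_add_le_of_mem_ball ha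
  refine ⟨K + 1, by linarith, fun z hz ↦ ?_⟩
  have hz' : 0 < z.re := ha.trans_le hz
  have hre {w : ℂ} (hw : w ∈ ball (2 : ℂ) 1) : 0 < (z + w).re := by
    rw [mem_ball, dist_eq_norm] at hw
    have := (abs_le.1 ((abs_re_le_norm (w - 2)).trans hw.le)).1
    rw [sub_re, re_ofNat] at this
    rw [add_re]
    linarith
  have hratio0 {w : ℂ} (hw : w ∈ ball (2 : ℂ) 1) :
      Complex.Gamma z / Complex.Gamma (z + w) ≠ 0 :=
    div_ne_zero (Gamma_ne_zero_of_re_pos hz') (Gamma_ne_zero_of_re_pos (hre hw))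
  have h2 : (2 : ℂ) ∈ ball (2 : ℂ) 1 := mem_ball_self one_pos
  have hcentre : 1 ≤ (2 + ‖z‖) ^ 2 * ‖Complex.Gamma z / Complex.Gamma (z + 2)‖ := by
    have hpos : 0 < ‖z * (z + 1)‖ := by
      have := norm_pos_iff.2 (hratio0 h2)
      rwa [Gamma_div_Gamma_add_two hz', norm_div, norm_one, one_div_pos] at this
    rw [Gamma_div_Gamma_add_two hz', norm_div, norm_one, mul_one_div, one_le_div hpos]
    exact norm_mul_add_one_le z
  have hlog := norm_logDeriv_le_of_ne_zero_on_ball (M := (K + 1) * (2 + ‖z‖) ^ 2) (r := 0)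
    one_pos (by nlinarith [norm_nonneg z])
    (fun w hw ↦ (hasDerivAt_Gamma_div_Gamma_add z (hre hw)).differentiableAt.differentiableWithinAt)
    (fun w hw ↦ hratio0 hw) (fun w hw ↦ (hK z hz w hw).trans (by nlinarith)) (z := 2) (by simp)
  rw [logDeriv_apply, (hasDerivAt_Gamma_div_Gamma_add z (hre h2)).deriv,
    mul_div_cancel_right₀ _ (hratio0 h2), norm_neg] at hlog
  simpa using hlog

lemma norm_inv_le_of_le_re {a : ℝ} (ha : 0 < a) {z : ℂ} (hz : a ≤ z.re) : ‖z⁻¹‖ ≤ a⁻¹ := by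
  rw [norm_inv]
  exact inv_anti₀ ha (hz.trans (re_le_norm z))

lemma exists_norm_digamma_le {a : ℝ} (ha : 0 < a) :
    ∃ C : ℝ, 0 < C ∧ ∀ z : ℂ, a ≤ z.re → ‖digamma z‖ ≤ C * Real.log (2 + ‖z‖) := by
  obtain ⟨K, hK1, hK⟩ := exists_norm_digamma_add_two_le ha
  have hK0 : 0 ≤ Real.log K := Real.log_nonneg hK1
  have : 0 < Real.log 2 := Real.log_pos one_lt_two
  refine ⟨(8 * Real.log K + 2 * a⁻¹) / Real.log 2 + 16, by positivity, fun z hz ↦ ?_⟩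
  have hlog : Real.log 2 ≤ Real.log (2 + ‖z‖) :=
    Real.log_le_log two_pos (by linarith [norm_nonneg z])
  have hrec : digamma z = digamma (z + 2) - z⁻¹ - (z + 1)⁻¹ := by
    rw [show z + 2 = z + 1 + 1 by ring,
      digamma_apply_add_one _ (ne_neg_natCast_of_re_pos (by simp; linarith)),
      digamma_apply_add_one _ (ne_neg_natCast_of_re_pos (by linarith))]
    ring
  have hexpand : Real.log (K * (2 + ‖z‖) ^ 2) = Real.log K + 2 * Real.log (2 + ‖z‖) := by
    rw [Real.log_mul (by linarith) (by positivity), Real.log_pow]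
    norm_num
  calc ‖digamma z‖ ≤ ‖digamma (z + 2)‖ + ‖z⁻¹‖ + ‖(z + 1)⁻¹‖ := by
        rw [hrec]
        exact (norm_sub_le _ _).trans (by gcongr; exact norm_sub_le _ _)
    _ ≤ 8 * (Real.log K + 2 * Real.log (2 + ‖z‖)) + a⁻¹ + a⁻¹ := by
        gcongr
        · exact hexpand ▸ hK z hz
        · exact norm_inv_le_of_le_re ha hz
        · exact norm_inv_le_of_le_re ha (by simp; linarith)
    _ = (8 * Real.log K + 2 * a⁻¹) / Real.log 2 * Real.log 2 + 16 * Real.log (2 + ‖z‖) := by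
        field_simp
        ring
    _ ≤ ((8 * Real.log K + 2 * a⁻¹) / Real.log 2 + 16) * Real.log (2 + ‖z‖) := by
        rw [add_mul]
        gcongr

/-! ### Positivity of `Re ξ'/ξ` to the right of the critical line -/

/-- Twice Riemann's `ξ`-function, `s (s - 1) π^(-s/2) Γ(s/2) ζ(s)`, written with the entire function
`completedRiemannZeta₀` so that it takes the right values at `0` and `1`. -/
noncomputable def xi (s : ℂ) : ℂ := s * (s - 1) * completedRiemannZeta₀ s + 1

lemma differentiable_xi : Differentiable ℂ xi := by
  have := differentiable_completedZeta₀
  unfold xi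
  fun_prop

lemma xi_one_sub (s : ℂ) : xi (1 - s) = xi s := by
  unfold xi
  rw [completedRiemannZeta₀_one_sub]
  ring

lemma xi_eq_mul_Gammaℝ_mul_riemannZeta₁ {s : ℂ} (hs : 0 < s.re) :
    xi s = s * Gammaℝ s * riemannZeta₁ s := by
  have hs0 : s ≠ 0 := by rintro rfl; simp at hs
  rcases eq_or_ne s 1 with rfl | hs1
  · simp [xi, Gammaℝ_one]
  have hG : Gammaℝ s ≠ 0 := Gammaℝ_ne_zero_of_re_pos hs
  have hsub : s - 1 ≠ 0 := sub_ne_zero.2 hs1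
  have hinv : (1 : ℂ) / (1 - s) = -(1 / (s - 1)) := by rw [← neg_sub, div_neg]
  rw [riemannZeta₁_eq_sub_one_mul hs1, riemannZeta_def_of_ne_zero hs0, completedRiemannZeta_eq, xi,
    hinv]
  field_simp
  ring

lemma Gammaℝ_conj (s : ℂ) : Gammaℝ (conj s) = conj (Gammaℝ s) := by
  have hpi : (π : ℂ).arg ≠ π := by
    rw [arg_ofReal_of_nonneg pi_pos.le]
    exact pi_pos.ne
  have hhalf (z : ℂ) : conj (z / 2) = conj z / 2 := by rw [map_div₀, conj_ofNat]
  rw [Gammaℝ_def, Gammaℝ_def, map_mul, ← Gamma_conj, hhalf, ← map_neg, ← hhalf,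
    cpow_conj _ _ hpi, conj_ofReal]

lemma xi_conj {s : ℂ} (hs : 0 < s.re) : xi (conj s) = conj (xi s) := by
  rw [xi_eq_mul_Gammaℝ_mul_riemannZeta₁ hs,
    xi_eq_mul_Gammaℝ_mul_riemannZeta₁ (by rwa [conj_re]), Gammaℝ_conj, riemannZeta₁_conj,
    map_mul, map_mul]

lemma xi_ne_zero (hRH : RiemannHypothesis) {s : ℂ} (hs : 1 / 2 < s.re) : xi s ≠ 0 := by
  have hs0 : 0 < s.re := by linarith
  have hne : s ≠ 0 := by rintro rfl; simp at hs0
  rw [xi_eq_mul_Gammaℝ_mul_riemannZeta₁ hs0]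
  exact mul_ne_zero (mul_ne_zero hne (Gammaℝ_ne_zero_of_re_pos hs0)) (riemannZeta₁_ne_zero hRH hs)

lemma norm_riemannZeta₁_le_mul_of_mem_ball {s z : ℂ} {R : ℝ} (hR : R ≤ 3 / 2)
    (hs : ‖s - (2 + s.im * I)‖ ≤ R) (hz : z ∈ ball (2 + s.im * I) R) :
    ‖riemannZeta₁ z‖ ≤ 144 * (2 + ‖s‖) ^ 2 * ‖riemannZeta₁ (2 + s.im * I)‖ := by
  set c : ℂ := 2 + s.im * I with hc
  have hcre : c.re = 2 := by simp [hc]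
  rw [mem_ball, dist_eq_norm] at hz
  have hzre : 1 / 8 ≤ z.re := by
    have hre := (abs_lt.1 ((abs_re_le_norm (z - c)).trans_lt hz)).1
    rw [sub_re, hcre] at hre
    linarith
  have hzs : ‖z‖ ≤ ‖s‖ + 3 := by
    have htri := norm_le_norm_add_norm_sub' z s
    have hdiff := norm_sub_le_norm_sub_add_norm_sub z c s
    rw [norm_sub_rev c s] at hdiff
    linarith
  have hlow := quarter_le_norm_riemannZeta₁ hcre.ge
  calc ‖riemannZeta₁ z‖ ≤ 9 * (1 + ‖z‖) ^ 2 := norm_riemannZeta₁_le hzre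
    _ ≤ 9 * (2 * (2 + ‖s‖)) ^ 2 := by gcongr; linarith [norm_nonneg s]
    _ = 144 * (2 + ‖s‖) ^ 2 * (1 / 4) := by ring
    _ ≤ 144 * (2 + ‖s‖) ^ 2 * ‖riemannZeta₁ c‖ := by gcongr

section CriticalStrip

variable {η : ℝ} {s : ℂ}

lemma norm_sub_two_add_im_le (hs : 1 / 2 + η ≤ s.re) (hs2 : s.re ≤ 2) :
    ‖s - (2 + s.im * I)‖ ≤ 3 / 2 - η := by
  have hreal : s - (2 + s.im * I) = ((s.re - 2 : ℝ) : ℂ) := by apply Complex.ext <;> simp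
  rw [hreal, norm_real, Real.norm_eq_abs, abs_le]
  constructor <;> linarith

lemma riemannZeta₁_ne_zero_of_mem_ball (hRH : RiemannHypothesis) (hη : 0 < η) {z : ℂ} {t : ℝ}
    (hz : z ∈ ball (2 + t * I) (3 / 2 - η / 2)) : riemannZeta₁ z ≠ 0 := by
  rw [mem_ball, dist_eq_norm] at hz
  have hre := (abs_lt.1 ((abs_re_le_norm _).trans_lt hz)).1
  refine riemannZeta₁_ne_zero hRH ?_
  simp only [sub_re, add_re, re_ofNat, re_ofReal_mul, I_re, mul_zero, add_zero] at hre
  linarith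

lemma one_lt_mul_two_add_norm_sq (s : ℂ) : 1 < 144 * (2 + ‖s‖) ^ 2 := by
  nlinarith [norm_nonneg s]

lemma mul_exp_neg_le_norm_riemannZeta₁ (hRH : RiemannHypothesis) (hη : 0 < η)
    (hs : 1 / 2 + η ≤ s.re) (hs2 : s.re ≤ 2) :
    1 / 4 * Real.exp (-(6 / η * Real.log (144 * (2 + ‖s‖) ^ 2))) ≤ ‖riemannZeta₁ s‖ := by
  have hsc := norm_sub_two_add_im_le hs hs2
  have hlog := Real.log_pos (one_lt_mul_two_add_norm_sq s)
  have hlow := mul_exp_neg_le_norm_of_ne_zero_on_ball (R := 3 / 2 - η / 2) (by linarith)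
    (one_lt_mul_two_add_norm_sq s) differentiable_riemannZeta₁.differentiableOn
    (fun z hz ↦ riemannZeta₁_ne_zero_of_mem_ball hRH hη hz)
    (fun z hz ↦ norm_riemannZeta₁_le_mul_of_mem_ball (by linarith) (by linarith) hz) hsc
  have hc := quarter_le_norm_riemannZeta₁ (s := 2 + s.im * I) (by simp)
  refine le_trans ?_ hlow
  gcongr ?_ * Real.exp (-?_)
  have hexpand : 6 / η * Real.log (144 * (2 + ‖s‖) ^ 2) * (η / 2)
      = 3 * Real.log (144 * (2 + ‖s‖) ^ 2) := by field_simp; ring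
  rw [show 3 / 2 - η / 2 - (3 / 2 - η) = η / 2 by ring, div_le_iff₀ (by linarith), hexpand]
  nlinarith

lemma norm_logDeriv_riemannZeta₁_le (hRH : RiemannHypothesis) (hη : 0 < η)
    (hs : 1 / 2 + η ≤ s.re) (hs2 : s.re ≤ 2) :
    ‖logDeriv riemannZeta₁ s‖ ≤ 48 / η ^ 2 * Real.log (144 * (2 + ‖s‖) ^ 2) := by
  have hlog := Real.log_pos (one_lt_mul_two_add_norm_sq s)
  refine (norm_logDeriv_le_of_ne_zero_on_ball (R := 3 / 2 - η / 2) (by linarith)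
    (one_lt_mul_two_add_norm_sq s) differentiable_riemannZeta₁.differentiableOn
    (fun z hz ↦ riemannZeta₁_ne_zero_of_mem_ball hRH hη hz)
    (fun z hz ↦ norm_riemannZeta₁_le_mul_of_mem_ball (by linarith)
      ((norm_sub_two_add_im_le hs hs2).trans (by linarith)) hz)
    (norm_sub_two_add_im_le hs hs2)).trans ?_
  gcongr ?_ * Real.log _
  rw [show 3 / 2 - η / 2 - (3 / 2 - η) = η / 2 by ring,
    div_le_div_iff₀ (by positivity) (by positivity)]
  nlinarith [pow_pos hη 3]

lemma log_mul_two_add_sq_le {x : ℝ} (hx : 0 ≤ x) :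
    Real.log (144 * (2 + x) ^ 2) ≤ 16 + 2 * x := by
  have hlog12 : Real.log 12 ≤ 3 := by
    rw [Real.log_le_iff_le_exp (by norm_num)]
    calc (12 : ℝ) ≤ 2.7182818283 ^ 3 := by norm_num
      _ ≤ Real.exp 1 ^ 3 := by gcongr; exact Real.exp_one_gt_d9.le
      _ = Real.exp 3 := by rw [← Real.exp_nat_mul]; norm_num
  calc Real.log (144 * (2 + x) ^ 2) = 2 * (Real.log 12 + Real.log (2 + x)) := by
        rw [← Real.log_mul (by norm_num) (by positivity),
          show 144 * (2 + x) ^ 2 = (12 * (2 + x)) ^ 2 by ring, Real.log_pow, Nat.cast_two]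
    _ ≤ 16 + 2 * x := by linarith [Real.log_le_sub_one_of_pos (show 0 < 2 + x by linarith)]

lemma norm_inv_riemannZeta₁_le (hRH : RiemannHypothesis) (hη : 0 < η) (hs : 1 / 2 + η ≤ s.re) :
    ‖(riemannZeta₁ s)⁻¹‖ ≤ 4 * Real.exp (6 / η * (16 + 2 * ‖s‖)) := by
  have hlow : 1 / 4 * Real.exp (-(6 / η * (16 + 2 * ‖s‖))) ≤ ‖riemannZeta₁ s‖ := by
    rcases le_total s.re 2 with h | h
    · refine le_trans ?_ (mul_exp_neg_le_norm_riemannZeta₁ hRH hη hs h)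
      gcongr
      exact log_mul_two_add_sq_le (norm_nonneg _)
    · have hexp : Real.exp (-(6 / η * (16 + 2 * ‖s‖))) ≤ 1 :=
        Real.exp_le_one_iff.2 (neg_nonpos.2 (by positivity))
      linarith [quarter_le_norm_riemannZeta₁ h]
  rw [norm_inv]
  refine (inv_anti₀ (by positivity) hlow).trans_eq ?_
  rw [mul_inv, Real.exp_neg, inv_inv, one_div, inv_inv]

lemma norm_sub_ofReal_le_norm_add_ofReal (hη : 0 ≤ η) (hs : 0 ≤ s.re) : ‖s - η‖ ≤ ‖s + η‖ := by
  rw [← sq_le_sq₀ (norm_nonneg _) (norm_nonneg _), Complex.sq_norm, Complex.sq_norm,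
    normSq_apply, normSq_apply]
  simp only [sub_re, ofReal_re, sub_im, ofReal_im, sub_zero, add_re, add_im, add_zero]
  nlinarith

lemma xi_sub_div_xi_add (hη : 0 < η) (hs : η < s.re) :
    xi (s - η) / xi (s + η) = (s - η) / (s + η) *
      ((π : ℂ) ^ (η : ℂ) * (Complex.Gamma ((s - η) / 2) / Complex.Gamma ((s - η) / 2 + η))) *
      (riemannZeta₁ (s - η) / riemannZeta₁ (s + η)) := by
  have hpi : (π : ℂ) ≠ 0 := ofReal_ne_zero.2 pi_ne_zero
  have hcpow : (π : ℂ) ^ (-(s - η) / 2) = (π : ℂ) ^ (η : ℂ) * (π : ℂ) ^ (-(s + η) / 2) := by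
    rw [← cpow_add _ _ hpi]
    congr 1
    ring
  have : (π : ℂ) ^ (-(s + η) / 2) ≠ 0 := by simp [cpow_eq_zero_iff, hpi]
  rw [xi_eq_mul_Gammaℝ_mul_riemannZeta₁ (by simpa using hs),
    xi_eq_mul_Gammaℝ_mul_riemannZeta₁ (by simpa using by linarith), Gammaℝ_def, Gammaℝ_def, hcpow,
    show (s - η) / 2 + η = (s + η) / 2 by ring]
  field_simp

lemma exists_norm_xi_sub_div_xi_add_le (hη : 0 < η) (hη' : η < 1 / 4) :
    ∃ K, 0 ≤ K ∧ ∀ s : ℂ, 1 / 2 ≤ s.re →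
      ‖xi (s - η) / xi (s + η)‖ ≤ K * ‖riemannZeta₁ (s - η) / riemannZeta₁ (s + η)‖ := by
  obtain ⟨K, hK0, hK⟩ := exists_norm_Gamma_div_Gamma_add_le (a := 1 / 8) (by norm_num) hη
  refine ⟨‖(π : ℂ) ^ (η : ℂ)‖ * (K * ‖(Complex.Gamma η)⁻¹‖), by positivity, fun s hs ↦ ?_⟩
  have hfrac : ‖(s - η) / (s + η)‖ ≤ 1 := by
    rw [norm_div]
    exact div_le_one_of_le₀ (norm_sub_ofReal_le_norm_add_ofReal hη.le (by linarith))
      (norm_nonneg _)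
  have hGamma := hK ((s - η) / 2) η (by
    rw [div_ofNat_re, sub_re, ofReal_re]
    linarith) (ofReal_re η).ge
  rw [xi_sub_div_xi_add hη (by linarith), norm_mul, norm_mul, norm_mul]
  refine mul_le_mul_of_nonneg_right ?_ (norm_nonneg _)
  exact (mul_le_of_le_one_left (by positivity) hfrac).trans (by gcongr)

lemma exists_norm_xi_sub_div_xi_add_le_exp (hRH : RiemannHypothesis) (hη : 0 < η)
    (hη' : η < 1 / 4) :
    ∃ A B : ℝ, 0 ≤ A ∧ 0 ≤ B ∧
      ∀ s : ℂ, 1 / 2 ≤ s.re → ‖xi (s - η) / xi (s + η)‖ ≤ A * Real.exp (B * ‖s‖) := by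
  obtain ⟨K, hK0, hK⟩ := exists_norm_xi_sub_div_xi_add_le hη hη'
  refine ⟨K * (9 * Real.exp 2 * (4 * Real.exp (6 / η * 18))), 2 + 6 / η * 2,
    by positivity, by positivity, fun s hs ↦ ?_⟩
  have hηn : ‖(η : ℂ)‖ = η := by rw [norm_real, Real.norm_of_nonneg hη.le]
  have hnum : ‖riemannZeta₁ (s - η)‖ ≤ 9 * Real.exp 2 * Real.exp (2 * ‖s‖) :=
    calc ‖riemannZeta₁ (s - η)‖ ≤ 9 * (1 + ‖s - η‖) ^ 2 :=
          norm_riemannZeta₁_le (by rw [sub_re, ofReal_re]; linarith)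
      _ ≤ 9 * Real.exp (1 + ‖s‖) ^ 2 := by
          gcongr
          linarith [Real.add_one_le_exp (1 + ‖s‖), norm_sub_le s η]
      _ = 9 * Real.exp 2 * Real.exp (2 * ‖s‖) := by
          rw [← Real.exp_nat_mul, mul_assoc, ← Real.exp_add]
          push_cast
          ring_nf
  have hden : ‖(riemannZeta₁ (s + η))⁻¹‖
      ≤ 4 * Real.exp (6 / η * 18) * Real.exp (6 / η * 2 * ‖s‖) :=
    calc ‖(riemannZeta₁ (s + η))⁻¹‖ ≤ 4 * Real.exp (6 / η * (16 + 2 * ‖s + η‖)) :=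
          norm_inv_riemannZeta₁_le hRH hη (by rw [add_re, ofReal_re]; linarith)
      _ ≤ 4 * Real.exp (6 / η * (18 + 2 * ‖s‖)) := by
          gcongr _ * Real.exp (_ * ?_)
          linarith [norm_add_le s η]
      _ = 4 * Real.exp (6 / η * 18) * Real.exp (6 / η * 2 * ‖s‖) := by
          rw [mul_assoc 4, ← Real.exp_add]
          ring_nf
  calc ‖xi (s - η) / xi (s + η)‖
      ≤ K * (‖riemannZeta₁ (s - η)‖ * ‖(riemannZeta₁ (s + η))⁻¹‖) := by
        rw [← norm_mul, ← div_eq_mul_inv]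
        exact hK s hs
    _ ≤ K * (9 * Real.exp 2 * Real.exp (2 * ‖s‖) *
          (4 * Real.exp (6 / η * 18) * Real.exp (6 / η * 2 * ‖s‖))) := by gcongr
    _ = _ := by rw [add_mul, Real.exp_add]; ring

lemma exists_xi_sub_div_xi_add_isBigO_exp (hRH : RiemannHypothesis) (hη : 0 < η)
    (hη' : η < 1 / 4) :
    ∃ B : ℝ, (fun z ↦ xi (1 / 2 + z - η) / xi (1 / 2 + z + η))
      =O[Bornology.cobounded ℂ ⊓ 𝓟 {z | 0 < z.re}] fun z ↦ Real.exp (B * ‖z‖) := by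
  obtain ⟨A, B, hA, hB, hAB⟩ := exists_norm_xi_sub_div_xi_add_le_exp hRH hη hη'
  refine ⟨B, .of_bound (A * Real.exp (B * (1 / 2))) ?_⟩
  refine eventually_inf_principal.2 (.of_forall fun z (hz : 0 < z.re) ↦ ?_)
  have hnorm : ‖1 / 2 + z‖ ≤ 1 / 2 + ‖z‖ := by simpa using norm_add_le (1 / 2 : ℂ) z
  calc ‖xi (1 / 2 + z - η) / xi (1 / 2 + z + η)‖ ≤ A * Real.exp (B * ‖1 / 2 + z‖) :=
        hAB _ (by simpa using hz.le)
    _ ≤ A * Real.exp (B * (1 / 2 + ‖z‖)) := by gcongr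
    _ = A * Real.exp (B * (1 / 2)) * ‖Real.exp (B * ‖z‖)‖ := by
        rw [Real.norm_of_nonneg (Real.exp_pos _).le, mul_add, Real.exp_add, mul_assoc]

lemma norm_riemannZeta₁_sub_div_riemannZeta₁_add_le (hη : 0 ≤ η) (hs : 2 + η ≤ s.re) :
    ‖riemannZeta₁ (s - η) / riemannZeta₁ (s + η)‖ ≤ 8 := by
  have hsub : 2 ≤ (s - η).re := by rw [sub_re, ofReal_re]; linarith
  have hadd : 2 ≤ (s + η).re := by rw [add_re, ofReal_re]; linarith
  have hfrac : ‖s - η - 1‖ ≤ ‖s + η - 1‖ := by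
    rw [sub_right_comm, add_sub_right_comm]
    exact norm_sub_ofReal_le_norm_add_ofReal hη (by rw [sub_re, one_re]; linarith)
  have hne {z : ℂ} (hz : 2 ≤ z.re) : z ≠ 1 := by rintro rfl; norm_num at hz
  have hzeta := quarter_le_norm_riemannZeta hadd
  rw [riemannZeta₁_eq_sub_one_mul (hne hsub), riemannZeta₁_eq_sub_one_mul (hne hadd),
    mul_div_mul_comm, norm_mul, norm_div, norm_div]
  calc ‖s - η - 1‖ / ‖s + η - 1‖ * (‖riemannZeta (s - η)‖ / ‖riemannZeta (s + η)‖)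
      ≤ 1 * (2 / (1 / 4)) := by
        gcongr
        · exact div_le_one_of_le₀ hfrac (norm_nonneg _)
        · exact norm_riemannZeta_le_two hsub
    _ = 8 := by norm_num

lemma norm_xi_sub_eq_norm_xi_add_of_re_eq_half (hη : 0 ≤ η) (hs : s.re = 1 / 2) :
    ‖xi (s - η)‖ = ‖xi (s + η)‖ := by
  have hreflect : s - η = 1 - conj (s + η) := by
    apply Complex.ext <;> simp [hs]
    ring
  rw [hreflect, xi_one_sub, xi_conj (by rw [add_re, ofReal_re]; linarith), norm_conj]

/-- Phragmén–Lindelöf in the half-plane `1 / 2 ≤ re s`, on whose boundary the functional equation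
makes the quotient of the two sides equal to `1`. -/
theorem norm_xi_sub_le_norm_xi_add (hRH : RiemannHypothesis) (hη : 0 < η) (hη' : η < 1 / 4)
    (hs : 1 / 2 ≤ s.re) : ‖xi (s - η)‖ ≤ ‖xi (s + η)‖ := by
  set Θ : ℂ → ℂ := fun z ↦ xi (1 / 2 + z - η) / xi (1 / 2 + z + η)
  have hre (z : ℂ) : (1 / 2 + z).re = 1 / 2 + z.re := by simp
  have hne {w : ℂ} (hw : 1 / 2 ≤ w.re) : xi (w + η) ≠ 0 :=
    xi_ne_zero hRH (by rw [add_re, ofReal_re]; linarith)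
  have hdiff : DiffContOnCl ℂ Θ {z | 0 < z.re} := by
    refine DifferentiableOn.diffContOnCl fun z hz ↦ DifferentiableAt.differentiableWithinAt ?_
    rw [closure_setOfPred_lt_re] at hz
    have := differentiable_xi
    exact .div (by fun_prop) (by fun_prop) (hne (by rw [hre]; linarith [show 0 ≤ z.re from hz]))
  have hgrowth : ∃ c < (2 : ℝ), ∃ B, Θ =O[Bornology.cobounded ℂ ⊓ 𝓟 {z | 0 < z.re}]
      fun z ↦ Real.exp (B * ‖z‖ ^ c) := by
    obtain ⟨B, hB⟩ := exists_xi_sub_div_xi_add_isBigO_exp hRH hη hη'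
    exact ⟨1, one_lt_two, B, by simpa only [Real.rpow_one] using hB⟩
  have hreal : IsBoundedUnder (· ≤ ·) atTop fun x : ℝ ↦ ‖Θ x‖ := by
    obtain ⟨K, hK0, hK⟩ := exists_norm_xi_sub_div_xi_add_le hη hη'
    refine ⟨K * 8, eventually_map.2 ?_⟩
    filter_upwards [eventually_ge_atTop (3 : ℝ)] with x hx
    refine (hK _ (by rw [hre, ofReal_re]; linarith)).trans ?_
    gcongr
    exact norm_riemannZeta₁_sub_div_riemannZeta₁_add_le hη.le (by rw [hre, ofReal_re]; linarith)
  have himag (x : ℝ) : ‖Θ (x * I)‖ ≤ 1 := by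
    rw [norm_div, norm_xi_sub_eq_norm_xi_add_of_re_eq_half hη.le (by simp)]
    exact div_self_le_one _
  have hΘ : ‖Θ (s - 1 / 2)‖ ≤ 1 :=
    PhragmenLindelof.right_half_plane_of_bounded_on_real hdiff hgrowth hreal himag
      (by simpa using hs)
  simp only [Θ, add_sub_cancel, norm_div] at hΘ
  exact (div_le_one (norm_pos_iff.2 (hne hs))).1 hΘ

theorem re_logDeriv_xi_nonneg (hRH : RiemannHypothesis) (hs : 1 / 2 < s.re) :
    0 ≤ (logDeriv xi s).re := by
  refine re_logDeriv_nonneg_of_norm_sub_le_norm_add (differentiable_xi s) ?_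
  filter_upwards [Ioo_mem_nhdsGT (show (0 : ℝ) < 1 / 4 by norm_num)] with η hη
  exact norm_xi_sub_le_norm_xi_add hRH hη.1 hη.2 hs.le

end CriticalStrip

/-! ### Logarithmic size and decay -/

/-- The logarithm of the height `t`, offset so that it stays bounded away from `0`. -/
noncomputable def logHeight (t : ℝ) : ℝ := Real.log (2 + |t|)

lemma half_le_logHeight (t : ℝ) : 1 / 2 ≤ logHeight t := by
  have hmono : Real.log 2 ≤ logHeight t :=
    Real.log_le_log (by norm_num) (by linarith [abs_nonneg t])
  linarith [Real.log_two_gt_d9]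

lemma logHeight_neg (t : ℝ) : logHeight (-t) = logHeight t := by rw [logHeight, abs_neg, logHeight]

lemma logHeight_add_le (τ t : ℝ) :
    logHeight (τ + t) ≤ 11 * logHeight t * (1 + τ ^ 2) ^ (1 / 4 : ℝ) := by
  have hrpow : 1 ≤ (1 + τ ^ 2) ^ (1 / 4 : ℝ) := Real.one_le_rpow (by nlinarith) (by norm_num)
  have hle : 2 + |τ + t| ≤ (2 + |t|) * (2 * (1 + τ ^ 2)) := by
    have hτ : |τ| ≤ 1 + τ ^ 2 := by rw [← sq_abs]; nlinarith [abs_nonneg τ]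
    nlinarith [abs_add_le τ t, mul_nonneg (abs_nonneg t) (sq_nonneg τ), abs_nonneg t]
  have hlog : Real.log (1 + τ ^ 2) ≤ (1 + τ ^ 2) ^ (1 / 4 : ℝ) / (1 / 4) :=
    Real.log_le_rpow_div (by positivity) (by norm_num)
  calc logHeight (τ + t) ≤ Real.log ((2 + |t|) * (2 * (1 + τ ^ 2))) :=
        Real.log_le_log (by positivity) hle
    _ = logHeight t + (Real.log 2 + Real.log (1 + τ ^ 2)) := by
        rw [Real.log_mul (by positivity) (by positivity),
          Real.log_mul (by positivity) (by positivity), logHeight]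
    _ ≤ 11 * logHeight t * (1 + τ ^ 2) ^ (1 / 4 : ℝ) := by
        nlinarith [half_le_logHeight t, Real.log_two_lt_d9]

/-- An integrable weight which dominates `log (2 + |τ|) / (1 + τ ^ 2)`. -/
noncomputable def decay (τ : ℝ) : ℝ := (1 + τ ^ 2) ^ (-(3 / 4) : ℝ)

lemma decay_nonneg (τ : ℝ) : 0 ≤ decay τ := by unfold decay; positivity

lemma integral_decay_nonneg : 0 ≤ ∫ τ, decay τ := integral_nonneg decay_nonneg

lemma integrable_decay : Integrable decay := by
  refine (integrable_rpow_neg_one_add_norm_sq (E := ℝ) (μ := volume) (r := 3 / 2)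
    (by rw [Module.finrank_self]; norm_num)).congr (.of_forall fun x ↦ ?_)
  simp only [decay, Real.norm_eq_abs, sq_abs]
  norm_num

lemma tendsto_decay_cocompact : Tendsto decay (cocompact ℝ) (𝓝 0) := by
  have hsq : Tendsto (fun τ : ℝ ↦ 1 + τ ^ 2) (cocompact ℝ) atTop := by
    have hpow := (tendsto_pow_atTop (α := ℝ) two_ne_zero).comp
      (tendsto_norm_cocompact_atTop (E := ℝ))
    exact tendsto_atTop_add_const_left _ 1 (hpow.congr fun τ ↦ sq_abs τ)
  exact (tendsto_rpow_neg_atTop (by norm_num)).comp hsq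

lemma div_le_mul_decay {A B c d τ t : ℝ} (hA : 0 ≤ A) (hd : 0 < d)
    (hAc : A ≤ c * logHeight (τ + t)) (hB : d * (1 + τ ^ 2) ≤ B) :
    A / B ≤ 11 * c / d * logHeight t * decay τ := by
  have hτ : (0 : ℝ) < 1 + τ ^ 2 := by positivity
  have hc : 0 ≤ c :=
    nonneg_of_mul_nonneg_left (hA.trans hAc) (by linarith [half_le_logHeight (τ + t)])
  have hdecay : logHeight (τ + t) / (1 + τ ^ 2) ≤ 11 * logHeight t * decay τ := by
    rw [div_le_iff₀ hτ, mul_assoc, decay, ← Real.rpow_add_one hτ.ne',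
      show -(3 / 4) + 1 = (1 / 4 : ℝ) by norm_num]
    exact logHeight_add_le τ t
  calc A / B ≤ c * logHeight (τ + t) / (d * (1 + τ ^ 2)) :=
        div_le_div₀ (hA.trans hAc) hAc (by positivity) hB
    _ = c / d * (logHeight (τ + t) / (1 + τ ^ 2)) := by field_simp
    _ ≤ c / d * (11 * logHeight t * decay τ) := by gcongr
    _ = 11 * c / d * logHeight t * decay τ := by ring

/-! ### Logarithmic derivatives, recentred at the critical line -/

/-- `ξ'/ξ`, recentred so that the critical line is the imaginary axis. -/
noncomputable def logDerivXi (z : ℂ) : ℂ := logDeriv xi (1 / 2 + z)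

/-- The recentred function `-ζ'/ζ(s) - 1 / (s - 1)` at `s = 1 / 2 + z`, analytic also at `s = 1`. -/
noncomputable def negLogDerivZeta₁ (z : ℂ) : ℂ := -logDeriv riemannZeta₁ (1 / 2 + z)

/-- The recentred logarithmic derivative of the factor `s π^(-s/2) Γ(s/2)` of `ξ`. -/
noncomputable def logDerivGammaFactor (z : ℂ) : ℂ := 1 / (1 / 2 + z) + logDeriv Gammaℝ (1 / 2 + z)

section LogDeriv

variable {z : ℂ}

lemma half_add_re (z : ℂ) : (1 / 2 + z).re = 1 / 2 + z.re := by simp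

lemma differentiableAt_logDeriv_half_add {f : ℂ → ℂ} (hf : Differentiable ℂ f)
    (hz : f (1 / 2 + z) ≠ 0) : DifferentiableAt ℂ (fun z ↦ logDeriv f (1 / 2 + z)) z := by
  have := hf.contDiff (n := 2) |>.differentiable_deriv_two
  simp only [logDeriv_apply]
  exact .div (by fun_prop) (by fun_prop) hz

lemma differentiableAt_logDerivXi (hRH : RiemannHypothesis) (hz : 0 < z.re) :
    DifferentiableAt ℂ logDerivXi z :=
  differentiableAt_logDeriv_half_add differentiable_xi
    (xi_ne_zero hRH (by rw [half_add_re]; linarith))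

lemma differentiableAt_negLogDerivZeta₁ (hRH : RiemannHypothesis) (hz : 0 < z.re) :
    DifferentiableAt ℂ negLogDerivZeta₁ z :=
  (differentiableAt_logDeriv_half_add differentiable_riemannZeta₁
    (riemannZeta₁_ne_zero hRH (by rw [half_add_re]; linarith))).neg

lemma differentiableAt_Gamma_half {s : ℂ} (hs : 0 < s.re) :
    DifferentiableAt ℂ Complex.Gamma (s / 2) :=
  differentiableAt_Gamma _ (ne_neg_natCast_of_re_pos (by rw [div_ofNat_re]; positivity))

lemma hasDerivAt_pi_cpow_neg_half (s : ℂ) : HasDerivAt (fun s : ℂ ↦ (π : ℂ) ^ (-s / 2))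
    ((π : ℂ) ^ (-s / 2) * Complex.log π * (-1 / 2)) s :=
  (((hasDerivAt_id s).neg).div_const 2).const_cpow (.inl (ofReal_ne_zero.2 pi_ne_zero))

lemma differentiableAt_Gammaℝ {s : ℂ} (hs : 0 < s.re) : DifferentiableAt ℂ Gammaℝ s := by
  have hG : DifferentiableAt ℂ (fun s : ℂ ↦ Complex.Gamma (s / 2)) s :=
    (differentiableAt_Gamma_half hs).comp s (by fun_prop)
  exact (hasDerivAt_pi_cpow_neg_half s).differentiableAt.mul hG

lemma logDeriv_Gammaℝ {s : ℂ} (hs : 0 < s.re) :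
    logDeriv Gammaℝ s = -(Real.log π : ℂ) / 2 + digamma (s / 2) / 2 := by
  have hpi : (π : ℂ) ^ (-s / 2) ≠ 0 := by simp [cpow_eq_zero_iff, pi_ne_zero]
  have hhalf : HasDerivAt (fun s : ℂ ↦ s / 2) (1 / 2) s := (hasDerivAt_id s).div_const 2
  have hG := differentiableAt_Gamma_half hs
  have hG0 : Complex.Gamma (s / 2) ≠ 0 :=
    Gamma_ne_zero_of_re_pos (by rw [div_ofNat_re]; positivity)
  have hmul : logDeriv Gammaℝ s = logDeriv (fun s : ℂ ↦ (π : ℂ) ^ (-s / 2)) s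
      + logDeriv (Complex.Gamma ∘ fun s : ℂ ↦ s / 2) s :=
    logDeriv_mul s hpi hG0 (hasDerivAt_pi_cpow_neg_half s).differentiableAt
      (hG.comp s hhalf.differentiableAt)
  rw [hmul, logDeriv_comp (g := fun s : ℂ ↦ s / 2) hG hhalf.differentiableAt, hhalf.deriv,
    digamma_def, logDeriv_apply, (hasDerivAt_pi_cpow_neg_half s).deriv, ofReal_log pi_pos.le]
  field_simp

lemma eventually_re_pos {s : ℂ} (hs : 0 < s.re) : ∀ᶠ w in 𝓝 s, 0 < w.re :=
  (isOpen_lt continuous_const continuous_re).mem_nhds hs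

lemma logDerivXi_eq_sub (hRH : RiemannHypothesis) (hz : 0 < z.re) :
    logDerivXi z = logDerivGammaFactor z - negLogDerivZeta₁ z := by
  set s : ℂ := 1 / 2 + z with hs
  have hre : s.re = 1 / 2 + z.re := half_add_re z
  have hs_re : 0 < s.re := by linarith
  have hs0 : s ≠ 0 := by rintro h; simp [h] at hs_re
  have hG0 := Gammaℝ_ne_zero_of_re_pos hs_re
  have hG := differentiableAt_Gammaℝ hs_re
  have hxi : xi =ᶠ[𝓝 s] fun s ↦ s * Gammaℝ s * riemannZeta₁ s :=
    (eventually_re_pos hs_re).mono fun w hw ↦ xi_eq_mul_Gammaℝ_mul_riemannZeta₁ hw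
  have hmul : logDeriv xi s = 1 / s + logDeriv Gammaℝ s + logDeriv riemannZeta₁ s := by
    rw [logDeriv_congr_nhds hxi |>.self_of_nhds,
      logDeriv_mul (f := fun s ↦ s * Gammaℝ s) s (mul_ne_zero hs0 hG0)
        (riemannZeta₁_ne_zero hRH (by linarith)) (by fun_prop) (differentiable_riemannZeta₁ s),
      logDeriv_mul (f := fun s ↦ s) s hs0 hG0 (by fun_prop) hG, logDeriv_id']
  rw [logDerivXi, logDerivGammaFactor, negLogDerivZeta₁, ← hs, hmul]
  ring

lemma logDerivXi_conj (hz : 0 < z.re) : logDerivXi (conj z) = conj (logDerivXi z) := by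
  have hs_re : 0 < (1 / 2 + z).re := by rw [half_add_re]; linarith
  have hconj : 1 / 2 + conj z = conj (1 / 2 + z) := by
    rw [map_add, map_div₀, map_one, conj_ofNat]
  have hxi : xi =ᶠ[𝓝 (1 / 2 + z)] (conj ∘ xi ∘ conj) :=
    (eventually_re_pos hs_re).mono fun w hw ↦ by simp [xi_conj hw]
  rw [logDerivXi, logDerivXi, logDeriv_apply, logDeriv_apply, hconj, xi_conj hs_re, map_div₀,
    hxi.deriv_eq, deriv_conj_conj, Function.comp_apply, Function.comp_apply,
    conj_conj]

lemma re_logDerivXi_nonneg (hRH : RiemannHypothesis) (hz : 0 < z.re) : 0 ≤ (logDerivXi z).re :=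
  re_logDeriv_xi_nonneg hRH (by rw [half_add_re]; linarith)

lemma log_two_add_norm_half_add_le (h0 : 0 ≤ z.re) (h1 : z.re ≤ 1) :
    Real.log (2 + ‖1 / 2 + z‖) ≤ 2 * logHeight z.im := by
  have hnorm : ‖1 / 2 + z‖ ≤ 2 + |z.im| := by
    refine (Complex.norm_le_abs_re_add_abs_im _).trans ?_
    rw [half_add_re, abs_of_nonneg (by positivity)]
    simp only [add_im, div_ofNat_im, one_im, zero_div, zero_add]
    linarith
  have hpow : 2 * logHeight z.im = Real.log ((2 + |z.im|) ^ 2) := by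
    rw [Real.log_pow, logHeight, Nat.cast_two]
  rw [hpow]
  exact Real.log_le_log (by positivity) (by nlinarith [abs_nonneg z.im])

lemma exists_norm_logDerivGammaFactor_le :
    ∃ C, 0 < C ∧ ∀ z : ℂ, 0 ≤ z.re → z.re ≤ 1 →
      ‖logDerivGammaFactor z‖ ≤ C * logHeight z.im := by
  obtain ⟨C, hC, hdigamma⟩ := exists_norm_digamma_le (a := 1 / 4) (by norm_num)
  refine ⟨4 + |Real.log π| + C, by positivity, fun z h0 h1 ↦ ?_⟩
  have hhalf : 1 / 2 ≤ ‖1 / 2 + z‖ :=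
    le_trans (by rw [half_add_re]; linarith) (re_le_norm (1 / 2 + z))
  have hinv : ‖1 / (1 / 2 + z)‖ ≤ 2 := by
    rw [norm_div, norm_one, div_le_iff₀ (by linarith)]
    linarith
  have hlogpi : ‖-(Real.log π : ℂ) / 2‖ = |Real.log π| / 2 := by
    rw [norm_div, norm_neg, norm_real, Real.norm_eq_abs, Complex.norm_ofNat]
  have hpsi : ‖digamma ((1 / 2 + z) / 2) / 2‖ ≤ C * logHeight z.im := by
    have hlog : Real.log (2 + ‖(1 / 2 + z) / 2‖) ≤ 2 * logHeight z.im := by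
      refine le_trans (Real.log_le_log (by positivity) ?_) (log_two_add_norm_half_add_le h0 h1)
      rw [norm_div, Complex.norm_ofNat]
      linarith
    have hdig := hdigamma ((1 / 2 + z) / 2) (by rw [div_ofNat_re, half_add_re]; linarith)
    rw [norm_div, Complex.norm_ofNat]
    nlinarith
  rw [logDerivGammaFactor, logDeriv_Gammaℝ (by rw [half_add_re]; linarith)]
  have htri := norm_add₃_le (a := 1 / (1 / 2 + z)) (b := -(Real.log π : ℂ) / 2)
    (c := digamma ((1 / 2 + z) / 2) / 2)
  rw [← add_assoc]
  nlinarith [abs_nonneg (Real.log π), half_le_logHeight z.im]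

lemma exists_norm_negLogDerivZeta₁_le (hRH : RiemannHypothesis) {a : ℝ} (ha : 0 < a) :
    ∃ C, 0 < C ∧ ∀ z : ℂ, a ≤ z.re → z.re ≤ 1 → ‖negLogDerivZeta₁ z‖ ≤ C * logHeight z.im := by
  have hlog144 : 0 < Real.log 144 := Real.log_pos (by norm_num)
  refine ⟨48 / a ^ 2 * (2 * Real.log 144 + 4), by positivity, fun z h0 h1 ↦ ?_⟩
  rw [negLogDerivZeta₁, norm_neg, mul_assoc]
  refine (norm_logDeriv_riemannZeta₁_le hRH ha (by rw [half_add_re]; linarith)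
    (by rw [half_add_re]; linarith)).trans ?_
  gcongr
  rw [Real.log_mul (by norm_num) (by positivity), Real.log_pow, Nat.cast_two]
  nlinarith [log_two_add_norm_half_add_le (ha.le.trans h0) h1, half_le_logHeight z.im]

lemma exists_norm_logDerivXi_le (hRH : RiemannHypothesis) {a : ℝ} (ha : 0 < a) :
    ∃ C, 0 < C ∧ ∀ z : ℂ, a ≤ z.re → z.re ≤ 1 → ‖logDerivXi z‖ ≤ C * logHeight z.im := by
  obtain ⟨C, hC, hzeta⟩ := exists_norm_negLogDerivZeta₁_le hRH ha
  obtain ⟨C', hC', hgamma⟩ := exists_norm_logDerivGammaFactor_le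
  refine ⟨C' + C, by positivity, fun z h0 h1 ↦ ?_⟩
  rw [logDerivXi_eq_sub hRH (by linarith), add_mul]
  exact norm_sub_le_of_le (hgamma z (by linarith) h1) (hzeta z h0 h1)

end LogDeriv

/-! ### Integrals against the Laplace kernel -/

/-- The two-sided Laplace transform `∫ v, exp (z * v - |v - U|)`, for `|re z| < 1`. -/
noncomputable def laplaceKernel (U : ℝ) (z : ℂ) : ℂ := 2 / (1 - z ^ 2) * cexp (z * U)

section LaplaceKernel

variable {U a b c E t : ℝ} {z w : ℂ}

lemma one_add_im_sq_le_norm_one_sub_sq (hz : |z.re| ≤ 3 / 4) :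
    7 / 16 * (1 + z.im ^ 2) ≤ ‖1 - z ^ 2‖ := by
  have hre : (1 - z ^ 2).re = 1 - (z.re ^ 2 - z.im ^ 2) := by
    simp only [sub_re, one_re, pow_two, mul_re]
  have hsq : z.re ^ 2 ≤ (3 / 4) ^ 2 := sq_le_sq' (neg_le_of_abs_le hz) (le_of_abs_le hz)
  calc 7 / 16 * (1 + z.im ^ 2) ≤ (1 - z ^ 2).re := by rw [hre]; nlinarith [sq_nonneg z.im]
    _ ≤ ‖1 - z ^ 2‖ := re_le_norm _

lemma norm_laplaceKernel (U : ℝ) (z : ℂ) :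
    ‖laplaceKernel U z‖ = 2 * Real.exp (z.re * U) / ‖1 - z ^ 2‖ := by
  rw [laplaceKernel, norm_mul, norm_div, Complex.norm_exp, Complex.norm_ofNat, re_mul_ofReal]
  ring

lemma differentiableAt_laplaceKernel (hz : |z.re| ≤ 3 / 4) :
    DifferentiableAt ℂ (laplaceKernel U) z := by
  have hne : 1 - z ^ 2 ≠ 0 :=
    norm_pos_iff.1 (lt_of_lt_of_le (by positivity) (one_add_im_sq_le_norm_one_sub_sq hz))
  have hdiv : DifferentiableAt ℂ (fun z : ℂ ↦ 2 / (1 - z ^ 2)) z :=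
    .div (by fun_prop) (by fun_prop) hne
  exact hdiv.mul (by fun_prop)

lemma norm_mul_laplaceKernel_le (hz : |z.re| ≤ 3 / 4) (hw : ‖w‖ ≤ c * logHeight (z.im + t))
    (hE : Real.exp (z.re * U) ≤ E) :
    ‖w * laplaceKernel U z‖ ≤ 51 * E * c * logHeight t * decay z.im := by
  have hE0 : 0 ≤ E := (Real.exp_pos _).le.trans hE
  have hc : 0 ≤ c := nonneg_of_mul_nonneg_left ((norm_nonneg w).trans hw)
    (by linarith [half_le_logHeight (z.im + t)])
  have hnum : ‖w‖ * (2 * Real.exp (z.re * U)) ≤ 2 * E * c * logHeight (z.im + t) :=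
    calc ‖w‖ * (2 * Real.exp (z.re * U)) ≤ c * logHeight (z.im + t) * (2 * E) := by
          gcongr
          exact (norm_nonneg w).trans hw
      _ = 2 * E * c * logHeight (z.im + t) := by ring
  rw [norm_mul, norm_laplaceKernel, ← mul_div_assoc]
  refine (div_le_mul_decay (by positivity) (by norm_num) hnum
    (one_add_im_sq_le_norm_one_sub_sq hz)).trans ?_
  have := decay_nonneg z.im
  have := half_le_logHeight t
  gcongr
  linarith [mul_nonneg hE0 hc]

section Line

variable {f : ℝ → ℂ}

lemma norm_mul_laplaceKernel_line_le (ha : |a| ≤ 3 / 4) (hE : Real.exp (a * U) ≤ E) {τ : ℝ}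
    (hw : ‖w‖ ≤ c * logHeight (τ + t)) :
    ‖w * laplaceKernel U (a + τ * I)‖ ≤ 51 * E * c * logHeight t * decay τ := by
  simpa using norm_mul_laplaceKernel_le (z := a + τ * I) (by simpa using ha)
    (by simpa using hw) (by simpa using hE)

lemma norm_integral_mul_laplaceKernel_le (ha : |a| ≤ 3 / 4) (hE : Real.exp (a * U) ≤ E)
    (hf : ∀ τ, ‖f τ‖ ≤ c * logHeight (τ + t)) :
    ‖∫ τ, f τ * laplaceKernel U (a + τ * I)‖ ≤ 51 * E * c * (∫ τ, decay τ) * logHeight t := by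
  refine (norm_integral_le_of_norm_le (integrable_decay.const_mul _)
    (.of_forall fun τ ↦ norm_mul_laplaceKernel_line_le ha hE (hf τ))).trans_eq ?_
  rw [integral_const_mul]
  ring

lemma continuous_laplaceKernel_line (ha : |a| ≤ 3 / 4) :
    Continuous fun τ : ℝ ↦ laplaceKernel U (a + τ * I) :=
  continuous_iff_continuousAt.2 fun τ ↦ ContinuousAt.comp (f := fun τ : ℝ ↦ (a + τ * I : ℂ))
    (differentiableAt_laplaceKernel (by simpa using ha)).continuousAt (by fun_prop)

lemma integrable_mul_laplaceKernel (ha : |a| ≤ 3 / 4) (hcont : Continuous f)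
    (hf : ∀ τ, ‖f τ‖ ≤ c * logHeight (τ + t)) :
    Integrable fun τ : ℝ ↦ f τ * laplaceKernel U (a + τ * I) :=
  (integrable_decay.const_mul _).mono'
    (hcont.mul (continuous_laplaceKernel_line ha)).aestronglyMeasurable
    (.of_forall fun τ ↦ norm_mul_laplaceKernel_line_le ha le_rfl (hf τ))

end Line

lemma integral_mul_laplaceKernel_shift {f : ℂ → ℂ} (ha : -(3 / 4) ≤ a) (hab : a ≤ b)
    (hb : b ≤ 3 / 4) (hdiff : ∀ z : ℂ, a ≤ z.re → z.re ≤ b → DifferentiableAt ℂ f z)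
    (hf : ∀ z : ℂ, a ≤ z.re → z.re ≤ b → ‖f z‖ ≤ c * logHeight (z.im + t)) :
    ∫ τ : ℝ, f (a + τ * I) * laplaceKernel U (a + τ * I)
      = ∫ τ : ℝ, f (b + τ * I) * laplaceKernel U (b + τ * I) := by
  have habs {z : ℂ} (h1 : a ≤ z.re) (h2 : z.re ≤ b) : |z.re| ≤ 3 / 4 :=
    abs_le.2 ⟨by linarith, by linarith⟩
  set K := 51 * Real.exp |U| * c * logHeight t
  refine integral_verticalLine_eq (F := fun z ↦ f z * laplaceKernel U z)
    (B := fun τ ↦ K * decay τ) hab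
    (fun z h1 h2 ↦ (hdiff z h1 h2).mul (differentiableAt_laplaceKernel (habs h1 h2)))
    (integrable_decay.const_mul K) (by simpa using tendsto_decay_cocompact.const_mul K)
    fun z h1 h2 ↦ norm_mul_laplaceKernel_le (habs h1 h2) (hf z h1 h2) (Real.exp_le_exp.2 ?_)
  calc z.re * U ≤ |z.re| * |U| := (le_abs_self _).trans_eq (abs_mul _ _)
    _ ≤ |U| := mul_le_of_le_one_left (abs_nonneg U) ((habs h1 h2).trans (by norm_num))

end LaplaceKernel

/-! ### The smoothed explicit formula, with positivity in place of a sum over zeros -/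

section ContourShift

variable {a b t U : ℝ}

lemma re_verticalLine_add (a τ t : ℝ) : (a + τ * I + t * I : ℂ).re = a := by simp

lemma im_verticalLine_add (a τ t : ℝ) : (a + τ * I + t * I : ℂ).im = τ + t := by simp

lemma re_verticalLine_add_pos (ha : 0 < a) (τ t : ℝ) : 0 < (a + τ * I + t * I : ℂ).re := by
  rwa [re_verticalLine_add]

lemma continuous_comp_verticalLine {f : ℂ → ℂ} (ha : 0 < a)
    (hf : ∀ z : ℂ, 0 < z.re → DifferentiableAt ℂ f z) (t : ℝ) :
    Continuous fun τ : ℝ ↦ f (a + τ * I + t * I) :=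
  continuous_iff_continuousAt.2 fun τ ↦
    ContinuousAt.comp (f := fun τ : ℝ ↦ (a + τ * I + t * I : ℂ))
      (hf _ (re_verticalLine_add_pos ha τ t)).continuousAt (by fun_prop)

lemma norm_verticalLine_le {f : ℂ → ℂ} {a₀ C : ℝ} (ha : a₀ ≤ a) (ha1 : a ≤ 1)
    (hf : ∀ z : ℂ, a₀ ≤ z.re → z.re ≤ 1 → ‖f z‖ ≤ C * logHeight z.im) (τ t : ℝ) :
    ‖f (a + τ * I + t * I)‖ ≤ C * logHeight (τ + t) := by
  simpa only [im_verticalLine_add] using hf (a + τ * I + t * I)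
    (by rwa [re_verticalLine_add]) (by rwa [re_verticalLine_add])

lemma laplaceKernel_zero_mul_I (τ : ℝ) :
    laplaceKernel 0 ((0 : ℝ) + τ * I) = ((2 / (1 + τ ^ 2) : ℝ) : ℂ) := by
  simp [laplaceKernel, mul_pow]

lemma continuous_logDerivXi_line (hRH : RiemannHypothesis) (ha : 0 < a) (t : ℝ) :
    Continuous fun τ : ℝ ↦ logDerivXi (a + τ * I + t * I) :=
  continuous_comp_verticalLine ha (fun _ ↦ differentiableAt_logDerivXi hRH) t

lemma integrable_logDerivXi_mul_laplaceKernel (hRH : RiemannHypothesis) (ha : 0 < a)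
    (ha1 : a ≤ 1) (hb : |b| ≤ 3 / 4) :
    Integrable fun τ : ℝ ↦ logDerivXi (a + τ * I + t * I) * laplaceKernel U (b + τ * I) :=
  have ⟨_, _, hC⟩ := exists_norm_logDerivXi_le hRH ha
  integrable_mul_laplaceKernel hb (continuous_logDerivXi_line hRH ha t)
    fun τ ↦ norm_verticalLine_le le_rfl ha1 hC τ t

lemma integral_logDerivXi_mul_laplaceKernel_shift (hRH : RiemannHypothesis) (ha : 0 < a)
    (ha' : a ≤ 3 / 4) :
    ∫ τ : ℝ, logDerivXi (a + τ * I + t * I) * laplaceKernel U ((0 : ℝ) + τ * I)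
      = ∫ τ : ℝ, logDerivXi ((3 / 4 : ℝ) + τ * I + t * I)
          * laplaceKernel U ((3 / 4 - a : ℝ) + τ * I) := by
  obtain ⟨C, -, hC⟩ := exists_norm_logDerivXi_le hRH ha
  have hshift := integral_mul_laplaceKernel_shift (f := fun z ↦ logDerivXi (z + (a + t * I)))
    (U := U) (a := 0) (b := 3 / 4 - a) (c := C) (t := t) (by norm_num) (by linarith)
    (by linarith)
    (fun z h0 _ ↦ differentiableAt_comp_add_const.2
      (differentiableAt_logDerivXi hRH (by simp; linarith)))
    (fun z h0 h1 ↦ by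
      simpa using hC (z + (a + t * I)) (by simp; linarith) (by simp; linarith))
  convert hshift using 5 with τ τ <;> push_cast <;> ring

section PoissonKernel

lemma re_logDerivXi_mul_laplaceKernel (a t τ : ℝ) :
    (logDerivXi (a + τ * I + t * I) * laplaceKernel 0 ((0 : ℝ) + τ * I)).re
      = (logDerivXi (a + τ * I + t * I)).re * (2 / (1 + τ ^ 2)) := by
  rw [laplaceKernel_zero_mul_I, re_mul_ofReal]

lemma integrable_re_logDerivXi_mul_poisson (hRH : RiemannHypothesis) (ha : 0 < a) (ha1 : a ≤ 1) :
    Integrable fun τ : ℝ ↦ (logDerivXi (a + τ * I + t * I)).re * (2 / (1 + τ ^ 2)) :=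
  (integrable_logDerivXi_mul_laplaceKernel (b := 0) (U := 0) hRH ha ha1 (by norm_num)).re.congr
    (.of_forall fun τ ↦ re_logDerivXi_mul_laplaceKernel a t τ)

lemma exists_integral_re_logDerivXi_mul_poisson_le (hRH : RiemannHypothesis) :
    ∃ C : ℝ, 0 < C ∧ ∀ a : ℝ, 0 < a → a ≤ 3 / 4 → ∀ t : ℝ,
      ∫ τ : ℝ, (logDerivXi (a + τ * I + t * I)).re * (2 / (1 + τ ^ 2)) ≤ C * logHeight t := by
  obtain ⟨C, hC, hbound⟩ := exists_norm_logDerivXi_le hRH (a := 3 / 4) (by norm_num)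
  have hdecay := integral_decay_nonneg
  refine ⟨51 * 1 * C * (∫ τ, decay τ) + 1, by positivity, fun a ha ha' t ↦ ?_⟩
  calc ∫ τ : ℝ, (logDerivXi (a + τ * I + t * I)).re * (2 / (1 + τ ^ 2))
      = (∫ τ : ℝ, logDerivXi (a + τ * I + t * I) * laplaceKernel 0 ((0 : ℝ) + τ * I)).re := by
        simp_rw [← re_logDerivXi_mul_laplaceKernel]
        exact integral_re
          (integrable_logDerivXi_mul_laplaceKernel hRH ha (by linarith) (by norm_num))
    _ = (∫ τ : ℝ, logDerivXi ((3 / 4 : ℝ) + τ * I + t * I)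
          * laplaceKernel 0 ((3 / 4 - a : ℝ) + τ * I)).re := by
        rw [integral_logDerivXi_mul_laplaceKernel_shift hRH ha ha']
    _ ≤ 51 * 1 * C * (∫ τ, decay τ) * logHeight t :=
        (re_le_norm _).trans (norm_integral_mul_laplaceKernel_le
          (abs_le.2 ⟨by linarith, by linarith⟩) (by simp)
          fun τ ↦ norm_verticalLine_le le_rfl (by norm_num) hbound τ t)
    _ ≤ (51 * 1 * C * (∫ τ, decay τ) + 1) * logHeight t := by linarith [half_le_logHeight t]

end PoissonKernel

lemma norm_re_logDerivXi_mul_laplaceKernel_le (hRH : RiemannHypothesis) (ha : 0 < a)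
    (ha' : a ≤ 3 / 4) (haU : a * U ≤ 1) (t τ : ℝ) :
    ‖((2 * (logDerivXi (a + τ * I + t * I)).re : ℝ) : ℂ) * laplaceKernel U (a + τ * I)‖
      ≤ 5 * Real.exp 1 * ((logDerivXi (a + τ * I + t * I)).re * (2 / (1 + τ ^ 2))) := by
  have hpos : 0 ≤ (logDerivXi (a + τ * I + t * I)).re :=
    re_logDerivXi_nonneg hRH (re_verticalLine_add_pos ha τ t)
  have hden : 7 / 16 * (1 + τ ^ 2) ≤ ‖1 - (a + τ * I : ℂ) ^ 2‖ := by
    simpa using one_add_im_sq_le_norm_one_sub_sq (z := a + τ * I)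
      (by simpa using abs_le.2 ⟨by linarith, ha'⟩)
  have hre : (a + τ * I : ℂ).re = a := by simp
  rw [norm_mul, norm_laplaceKernel, norm_real, Real.norm_of_nonneg (by positivity), hre]
  calc 2 * (logDerivXi (a + τ * I + t * I)).re
        * (2 * Real.exp (a * U) / ‖1 - (a + τ * I : ℂ) ^ 2‖)
      ≤ 2 * (logDerivXi (a + τ * I + t * I)).re
        * (2 * Real.exp 1 / (7 / 16 * (1 + τ ^ 2))) := by gcongr
    _ = 32 / 7 * Real.exp 1 * ((logDerivXi (a + τ * I + t * I)).re * (2 / (1 + τ ^ 2))) := by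
        field_simp
        ring
    _ ≤ _ := by gcongr; norm_num

lemma exists_norm_integral_re_logDerivXi_le (hRH : RiemannHypothesis) :
    ∃ C : ℝ, 0 < C ∧ ∀ a U : ℝ, 0 < a → a ≤ 3 / 4 → a * U ≤ 1 → ∀ t : ℝ,
      ‖∫ τ : ℝ, ((2 * (logDerivXi (a + τ * I + t * I)).re : ℝ) : ℂ)
        * laplaceKernel U (a + τ * I)‖ ≤ C * logHeight t := by
  obtain ⟨C, hC, hbound⟩ := exists_integral_re_logDerivXi_mul_poisson_le hRH
  refine ⟨5 * Real.exp 1 * C, by positivity, fun a U ha ha' haU t ↦ ?_⟩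
  refine (norm_integral_le_of_norm_le
    ((integrable_re_logDerivXi_mul_poisson hRH ha (by linarith)).const_mul _)
    (.of_forall (norm_re_logDerivXi_mul_laplaceKernel_le hRH ha ha' haU t))).trans ?_
  rw [integral_const_mul, mul_assoc _ C]
  gcongr
  exact hbound a ha ha' t

lemma conj_logDerivXi_line (ha : 0 < a) (τ t : ℝ) :
    conj (logDerivXi (a + τ * I + t * I)) = logDerivXi (2 * a - t * I - (a + τ * I)) := by
  rw [← logDerivXi_conj (re_verticalLine_add_pos ha τ t)]
  congr 1
  simp
  ring

lemma integral_conj_logDerivXi_shift (hRH : RiemannHypothesis) (ha : 0 < a) (ha' : a ≤ 1 / 8) :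
    ∫ τ : ℝ, conj (logDerivXi (a + τ * I + t * I)) * laplaceKernel U (a + τ * I)
      = ∫ τ : ℝ, logDerivXi (2 * a - t * I - ((-(3 / 4) : ℝ) + τ * I))
          * laplaceKernel U ((-(3 / 4) : ℝ) + τ * I) := by
  obtain ⟨C, -, hC⟩ := exists_norm_logDerivXi_le hRH ha
  simp_rw [conj_logDerivXi_line ha]
  refine (integral_mul_laplaceKernel_shift (f := fun z ↦ logDerivXi (2 * a - t * I - z))
    (c := C) (t := t) le_rfl (by linarith) (by linarith)
    (fun z _ h1 ↦ ?_) (fun z h0 h1 ↦ ?_)).symm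
  · exact differentiableAt_comp_const_sub.2
      (differentiableAt_logDerivXi hRH (by simp; linarith))
  · have him : (2 * a - t * I - z : ℂ).im = -(z.im + t) := by simp; ring
    rw [← logHeight_neg, ← him]
    exact hC _ (by simp; linarith) (by simp; linarith)

lemma exists_norm_integral_conj_logDerivXi_le (hRH : RiemannHypothesis) :
    ∃ C : ℝ, 0 < C ∧ ∀ a U : ℝ, 0 < a → a ≤ 1 / 8 → 0 ≤ U → ∀ t : ℝ,
      ‖∫ τ : ℝ, conj (logDerivXi (a + τ * I + t * I)) * laplaceKernel U (a + τ * I)‖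
        ≤ C * logHeight t := by
  obtain ⟨C, hC, hbound⟩ := exists_norm_logDerivXi_le hRH (a := 3 / 4) (by norm_num)
  have hdecay := integral_decay_nonneg
  refine ⟨51 * 1 * C * (∫ τ, decay τ) + 1, by positivity, fun a U ha ha' hU t ↦ ?_⟩
  rw [integral_conj_logDerivXi_shift hRH ha ha']
  have hexp : Real.exp (-(3 / 4) * U) ≤ 1 := Real.exp_le_one_iff.2 (by linarith)
  refine (norm_integral_mul_laplaceKernel_le (by norm_num) hexp fun τ ↦ ?_).trans
    (by linarith [half_le_logHeight t] :
      51 * 1 * C * (∫ τ, decay τ) * logHeight t ≤ _)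
  have him : (2 * a - t * I - ((-(3 / 4) : ℝ) + τ * I) : ℂ).im = -(τ + t) := by simp; ring
  rw [← logHeight_neg, ← him]
  exact hbound _ (by simp; linarith) (by simp; linarith)

lemma negLogDerivZeta₁_line_eq (hRH : RiemannHypothesis) (ha : 0 < a) (τ t : ℝ) :
    negLogDerivZeta₁ (a + τ * I + t * I)
      = logDerivGammaFactor (a + τ * I + t * I)
        - ((2 * (logDerivXi (a + τ * I + t * I)).re : ℝ) : ℂ)
        + conj (logDerivXi (a + τ * I + t * I)) := by
  rw [← add_conj, logDerivXi_eq_sub hRH (re_verticalLine_add_pos ha τ t)]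
  ring

lemma continuous_logDerivGammaFactor_line (hRH : RiemannHypothesis) (ha : 0 < a) (t : ℝ) :
    Continuous fun τ : ℝ ↦ logDerivGammaFactor (a + τ * I + t * I) := by
  refine ((continuous_logDerivXi_line hRH ha t).add (continuous_comp_verticalLine ha
    (fun _ ↦ differentiableAt_negLogDerivZeta₁ hRH) t)).congr fun τ ↦ ?_
  rw [Pi.add_apply, logDerivXi_eq_sub hRH (re_verticalLine_add_pos ha τ t)]
  ring

lemma integral_negLogDerivZeta₁_line_eq (hRH : RiemannHypothesis) (ha : 0 < a)
    (ha' : a ≤ 3 / 4) (U t : ℝ) :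
    ∫ τ : ℝ, negLogDerivZeta₁ (a + τ * I + t * I) * laplaceKernel U (a + τ * I)
      = (∫ τ : ℝ, logDerivGammaFactor (a + τ * I + t * I) * laplaceKernel U (a + τ * I))
        - (∫ τ : ℝ, ((2 * (logDerivXi (a + τ * I + t * I)).re : ℝ) : ℂ)
            * laplaceKernel U (a + τ * I))
        + ∫ τ : ℝ, conj (logDerivXi (a + τ * I + t * I)) * laplaceKernel U (a + τ * I) := by
  have habs : |a| ≤ 3 / 4 := abs_le.2 ⟨by linarith, ha'⟩
  obtain ⟨Cγ, -, hγ⟩ := exists_norm_logDerivGammaFactor_le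
  obtain ⟨C, -, hC⟩ := exists_norm_logDerivXi_le hRH ha
  have hline (τ : ℝ) := norm_verticalLine_le le_rfl (by linarith) hC τ t
  have hcont := continuous_logDerivXi_line hRH ha t
  have hintγ := integrable_mul_laplaceKernel (U := U) habs
    (continuous_logDerivGammaFactor_line hRH ha t)
    fun τ ↦ norm_verticalLine_le ha.le (by linarith) hγ τ t
  have hintconj := integrable_mul_laplaceKernel (U := U) habs (continuous_conj.comp hcont)
    fun τ ↦ by simpa using hline τ
  have hintre : Integrable fun τ : ℝ ↦ ((2 * (logDerivXi (a + τ * I + t * I)).re : ℝ) : ℂ)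
      * laplaceKernel U (a + τ * I) := by
    refine integrable_mul_laplaceKernel habs (c := 2 * C) (t := t)
      (continuous_ofReal.comp (continuous_const.mul (continuous_re.comp hcont))) fun τ ↦ ?_
    rw [norm_real, Real.norm_eq_abs, abs_mul, abs_two, mul_assoc]
    gcongr
    exact (abs_re_le_norm _).trans (hline τ)
  simp_rw [negLogDerivZeta₁_line_eq hRH ha, add_mul, sub_mul]
  rw [← integral_sub hintγ hintre]
  exact integral_add (hintγ.sub hintre) hintconj

lemma integral_negLogDerivZeta₁_shift (hRH : RiemannHypothesis) (ha : 0 < a)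
    (ha' : a ≤ 3 / 4) (U t : ℝ) :
    ∫ τ : ℝ, negLogDerivZeta₁ (a + τ * I + t * I) * laplaceKernel U (a + τ * I)
      = ∫ τ : ℝ, negLogDerivZeta₁ ((3 / 4 : ℝ) + τ * I + t * I)
          * laplaceKernel U ((3 / 4 : ℝ) + τ * I) := by
  obtain ⟨C, -, hC⟩ := exists_norm_negLogDerivZeta₁_le hRH ha
  refine integral_mul_laplaceKernel_shift (f := fun z ↦ negLogDerivZeta₁ (z + t * I))
    (c := C) (t := t) (by linarith) ha' le_rfl (fun z h0 _ ↦ ?_) (fun z h0 h1 ↦ ?_)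
  · exact differentiableAt_comp_add_const.2
      (differentiableAt_negLogDerivZeta₁ hRH (by simp; linarith))
  · simpa using hC (z + t * I) (by simpa using h0) (by simp; linarith)

lemma exists_pos_le_mul_le_one (hU : 0 ≤ U) : ∃ a : ℝ, 0 < a ∧ a ≤ 1 / 8 ∧ a * U ≤ 1 := by
  refine ⟨min (1 / 8) (1 / (1 + U)), by positivity, min_le_left _ _, ?_⟩
  calc min (1 / 8) (1 / (1 + U)) * U ≤ 1 / (1 + U) * U := by gcongr; exact min_le_right _ _
    _ ≤ 1 := by rw [one_div, inv_mul_le_iff₀ (by positivity)]; linarith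

/-- On the line `re z = a` one has `-ζ₁'/ζ₁ = γ - 2 Re (ξ'/ξ) + conj (ξ'/ξ)`. For `a` of size
`1 / U` the kernel stays bounded there; the middle term is nonnegative, so it is controlled by a
Poisson integral, and the last one continues analytically to the left. -/
lemma exists_norm_integral_negLogDerivZeta₁_le (hRH : RiemannHypothesis) :
    ∃ C : ℝ, 0 < C ∧ ∀ U : ℝ, 0 ≤ U → ∀ t : ℝ,
      ‖∫ τ : ℝ, negLogDerivZeta₁ ((3 / 4 : ℝ) + τ * I + t * I)
        * laplaceKernel U ((3 / 4 : ℝ) + τ * I)‖ ≤ C * logHeight t := by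
  obtain ⟨Cγ, hCγ, hγ⟩ := exists_norm_logDerivGammaFactor_le
  obtain ⟨C₁, hC₁, hre⟩ := exists_norm_integral_re_logDerivXi_le hRH
  obtain ⟨C₂, hC₂, hconj⟩ := exists_norm_integral_conj_logDerivXi_le hRH
  have hdecay := integral_decay_nonneg
  refine ⟨51 * Real.exp 1 * Cγ * (∫ τ, decay τ) + C₁ + C₂, by positivity, fun U hU t ↦ ?_⟩
  obtain ⟨a, ha, ha8, haU⟩ := exists_pos_le_mul_le_one hU
  rw [← integral_negLogDerivZeta₁_shift hRH ha (by linarith),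
    integral_negLogDerivZeta₁_line_eq hRH ha (by linarith), add_mul, add_mul]
  refine norm_add_le_of_le (norm_sub_le_of_le ?_ (hre a U ha (by linarith) haU t))
    (hconj a U ha ha8 hU t)
  exact norm_integral_mul_laplaceKernel_le (abs_le.2 ⟨by linarith, by linarith⟩)
    (Real.exp_le_exp.2 haU) fun τ ↦ norm_verticalLine_le ha.le (by linarith) hγ τ t

end ContourShift

/-! ### Plancherel and Fourier inversion -/

section Plancherel

open FourierTransform SchwartzMap

variable {E : Type*} [NormedAddCommGroup E]

lemma norm_toLp_sq_eq_integral {α : Type*} {_ : MeasurableSpace α} {μ : Measure α} {f : α → E}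
    (hf : MemLp f 2 μ) : ‖hf.toLp f‖ ^ 2 = ∫ x, ‖f x‖ ^ 2 ∂μ := by
  have hnonneg : 0 ≤ ∫ x, ‖f x‖ ^ (2 : ℝ) ∂μ := integral_nonneg fun x ↦ by positivity
  rw [Lp.norm_toLp, hf.eLpNorm_eq_integral_rpow_norm two_ne_zero ENNReal.ofNat_ne_top,
    ENNReal.toReal_ofNat, ENNReal.toReal_ofReal (by positivity), ← Real.rpow_natCast,
    ← Real.rpow_mul hnonneg]
  norm_num

lemma memLp_two_of_integrable_of_bound {α : Type*} {_ : MeasurableSpace α} {μ : Measure α}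
    {f : α → E} {M : ℝ} (hf : Integrable f μ) (hM : ∀ x, ‖f x‖ ≤ M) : MemLp f 2 μ := by
  rw [memLp_two_iff_integrable_sq_norm hf.aestronglyMeasurable]
  refine (hf.norm.const_mul M).mono' (hf.aestronglyMeasurable.norm.pow 2)
    (Eventually.of_forall fun x ↦ ?_)
  rw [Real.norm_of_nonneg (by positivity), sq]
  exact mul_le_mul_of_nonneg_right (hM x) (norm_nonneg _)

variable {V : Type*} [NormedAddCommGroup V] [InnerProductSpace ℝ V] [FiniteDimensional ℝ V]
  [MeasurableSpace V] [BorelSpace V] {f : V → E}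

lemma continuous_fourier [NormedSpace ℂ E] (hf : Integrable f) : Continuous (𝓕 f) :=
  VectorFourier.fourierIntegral_continuous Real.continuous_fourierChar
    (by exact continuous_inner) hf

lemma fourier_sub [NormedSpace ℂ E] {g : V → E} (hf : Integrable f) (hg : Integrable g) :
    𝓕 (f - g) = 𝓕 f - 𝓕 g := by
  ext ξ
  simp only [Pi.sub_apply, Real.fourier_eq, smul_sub]
  exact integral_sub ((Real.fourierIntegral_convergent_iff ξ).2 hf)
    ((Real.fourierIntegral_convergent_iff ξ).2 hg)

variable [InnerProductSpace ℂ E] [CompleteSpace E]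

lemma fourier_toLp_eq_toLp_fourier (hf : Integrable f) (hf2 : MemLp f 2)
    (hFf : MemLp (𝓕 f) 2) : 𝓕 (hf2.toLp f) = hFf.toLp (𝓕 f) := by
  apply LinearMap.ker_eq_bot.1 (Lp.ker_toTemperedDistributionCLM_eq_bot (E := V) (F := E)
    (μ := volume) (p := 2))
  simp only [ContinuousLinearMap.coe_coe, Lp.toTemperedDistributionCLM_apply]
  rw [← Lp.fourier_toTemperedDistribution_eq]
  ext φ
  rw [TemperedDistribution.fourier_apply, Lp.toTemperedDistribution_apply,
    Lp.toTemperedDistribution_apply]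
  calc ∫ x, (𝓕 φ) x • (hf2.toLp f) x = ∫ x, (𝓕 (φ : V → ℂ)) x • f x := by
        refine integral_congr_ae (hf2.coeFn_toLp.mono fun x hx ↦ ?_)
        simp only [hx, SchwartzMap.fourier_coe]
    _ = ∫ x, φ x • 𝓕 f x := by
        simpa using! VectorFourier.integral_fourierIntegral_smul_eq_flip (L := innerₗ V)
          Real.continuous_fourierChar continuous_inner φ.integrable hf
    _ = ∫ x, φ x • (hFf.toLp (𝓕 f)) x :=
        integral_congr_ae (hFf.coeFn_toLp.mono fun x hx ↦ by simp only [hx])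

lemma integral_norm_sq_eq_integral_norm_fourier_sq (hf : Integrable f) (hf2 : MemLp f 2)
    (hFf : MemLp (𝓕 f) 2) : ∫ x, ‖f x‖ ^ 2 = ∫ ξ, ‖𝓕 f ξ‖ ^ 2 := by
  rw [← norm_toLp_sq_eq_integral hf2, ← norm_toLp_sq_eq_integral hFf,
    ← fourier_toLp_eq_toLp_fourier hf hf2 hFf, Lp.norm_fourier_eq]

end Plancherel

section LaplaceInversion

open FourierTransform

variable {a : ℝ} {z : ℂ}

lemma one_sub_ne_zero_of_abs_re_lt_one (hz : |z.re| < 1) : 1 - z ≠ 0 := by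
  intro h
  have := congrArg re h
  simp only [sub_re, one_re, zero_re] at this
  linarith [le_abs_self z.re]

lemma one_add_ne_zero_of_abs_re_lt_one (hz : |z.re| < 1) : 1 + z ≠ 0 := by
  simpa using one_sub_ne_zero_of_abs_re_lt_one (z := -z) (by simpa using hz)

lemma eqOn_exp_neg_abs_sub_Iic (z : ℂ) :
    EqOn (fun x : ℝ ↦ cexp ((1 - z) * x)) (fun x : ℝ ↦ cexp (-|x| - z * x)) (Iic 0) := by
  intro x hx
  simp only [abs_of_nonpos (mem_Iic.1 hx)]
  push_cast
  ring_nf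

lemma eqOn_exp_neg_abs_sub_Ioi (z : ℂ) :
    EqOn (fun x : ℝ ↦ cexp (-(1 + z) * x)) (fun x : ℝ ↦ cexp (-|x| - z * x)) (Ioi 0) := by
  intro x hx
  simp only [abs_of_pos (mem_Ioi.1 hx)]
  ring_nf

lemma integrable_exp_neg_abs_sub (hz : |z.re| < 1) :
    Integrable fun x : ℝ ↦ cexp (-|x| - z * x) := by
  obtain ⟨hlow, hup⟩ := abs_lt.1 hz
  rw [← integrableOn_univ, ← Iic_union_Ioi (a := (0 : ℝ))]
  exact ((integrableOn_exp_mul_complex_Iic (by simpa using hup) 0).congr_fun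
      (eqOn_exp_neg_abs_sub_Iic z) measurableSet_Iic).union
    ((integrableOn_exp_mul_complex_Ioi (by simp; linarith) 0).congr_fun
      (eqOn_exp_neg_abs_sub_Ioi z) measurableSet_Ioi)

lemma integral_exp_neg_abs_sub (hz : |z.re| < 1) :
    ∫ x : ℝ, cexp (-|x| - z * x) = 2 / (1 - z ^ 2) := by
  obtain ⟨hlow, hup⟩ := abs_lt.1 hz
  have hsub := one_sub_ne_zero_of_abs_re_lt_one hz
  have hadd := one_add_ne_zero_of_abs_re_lt_one hz
  have hsq : 1 - z ^ 2 = (1 - z) * (1 + z) := by ring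
  rw [← integral_add_compl measurableSet_Iic (integrable_exp_neg_abs_sub hz), compl_Iic,
    ← setIntegral_congr_fun measurableSet_Iic (eqOn_exp_neg_abs_sub_Iic z),
    ← setIntegral_congr_fun measurableSet_Ioi (eqOn_exp_neg_abs_sub_Ioi z),
    integral_exp_mul_complex_Iic (by simpa using hup),
    integral_exp_mul_complex_Ioi (by simp; linarith), hsq]
  simp only [ofReal_zero, mul_zero, Complex.exp_zero]
  field_simp
  ring

lemma fourier_exp_neg_abs_sub (ha : |a| < 1) (ξ : ℝ) :
    𝓕 (fun x : ℝ ↦ cexp (-|x| - a * x)) ξ = laplaceKernel 0 (a + (2 * π * ξ : ℝ) * I) := by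
  rw [Real.fourier_real_eq_integral_exp_smul, laplaceKernel, ofReal_zero, mul_zero,
    Complex.exp_zero, mul_one, ← integral_exp_neg_abs_sub (by simpa using ha)]
  congr 1 with x
  rw [smul_eq_mul, ← Complex.exp_add]
  push_cast
  ring_nf

lemma integrable_laplaceKernel_line (ha : |a| ≤ 3 / 4) (U : ℝ) :
    Integrable fun τ : ℝ ↦ laplaceKernel U (a + τ * I) := by
  simpa using integrable_mul_laplaceKernel (f := fun _ ↦ 1) (c := 2) (t := 0) ha
    continuous_const fun τ ↦ by simp; linarith [half_le_logHeight τ]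

lemma exp_mul_laplaceKernel_zero (x : ℝ) (z : ℂ) :
    cexp (z * x) * laplaceKernel 0 z = laplaceKernel x z := by
  simp [laplaceKernel, mul_comm]

lemma integral_laplaceKernel_line (ha : |a| ≤ 3 / 4) (x : ℝ) :
    ∫ τ : ℝ, laplaceKernel x (a + τ * I) = 2 * π * Real.exp (-|x|) := by
  have ha' : |a| < 1 := ha.trans_lt (by norm_num)
  have hfourier := funext (fourier_exp_neg_abs_sub ha')
  have hinv := congrFun (Continuous.fourierInv_fourier_eq (by fun_prop)
    (integrable_exp_neg_abs_sub (z := a) (by simpa using ha')) (by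
      rw [hfourier]
      exact (integrable_laplaceKernel_line ha 0).comp_mul_left' Real.two_pi_pos.ne')) x
  rw [Real.fourierInv_eq', hfourier] at hinv
  have hscale : ∫ ξ : ℝ, laplaceKernel x (a + (2 * π * ξ : ℝ) * I) = Real.exp (-|x|) := by
    rw [show (Real.exp (-|x|) : ℂ) = cexp (a * x) * cexp (-|x| - a * x) by
      rw [← Complex.exp_add]; push_cast; ring_nf, ← hinv, ← integral_const_mul]
    congr 1 with ξ
    rw [smul_eq_mul, ← mul_assoc, ← Complex.exp_add, ← exp_mul_laplaceKernel_zero]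
    simp only [RCLike.inner_apply, conj_trivial]
    push_cast
    ring_nf
  rw [Measure.integral_comp_mul_left (fun τ : ℝ ↦ laplaceKernel x (a + τ * I)),
    abs_of_pos (by positivity), inv_smul_eq_iff₀ (by positivity)] at hscale
  rw [hscale, real_smul]
  push_cast
  ring

end LaplaceInversion

/-! ### Localization of measures on the logarithmic axis -/

/-- The weight `exp (3v/4 - |v - U|)` that the Laplace kernel on the line `re z = 3/4` inverts to.
It concentrates at `v = U`. -/
noncomputable def laplaceWeight (U v : ℝ) : ℝ := Real.exp (3 / 4 * v - |v - U|)

lemma laplaceWeight_pos (U v : ℝ) : 0 < laplaceWeight U v := Real.exp_pos _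

lemma laplaceWeight_le (U v : ℝ) : laplaceWeight U v ≤ Real.exp (3 / 4 * U) := by
  refine Real.exp_le_exp.2 ?_
  linarith [le_abs_self (v - U), abs_nonneg (v - U)]

lemma continuous_laplaceWeight (U : ℝ) : Continuous (laplaceWeight U) := by
  unfold laplaceWeight
  fun_prop

/-- The measure `μ` reweighted by `laplaceWeight U`. -/
noncomputable def localize (U : ℝ) (μ : Measure ℝ) : Measure ℝ :=
  μ.withDensity fun v ↦ ENNReal.ofReal (laplaceWeight U v)

lemma integral_localize {E : Type*} [NormedAddCommGroup E] [NormedSpace ℝ E] (U : ℝ)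
    (μ : Measure ℝ) (f : ℝ → E) :
    ∫ v, f v ∂localize U μ = ∫ v, laplaceWeight U v • f v ∂μ := by
  rw [localize, integral_withDensity_eq_integral_toReal_smul
    (continuous_laplaceWeight U).measurable.ennreal_ofReal (by simp)]
  simp only [ENNReal.toReal_ofReal (laplaceWeight_pos U _).le]

section FiniteMeasure

variable {μ : Measure ℝ} [IsFiniteMeasure μ]

instance (U : ℝ) : IsFiniteMeasure (localize U μ) := by
  refine isFiniteMeasure_withDensity_ofReal (Integrable.of_bound
    (continuous_laplaceWeight U).aestronglyMeasurable (Real.exp (3 / 4 * U)) ?_).2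
  refine Eventually.of_forall fun v ↦ ?_
  rw [Real.norm_of_nonneg (laplaceWeight_pos U v).le]
  exact laplaceWeight_le U v

lemma integrable_charFun_mul_laplaceKernel (U t : ℝ) :
    Integrable fun τ : ℝ ↦ charFun μ (-(τ + t)) * laplaceKernel U ((3 / 4 : ℝ) + τ * I) :=
  (integrable_laplaceKernel_line (by norm_num [abs_of_pos]) U).bdd_mul (c := μ.real univ)
    (by fun_prop) (Eventually.of_forall fun _ ↦ norm_charFun_le _)

lemma integrable_prod_exp_mul_laplaceKernel (U t : ℝ) :
    Integrable (Function.uncurry fun τ v : ℝ ↦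
      cexp ((-(τ + t) : ℝ) * v * I) * laplaceKernel U ((3 / 4 : ℝ) + τ * I)) (volume.prod μ) := by
  have hkernel := (integrable_laplaceKernel_line (a := 3 / 4) (by norm_num [abs_of_pos]) U).mul_prod
    (integrable_const (μ := μ) (1 : ℂ))
  simp only [mul_one] at hkernel
  refine hkernel.bdd_mul (c := 1) (Continuous.aestronglyMeasurable (by fun_prop))
    (Eventually.of_forall fun p ↦ ?_)
  rw [← ofReal_mul, norm_exp_ofReal_mul_I]

lemma integral_exp_mul_laplaceKernel (U t v : ℝ) :
    ∫ τ : ℝ, cexp ((-(τ + t) : ℝ) * v * I) * laplaceKernel U ((3 / 4 : ℝ) + τ * I) =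
      2 * π * (laplaceWeight U v • cexp ((-t : ℝ) * v * I)) := by
  have hfactor (τ : ℝ) :
      cexp ((-(τ + t) : ℝ) * v * I) * laplaceKernel U ((3 / 4 : ℝ) + τ * I) =
        cexp ((-t : ℝ) * v * I) * Real.exp (3 / 4 * v) *
          laplaceKernel (U - v) ((3 / 4 : ℝ) + τ * I) := by
    simp only [← exp_mul_laplaceKernel_zero U, ← exp_mul_laplaceKernel_zero (U - v), ofReal_exp,
      ← mul_assoc, ← Complex.exp_add]
    push_cast
    ring_nf
  simp_rw [hfactor]
  rw [integral_const_mul, integral_laplaceKernel_line (by norm_num [abs_of_pos]), laplaceWeight,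
    sub_eq_add_neg (3 / 4 * v), Real.exp_add, abs_sub_comm, real_smul]
  push_cast
  ring

lemma integral_charFun_mul_laplaceKernel (U t : ℝ) :
    ∫ τ : ℝ, charFun μ (-(τ + t)) * laplaceKernel U ((3 / 4 : ℝ) + τ * I) =
      2 * π * charFun (localize U μ) (-t) := by
  simp_rw [charFun_apply_real, ← integral_mul_const]
  rw [integral_integral_swap (integrable_prod_exp_mul_laplaceKernel U t), integral_localize,
    ← integral_const_mul]
  simp_rw [integral_exp_mul_laplaceKernel]

end FiniteMeasure

/-! ### The von Mangoldt measure -/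

section VonMangoldt

open ArithmeticFunction (vonMangoldt vonMangoldt_nonneg)

lemma vonMangoldt_term_eq (y : ℝ) (n : ℕ) :
    LSeries.term (fun n ↦ (vonMangoldt n : ℂ)) ((5 / 4 : ℝ) + y * I) n =
      (vonMangoldt n * (n : ℝ) ^ (-(5 / 4) : ℝ)) • cexp ((-y : ℝ) * Real.log n * I) := by
  rcases Nat.eq_zero_or_pos n with rfl | hn
  · simp
  have hn' : (n : ℂ) ≠ 0 := by exact_mod_cast hn.ne'
  rw [LSeries.term_of_ne_zero hn.ne', div_eq_mul_inv, ← cpow_neg, real_smul, ofReal_mul,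
    ofReal_cpow n.cast_nonneg, ofReal_natCast, mul_assoc, cpow_def_of_ne_zero hn',
    cpow_def_of_ne_zero hn', ← Complex.exp_add, ← Complex.natCast_log]
  push_cast
  ring_nf

lemma summable_vonMangoldt_mul_rpow :
    Summable fun n : ℕ ↦ vonMangoldt n * (n : ℝ) ^ (-(5 / 4) : ℝ) := by
  refine Complex.summable_ofReal.1 ?_
  refine (ArithmeticFunction.LSeriesSummable_vonMangoldt (s := (5 / 4 : ℝ) + (0 : ℝ) * I)
    (by norm_num)).congr fun n ↦ ?_
  rw [vonMangoldt_term_eq, real_smul]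
  simp

/-- The measure with mass `Λ(n) n ^ (-5/4)` at each point `log n`, whose Fourier transform is
`-ζ'/ζ` on the line `re s = 5/4`. -/
noncomputable def vonMangoldtMeasure : Measure ℝ :=
  Measure.sum fun n : ℕ ↦
    ENNReal.ofReal (vonMangoldt n * (n : ℝ) ^ (-(5 / 4) : ℝ)) • Measure.dirac (Real.log n)

/-- The continuous analogue of `vonMangoldtMeasure`: the image under `log` of `x ^ (-5/4) dx` on
`(1, ∞)`. -/
noncomputable def mainTermMeasure : Measure ℝ :=
  (volume.restrict (Ioi 0)).withDensity fun v ↦ ENNReal.ofReal (Real.exp (-(1 / 4) * v))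

instance : IsFiniteMeasure vonMangoldtMeasure := by
  constructor
  rw [vonMangoldtMeasure, Measure.sum_apply _ MeasurableSet.univ]
  simpa using summable_vonMangoldt_mul_rpow.tsum_ofReal_lt_top

instance : IsFiniteMeasure mainTermMeasure :=
  isFiniteMeasure_withDensity_ofReal (integrableOn_exp_mul_Ioi (by norm_num) 0).2

section Integrals

variable {E : Type*} [NormedAddCommGroup E] [NormedSpace ℝ E] {f : ℝ → E}

lemma hasSum_integral_vonMangoldtMeasure [CompleteSpace E]
    (hf : Integrable f vonMangoldtMeasure) :
    HasSum (fun n : ℕ ↦ (vonMangoldt n * (n : ℝ) ^ (-(5 / 4) : ℝ)) • f (Real.log n))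
      (∫ v, f v ∂vonMangoldtMeasure) := by
  refine (hasSum_integral_measure hf).congr_fun fun n ↦ ?_
  rw [integral_smul_measure, integral_dirac, ENNReal.toReal_ofReal]
  exact mul_nonneg vonMangoldt_nonneg (by positivity)

lemma integral_mainTermMeasure (f : ℝ → E) :
    ∫ v, f v ∂mainTermMeasure = ∫ v in Ioi 0, Real.exp (-(1 / 4) * v) • f v := by
  rw [mainTermMeasure, integral_withDensity_eq_integral_toReal_smul (by fun_prop) (by simp)]
  simp only [ENNReal.toReal_ofReal (Real.exp_pos _).le]

end Integrals

lemma integrable_exp_ofReal_mul_I (μ : Measure ℝ) [IsFiniteMeasure μ] (y : ℝ) :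
    Integrable (fun v : ℝ ↦ cexp (y * v * I)) μ := by
  refine Integrable.of_bound (Continuous.aestronglyMeasurable (by fun_prop)) 1
    (Eventually.of_forall fun v ↦ ?_)
  rw [← ofReal_mul, norm_exp_ofReal_mul_I]

lemma charFun_vonMangoldtMeasure (y : ℝ) :
    charFun vonMangoldtMeasure (-y) =
      -deriv riemannZeta ((5 / 4 : ℝ) + y * I) / riemannZeta ((5 / 4 : ℝ) + y * I) := by
  rw [← ArithmeticFunction.LSeries_vonMangoldt_eq_deriv_riemannZeta_div (by norm_num),
    charFun_apply_real,
    ← (hasSum_integral_vonMangoldtMeasure (integrable_exp_ofReal_mul_I _ _)).tsum_eq]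
  exact tsum_congr fun n ↦ (vonMangoldt_term_eq y n).symm

lemma charFun_mainTermMeasure (y : ℝ) :
    charFun mainTermMeasure (-y) = 1 / ((1 / 4 : ℝ) + y * I) := by
  have hexp (v : ℝ) : Real.exp (-(1 / 4) * v) • cexp ((-y : ℝ) * v * I) =
      cexp (-((1 / 4 : ℝ) + y * I) * v) := by
    rw [real_smul, ofReal_exp, ← Complex.exp_add]
    push_cast
    ring_nf
  rw [charFun_apply_real, integral_mainTermMeasure]
  simp_rw [hexp]
  rw [integral_exp_mul_complex_Ioi (by simp), ofReal_zero, mul_zero, Complex.exp_zero, div_neg,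
    neg_div, neg_neg]

lemma negLogDerivZeta₁_eq_charFun_sub_charFun (y : ℝ) :
    negLogDerivZeta₁ ((3 / 4 : ℝ) + y * I) =
      charFun vonMangoldtMeasure (-y) - charFun mainTermMeasure (-y) := by
  rw [charFun_vonMangoldtMeasure, charFun_mainTermMeasure, negLogDerivZeta₁, logDeriv_apply]
  set s : ℂ := (5 / 4 : ℝ) + y * I with hs
  have hre : s.re = 5 / 4 := by simp [hs]
  have hs1 : s ≠ 1 := by
    intro h
    norm_num [h] at hre
  have hs1' : s - 1 ≠ 0 := sub_ne_zero.2 hs1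
  have hzeta := riemannZeta_ne_zero_of_one_lt_re (s := s) (by rw [hre]; norm_num)
  rw [riemannZeta_eq_inv_sub_mul hs1] at hzeta
  have hzeta₁ : riemannZeta₁ s ≠ 0 := right_ne_zero_of_mul hzeta
  rw [show 1 / 2 + (((3 / 4 : ℝ) : ℂ) + y * I) = s by rw [hs]; push_cast; ring,
    show ((1 / 4 : ℝ) : ℂ) + y * I = s - 1 by rw [hs]; push_cast; ring,
    deriv_riemannZeta_eq_neg_inv_sub_sq_mul_add hs1, riemannZeta_eq_inv_sub_mul hs1]
  field_simp
  ring

end VonMangoldt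

lemma exists_norm_charFun_localize_sub_le (hRH : RiemannHypothesis) :
    ∃ C : ℝ, 0 < C ∧ ∀ U : ℝ, 0 ≤ U → ∀ t : ℝ,
      ‖charFun (localize U vonMangoldtMeasure) (-t) - charFun (localize U mainTermMeasure) (-t)‖ ≤
        C * logHeight t := by
  obtain ⟨C, hC, hbound⟩ := exists_norm_integral_negLogDerivZeta₁_le hRH
  refine ⟨C, hC, fun U hU t ↦ ?_⟩
  set S := charFun (localize U vonMangoldtMeasure) (-t) - charFun (localize U mainTermMeasure) (-t)
    with hS
  have hinv : ∫ τ : ℝ, negLogDerivZeta₁ ((3 / 4 : ℝ) + τ * I + t * I) *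
      laplaceKernel U ((3 / 4 : ℝ) + τ * I) = 2 * π * S := by
    rw [hS, mul_sub, ← integral_charFun_mul_laplaceKernel, ← integral_charFun_mul_laplaceKernel,
      ← integral_sub (integrable_charFun_mul_laplaceKernel U t)
        (integrable_charFun_mul_laplaceKernel U t)]
    congr 1 with τ
    rw [← sub_mul, ← negLogDerivZeta₁_eq_charFun_sub_charFun]
    push_cast
    ring_nf
  calc ‖S‖ ≤ 2 * π * ‖S‖ := le_mul_of_one_le_left (norm_nonneg S) (by linarith [Real.pi_gt_three])
    _ = ‖2 * π * S‖ := by simp [abs_of_pos Real.pi_pos]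
    _ ≤ C * logHeight t := hinv ▸ hbound U hU t

/-! ### Cross-correlation with an exponential window -/

section WindowedError

open FourierTransform

/-- The cross-correlation `u ↦ ∫ k (v - u) dμ(v)` of a kernel with a measure. -/
noncomputable def crossCorrelation (k : ℝ → ℂ) (μ : Measure ℝ) (u : ℝ) : ℂ := ∫ v, k (v - u) ∂μ

section CrossCorrelation

variable {k : ℝ → ℂ} {μ : Measure ℝ} [IsFiniteMeasure μ]

lemma integrable_prod_comp_sub (hkm : Measurable k) (hk : Integrable k) :
    Integrable (fun p : ℝ × ℝ ↦ k (p.2 - p.1)) (volume.prod μ) := by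
  have hmeas : Measurable fun p : ℝ × ℝ ↦ k (p.2 - p.1) := hkm.comp (by fun_prop)
  rw [integrable_prod_iff' hmeas.aestronglyMeasurable]
  refine ⟨Eventually.of_forall fun v ↦ hk.comp_sub_left v, ?_⟩
  simp_rw [fun v ↦ integral_sub_left_eq_self (fun r ↦ ‖k r‖) volume v]
  exact integrable_const _

lemma integrable_crossCorrelation (hkm : Measurable k) (hk : Integrable k) :
    Integrable (crossCorrelation k μ) :=
  (integrable_prod_comp_sub hkm hk).integral_prod_left

lemma norm_crossCorrelation_le (hk : ∀ r, ‖k r‖ ≤ 1) (u : ℝ) :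
    ‖crossCorrelation k μ u‖ ≤ μ.real univ := by
  simpa [crossCorrelation] using norm_integral_le_of_norm_le_const (μ := μ)
    (Eventually.of_forall fun v ↦ hk (v - u))

lemma fourier_crossCorrelation (hkm : Measurable k) (hk : Integrable k) (ξ : ℝ) :
    𝓕 (crossCorrelation k μ) ξ = charFun μ (-(2 * π * ξ)) * 𝓕⁻ k ξ := by
  have hphase (u v : ℝ) : cexp ((-2 * π * (v - u) * ξ : ℝ) * I) =
      cexp ((-(2 * π * ξ) : ℝ) * v * I) * cexp ((2 * π * inner ℝ u ξ : ℝ) * I) := by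
    rw [← Complex.exp_add]
    simp only [RCLike.inner_apply, conj_trivial]
    push_cast
    ring_nf
  simp_rw [Real.fourier_real_eq_integral_exp_smul, crossCorrelation, smul_eq_mul,
    ← integral_const_mul]
  rw [integral_integral_swap ((integrable_prod_comp_sub hkm hk).bdd_mul (c := 1)
    (Continuous.aestronglyMeasurable (by fun_prop))
    (Eventually.of_forall fun p ↦ (norm_exp_ofReal_mul_I _).le)), charFun_apply_real,
    ← integral_mul_const]
  congr 1 with v
  rw [Real.fourierInv_eq', ← integral_const_mul, ← integral_sub_left_eq_self _ volume v]
  congr 1 with u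
  rw [hphase, sub_sub_cancel, smul_eq_mul, mul_assoc]

end CrossCorrelation

/-- The kernel `exp (-r/2)` on `(0, η]`; correlating with it counts the mass of `(u, u + η]`. -/
noncomputable def expWindow (η : ℝ) : ℝ → ℂ := (Ioc 0 η).indicator fun r ↦ cexp (-(1 / 2) * r)

section ExpWindow

variable {η : ℝ}

lemma measurable_expWindow (η : ℝ) : Measurable (expWindow η) :=
  Measurable.indicator (by fun_prop) measurableSet_Ioc

lemma norm_expWindow_le (η r : ℝ) : ‖expWindow η r‖ ≤ 1 := by
  unfold expWindow indicator
  split_ifs with hr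
  · rw [Complex.norm_exp, Real.exp_le_one_iff]
    norm_num
    exact hr.1.le
  · simp

lemma integrable_expWindow (η : ℝ) : Integrable (expWindow η) := by
  refine IntegrableOn.integrable_indicator ?_ measurableSet_Ioc
  exact (Continuous.integrableOn_Icc (by fun_prop)).mono_set Ioc_subset_Icc_self

lemma fourierInv_expWindow (hη : 0 ≤ η) (ξ : ℝ) :
    𝓕⁻ (expWindow η) ξ = ∫ r in (0 : ℝ)..η, cexp ((-(1 / 2) + (2 * π * ξ : ℝ) * I) * r) := by
  rw [intervalIntegral.integral_of_le hη, ← integral_indicator measurableSet_Ioc,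
    Real.fourierInv_eq']
  congr 1 with r
  unfold expWindow indicator
  split_ifs
  · rw [smul_eq_mul, ← Complex.exp_add]
    simp only [RCLike.inner_apply, conj_trivial]
    push_cast
    ring_nf
  · simp

lemma norm_fourierInv_expWindow_le (hη : 0 ≤ η) (ξ : ℝ) : ‖𝓕⁻ (expWindow η) ξ‖ ≤ η := by
  rw [fourierInv_expWindow hη]
  refine (intervalIntegral.norm_integral_le_of_norm_le_const (C := 1) fun r hr ↦ ?_).trans_eq
    (by rw [sub_zero, abs_of_nonneg hη, one_mul])
  rw [uIoc_of_le hη] at hr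
  rw [Complex.norm_exp, Real.exp_le_one_iff]
  norm_num
  exact hr.1.le

lemma norm_fourierInv_expWindow_mul_le (hη : 0 ≤ η) (ξ : ℝ) :
    ‖𝓕⁻ (expWindow η) ξ‖ * |2 * π * ξ| ≤ 2 := by
  set t := 2 * π * ξ
  set c : ℂ := -(1 / 2) + t * I with hc
  have hre : c.re = -(1 / 2) := by norm_num [hc]
  have him : |t| ≤ ‖c‖ := by simpa [hc] using abs_im_le_norm c
  have hc0 : c ≠ 0 := by
    intro h
    norm_num [h] at hre
  have hnum : ‖cexp (c * η) - cexp (c * (0 : ℝ))‖ ≤ 2 := by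
    refine (norm_sub_le _ _).trans ?_
    have hexp : Real.exp (c * η).re ≤ 1 := by
      rw [Real.exp_le_one_iff, re_mul_ofReal, hre]
      linarith
    simp only [Complex.norm_exp, ofReal_zero, mul_zero, zero_re, Real.exp_zero]
    linarith
  rw [fourierInv_expWindow hη, integral_exp_mul_complex hc0, norm_div, div_mul_eq_mul_div,
    div_le_iff₀ (norm_pos_iff.2 hc0)]
  gcongr

lemma norm_fourierInv_expWindow_sq_le (hη : 0 ≤ η) (ξ : ℝ) :
    ‖𝓕⁻ (expWindow η) ξ‖ ^ 2 ≤ 5 * η ^ 2 * (1 + (η * (2 * π * ξ)) ^ 2)⁻¹ := by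
  set t := 2 * π * ξ
  have hsq : ‖𝓕⁻ (expWindow η) ξ‖ ^ 2 ≤ η ^ 2 := by
    gcongr
    exact norm_fourierInv_expWindow_le hη ξ
  have hsq_mul : ‖𝓕⁻ (expWindow η) ξ‖ ^ 2 * t ^ 2 ≤ 2 ^ 2 := by
    rw [← sq_abs t, ← mul_pow]
    gcongr
    exact norm_fourierInv_expWindow_mul_le hη ξ
  rw [← div_eq_mul_inv, le_div_iff₀ (by positivity)]
  nlinarith [sq_nonneg η]

end ExpWindow

/-! ### The mean square on the logarithmic axis -/

/-- The correlation of the exponential window with the difference of the two localized measures.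
For `u + η ≤ U` this is `ψ` minus its main term on `(exp u, exp (u + η)]`, up to normalization. -/
noncomputable def windowedError (η U : ℝ) : ℝ → ℂ :=
  crossCorrelation (expWindow η) (localize U vonMangoldtMeasure) -
    crossCorrelation (expWindow η) (localize U mainTermMeasure)

lemma integrable_windowedError (η U : ℝ) : Integrable (windowedError η U) :=
  (integrable_crossCorrelation (measurable_expWindow η) (integrable_expWindow η)).sub
    (integrable_crossCorrelation (measurable_expWindow η) (integrable_expWindow η))

lemma memLp_windowedError (η U : ℝ) : MemLp (windowedError η U) 2 :=
  memLp_two_of_integrable_of_bound (integrable_windowedError η U) fun u ↦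
    (norm_sub_le _ _).trans (add_le_add (norm_crossCorrelation_le (norm_expWindow_le η) u)
      (norm_crossCorrelation_le (norm_expWindow_le η) u))

lemma fourier_windowedError (η U ξ : ℝ) :
    𝓕 (windowedError η U) ξ =
      (charFun (localize U vonMangoldtMeasure) (-(2 * π * ξ)) -
        charFun (localize U mainTermMeasure) (-(2 * π * ξ))) * 𝓕⁻ (expWindow η) ξ := by
  have hm := measurable_expWindow η
  have hi := integrable_expWindow η
  rw [windowedError, fourier_sub (integrable_crossCorrelation hm hi)
    (integrable_crossCorrelation hm hi), Pi.sub_apply, fourier_crossCorrelation hm hi,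
    fourier_crossCorrelation hm hi, sub_mul]

lemma half_le_log_two_add {x : ℝ} (hx : 0 ≤ x) : 1 / 2 ≤ Real.log (2 + x) := by
  simpa [logHeight, abs_of_nonneg hx] using half_le_logHeight x

lemma logHeight_le_log_mul_rpow {η : ℝ} (hη : 0 < η) (t : ℝ) :
    logHeight t ≤ 21 * Real.log (2 + 1 / η) * (1 + (η * t) ^ 2) ^ (1 / 8 : ℝ) := by
  set s := η * t with hs
  have hη' : 0 < 1 / η := by positivity
  have hts : |t| = 1 / η * |s| := by
    rw [hs, abs_mul, abs_of_pos hη]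
    field_simp
  have harg : 2 + |t| ≤ (2 + 1 / η) * (2 * (1 + s ^ 2)) := by
    have : |s| ≤ 1 + s ^ 2 := by rw [← sq_abs]; nlinarith [abs_nonneg s]
    rw [hts]
    nlinarith [mul_le_mul_of_nonneg_left this hη'.le, sq_nonneg s,
      mul_nonneg hη'.le (sq_nonneg s)]
  have hsplit : logHeight t ≤ Real.log (2 + 1 / η) + (Real.log 2 + Real.log (1 + s ^ 2)) := by
    rw [← Real.log_mul (by positivity) (by positivity),
      ← Real.log_mul (by positivity) (by positivity)]
    exact Real.log_le_log (by positivity) harg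
  have hlog : Real.log (1 + s ^ 2) ≤ (1 + s ^ 2) ^ (1 / 8 : ℝ) / (1 / 8) :=
    Real.log_le_rpow_div (by positivity) (by norm_num)
  have hone : 1 ≤ (1 + s ^ 2) ^ (1 / 8 : ℝ) :=
    Real.one_le_rpow (by nlinarith) (by norm_num)
  nlinarith [half_le_log_two_add hη'.le, Real.log_two_lt_d9]

lemma logHeight_sq_mul_inv_le_decay {η : ℝ} (hη : 0 < η) (t : ℝ) :
    logHeight t ^ 2 * (1 + (η * t) ^ 2)⁻¹ ≤
      441 * Real.log (2 + 1 / η) ^ 2 * decay (η * t) := by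
  set q := 1 + (η * t) ^ 2 with hq
  have hq0 : 0 < q := by positivity
  have hlog : 0 ≤ logHeight t := by linarith [half_le_logHeight t]
  calc logHeight t ^ 2 * q⁻¹
      ≤ (21 * Real.log (2 + 1 / η) * q ^ (1 / 8 : ℝ)) ^ 2 * q⁻¹ := by
        gcongr
        exact logHeight_le_log_mul_rpow hη t
    _ = 441 * Real.log (2 + 1 / η) ^ 2 * (q ^ (1 / 8 : ℝ) * q ^ (1 / 8 : ℝ) * q ^ (-1 : ℝ)) := by
        rw [Real.rpow_neg_one]
        ring
    _ = 441 * Real.log (2 + 1 / η) ^ 2 * decay (η * t) := by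
        rw [← Real.rpow_add hq0, ← Real.rpow_add hq0, decay, ← hq]
        norm_num

lemma exists_norm_fourier_windowedError_sq_le (hRH : RiemannHypothesis) :
    ∃ C : ℝ, 0 < C ∧ ∀ U : ℝ, 0 ≤ U → ∀ η : ℝ, 0 < η → ∀ ξ : ℝ,
      ‖𝓕 (windowedError η U) ξ‖ ^ 2 ≤
        C * η ^ 2 * Real.log (2 + 1 / η) ^ 2 * decay (2 * π * η * ξ) := by
  obtain ⟨C, hC, hbound⟩ := exists_norm_charFun_localize_sub_le hRH
  refine ⟨C ^ 2 * 5 * 441, by positivity, fun U hU η hη ξ ↦ ?_⟩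
  set t := 2 * π * ξ with ht
  rw [fourier_windowedError, norm_mul, mul_pow, show 2 * π * η * ξ = η * t by rw [ht]; ring]
  calc _ ≤ (C * logHeight t) ^ 2 * (5 * η ^ 2 * (1 + (η * t) ^ 2)⁻¹) := by
        gcongr
        · exact hbound U hU t
        · exact norm_fourierInv_expWindow_sq_le hη.le ξ
    _ = C ^ 2 * 5 * η ^ 2 * (logHeight t ^ 2 * (1 + (η * t) ^ 2)⁻¹) := by ring
    _ ≤ C ^ 2 * 5 * η ^ 2 * (441 * Real.log (2 + 1 / η) ^ 2 * decay (η * t)) := by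
        exact mul_le_mul_of_nonneg_left (logHeight_sq_mul_inv_le_decay hη t) (by positivity)
    _ = _ := by ring

lemma integral_decay_comp_mul_le {a : ℝ} (ha : 0 < a) :
    ∫ ξ, decay (2 * π * a * ξ) ≤ a⁻¹ * ∫ τ, decay τ := by
  have hpi : (2 * π)⁻¹ ≤ 1 := inv_le_one_of_one_le₀ (by linarith [Real.pi_gt_three])
  rw [Measure.integral_comp_mul_left decay, abs_of_pos (by positivity), smul_eq_mul, mul_inv]
  have := integral_decay_nonneg
  gcongr
  exact mul_le_of_le_one_left (by positivity) hpi

lemma exists_integral_norm_windowedError_sq_le (hRH : RiemannHypothesis) :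
    ∃ C : ℝ, 0 < C ∧ ∀ U : ℝ, 0 ≤ U → ∀ η : ℝ, 0 < η →
      ∫ u, ‖windowedError η U u‖ ^ 2 ≤ C * η * Real.log (2 + 1 / η) ^ 2 := by
  obtain ⟨C, hC, hbound⟩ := exists_norm_fourier_windowedError_sq_le hRH
  have hJ := integral_decay_nonneg
  refine ⟨C * ((∫ τ, decay τ) + 1), by positivity, fun U hU η hη ↦ ?_⟩
  set K := C * η ^ 2 * Real.log (2 + 1 / η) ^ 2
  have hcont : Continuous (𝓕 (windowedError η U)) :=
    continuous_fourier (integrable_windowedError η U)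
  have hdecay : Integrable fun ξ : ℝ ↦ K * decay (2 * π * η * ξ) :=
    (integrable_decay.comp_mul_left' (by positivity)).const_mul K
  have hint : Integrable fun ξ ↦ ‖𝓕 (windowedError η U) ξ‖ ^ 2 := by
    refine hdecay.mono' (by fun_prop) (Eventually.of_forall fun ξ ↦ ?_)
    rw [Real.norm_of_nonneg (by positivity)]
    exact hbound U hU η hη ξ
  have hmem : MemLp (𝓕 (windowedError η U)) 2 :=
    (memLp_two_iff_integrable_sq_norm hcont.aestronglyMeasurable).2 hint
  calc ∫ u, ‖windowedError η U u‖ ^ 2 = ∫ ξ, ‖𝓕 (windowedError η U) ξ‖ ^ 2 :=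
        integral_norm_sq_eq_integral_norm_fourier_sq (integrable_windowedError η U)
          (memLp_windowedError η U) hmem
    _ ≤ ∫ ξ, K * decay (2 * π * η * ξ) := integral_mono hint hdecay (hbound U hU η hη)
    _ ≤ K * (η⁻¹ * ∫ τ, decay τ) := by
        rw [integral_const_mul]
        gcongr
        exact integral_decay_comp_mul_le hη
    _ = C * η * Real.log (2 + 1 / η) ^ 2 * ∫ τ, decay τ := by
        unfold K
        field_simp
    _ ≤ C * η * Real.log (2 + 1 / η) ^ 2 * ((∫ τ, decay τ) + 1) := by
        gcongr
        linarith
    _ = _ := by ring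

end WindowedError

/-! ### Mean square of `ψ` over intervals of length proportional to the endpoint -/

open scoped Chebyshev ENNReal

lemma psi_sub_psi {x y : ℝ} (hxy : x ≤ y) :
    ψ y - ψ x = ∑ n ∈ Finset.Ioc ⌊x⌋₊ ⌊y⌋₊, ArithmeticFunction.vonMangoldt n := by
  rw [Chebyshev.psi, Chebyshev.psi,
    ← Finset.sum_Ioc_consecutive _ (Nat.zero_le _) (Nat.floor_mono hxy), add_sub_cancel_left]

lemma setIntegral_exp_vonMangoldtMeasure {a b : ℝ} (hab : a ≤ b) :
    ∫ v in Ioc a b, Real.exp (5 / 4 * v) ∂vonMangoldtMeasure =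
      ψ (Real.exp b) - ψ (Real.exp a) := by
  have hint : IntegrableOn (fun v ↦ Real.exp (5 / 4 * v)) (Ioc a b) vonMangoldtMeasure :=
    Continuous.integrableOn_Ioc (by fun_prop)
  have hterm (n : ℕ) :
      (ArithmeticFunction.vonMangoldt n * (n : ℝ) ^ (-(5 / 4) : ℝ)) •
          (Ioc a b).indicator (fun v ↦ Real.exp (5 / 4 * v)) (Real.log n) =
        (Finset.Ioc ⌊Real.exp a⌋₊ ⌊Real.exp b⌋₊ : Set ℕ).indicator
          (fun n ↦ ArithmeticFunction.vonMangoldt n) n := by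
    rcases Nat.eq_zero_or_pos n with rfl | hn
    · simp
    have hn' : (0 : ℝ) < n := by exact_mod_cast hn
    have hmem : Real.log n ∈ Ioc a b ↔
        n ∈ (Finset.Ioc ⌊Real.exp a⌋₊ ⌊Real.exp b⌋₊ : Set ℕ) := by
      rw [mem_Ioc, Real.lt_log_iff_exp_lt hn', Real.log_le_iff_le_exp hn', Finset.mem_coe,
        Finset.mem_Ioc, Nat.floor_lt (Real.exp_pos a).le, Nat.le_floor_iff (Real.exp_pos b).le]
    by_cases h : Real.log n ∈ Ioc a b
    · rw [indicator_of_mem h, indicator_of_mem (hmem.1 h), smul_eq_mul,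
        Real.rpow_def_of_pos hn', mul_assoc, ← Real.exp_add]
      ring_nf
      simp
    · rw [indicator_of_notMem h, indicator_of_notMem (mt hmem.2 h), smul_zero]
  have hsum := hasSum_integral_vonMangoldtMeasure (hint.integrable_indicator measurableSet_Ioc)
  simp_rw [hterm] at hsum
  rw [← integral_indicator measurableSet_Ioc, psi_sub_psi (Real.exp_le_exp.2 hab),
    ← hsum.tsum_eq, sum_eq_tsum_indicator]

lemma setIntegral_exp_mainTermMeasure {a b : ℝ} (ha : 0 ≤ a) (hab : a ≤ b) :
    ∫ v in Ioc a b, Real.exp (5 / 4 * v) ∂mainTermMeasure = Real.exp b - Real.exp a := by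
  have hdensity (v : ℝ) :
      Real.exp (-(1 / 4) * v) • (Ioc a b).indicator (fun v ↦ Real.exp (5 / 4 * v)) v =
        (Ioc a b).indicator Real.exp v := by
    simp only [indicator_apply]
    split_ifs
    · rw [smul_eq_mul, ← Real.exp_add]
      ring_nf
    · rw [smul_zero]
  have hsub : Ioc a b ⊆ Ioi 0 := fun v hv ↦ ha.trans_lt hv.1
  rw [← integral_indicator measurableSet_Ioc, integral_mainTermMeasure]
  simp_rw [hdensity]
  rw [setIntegral_indicator measurableSet_Ioc, inter_eq_right.2 hsub,
    ← intervalIntegral.integral_of_le hab, integral_exp]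

lemma laplaceWeight_smul_expWindow {η U u : ℝ} (hU : u + η ≤ U) (v : ℝ) :
    laplaceWeight U v • expWindow η (v - u) =
      (Ioc u (u + η)).indicator
        (fun v ↦ ((Real.exp (u / 2 - U) * Real.exp (5 / 4 * v) : ℝ) : ℂ)) v := by
  have hmem : v - u ∈ Ioc 0 η ↔ v ∈ Ioc u (u + η) := by
    simp only [mem_Ioc, sub_pos, sub_le_iff_le_add']
  by_cases hv : v ∈ Ioc u (u + η)
  · rw [expWindow, indicator_of_mem (hmem.2 hv), indicator_of_mem hv, laplaceWeight,
      abs_of_nonpos (by linarith [hv.2]), real_smul, ← Real.exp_add, ofReal_exp, ofReal_exp,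
      ← Complex.exp_add]
    push_cast
    ring_nf
  · rw [expWindow, indicator_of_notMem (mt hmem.1 hv), indicator_of_notMem hv, smul_zero]

lemma crossCorrelation_expWindow_localize {η U u : ℝ} (hU : u + η ≤ U) (μ : Measure ℝ) :
    crossCorrelation (expWindow η) (localize U μ) u =
      (Real.exp (u / 2 - U) * ∫ v in Ioc u (u + η), Real.exp (5 / 4 * v) ∂μ : ℝ) := by
  rw [crossCorrelation, integral_localize]
  simp_rw [laplaceWeight_smul_expWindow hU]
  rw [integral_indicator measurableSet_Ioc, integral_complex_ofReal, integral_const_mul]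

/-- The error `ψ(x + v) - ψ(x) - v` of the prime number theorem in `(x, x + v]`; for `x = 0` it is
`ψ(v) - v`. -/
noncomputable def psiError (x v : ℝ) : ℝ := ψ (x + v) - ψ x - v

lemma norm_windowedError_sq {η U u : ℝ} (hη : 0 ≤ η) (hu : 0 ≤ u) (hU : u + η ≤ U) :
    ‖windowedError η U u‖ ^ 2 =
      (Real.exp U ^ 2)⁻¹ *
        (Real.exp u * psiError (Real.exp u) ((Real.exp η - 1) * Real.exp u) ^ 2) := by
  have hle : u ≤ u + η := le_add_of_nonneg_right hη
  have hweight : Real.exp (u / 2 - U) ^ 2 = (Real.exp U ^ 2)⁻¹ * Real.exp u := by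
    rw [← Real.exp_nat_mul, ← Real.exp_nat_mul, ← Real.exp_neg, ← Real.exp_add]
    push_cast
    ring_nf
  rw [windowedError, Pi.sub_apply, crossCorrelation_expWindow_localize hU,
    crossCorrelation_expWindow_localize hU, setIntegral_exp_vonMangoldtMeasure hle,
    setIntegral_exp_mainTermMeasure hu hle, ← ofReal_sub, norm_real, Real.norm_eq_abs, sq_abs,
    ← mul_sub, mul_pow, hweight, psiError, Real.exp_add u η]
  ring_nf

/-- The square of `psiError`, valued in `ℝ≥0∞`. -/
noncomputable def sqError (x v : ℝ) : ℝ≥0∞ := ENNReal.ofReal (psiError x v ^ 2)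

lemma log_two_add_inv_log_one_add_le {δ : ℝ} (hδ : 0 < δ) (hδ3 : δ ≤ 3) :
    Real.log (2 + 1 / Real.log (1 + δ)) ≤ 3 * Real.log (2 + 1 / δ) := by
  have hinv : 0 < 1 / δ := by positivity
  have hlog : 0 < Real.log (1 + δ) := Real.log_pos (by linarith)
  have hquarter : δ / 4 ≤ Real.log (1 + δ) :=
    calc δ / 4 ≤ δ / (1 + δ) := div_le_div_of_nonneg_left hδ.le (by linarith) (by linarith)
      _ = 1 - (1 + δ)⁻¹ := by field_simp; ring
      _ ≤ Real.log (1 + δ) := Real.one_sub_inv_le_log_of_pos (by linarith)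
  have hfour : 1 / Real.log (1 + δ) ≤ 4 * (1 / δ) :=
    calc 1 / Real.log (1 + δ) ≤ 1 / (δ / 4) := one_div_le_one_div_of_le (by positivity) hquarter
      _ = 4 * (1 / δ) := by field_simp
  have hcube : 2 + 1 / Real.log (1 + δ) ≤ (2 + 1 / δ) ^ 3 := by
    nlinarith [pow_pos hinv 2, pow_pos hinv 3]
  calc Real.log (2 + 1 / Real.log (1 + δ)) ≤ Real.log ((2 + 1 / δ) ^ 3) :=
        Real.log_le_log (by positivity) hcube
    _ = 3 * Real.log (2 + 1 / δ) := by rw [Real.log_pow]; norm_num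

lemma setLIntegral_Icc_one_eq_lintegral_exp {Y : ℝ} (hY : 0 < Y) (f : ℝ → ℝ≥0∞) :
    ∫⁻ x in Icc 1 Y, f x =
      ∫⁻ u in Icc 0 (Real.log Y), ENNReal.ofReal (Real.exp u) * f (Real.exp u) := by
  have himage : Real.exp '' Icc 0 (Real.log Y) = Icc 1 Y := by
    rw [image_exp_Icc, Real.exp_zero, Real.exp_log hY]
  rw [← himage, lintegral_image_eq_lintegral_abs_deriv_mul measurableSet_Icc
    (fun x _ ↦ (Real.hasDerivAt_exp x).hasDerivWithinAt) Real.exp_injective.injOn]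
  simp only [abs_of_pos (Real.exp_pos _)]

lemma setLIntegral_sqError_le_integral_windowedError {δ Y : ℝ} (hδ : 0 < δ) (hY : 0 < Y) :
    ∫⁻ x in Icc 1 Y, sqError x (δ * x) ≤
      ENNReal.ofReal (((1 + δ) * Y) ^ 2 *
        ∫ u, ‖windowedError (Real.log (1 + δ)) (Real.log Y + Real.log (1 + δ)) u‖ ^ 2) := by
  have hη : 0 ≤ Real.log (1 + δ) := Real.log_nonneg (by linarith)
  have hexpη : Real.exp (Real.log (1 + δ)) = 1 + δ := Real.exp_log (by linarith)
  have hexpU : Real.exp (Real.log Y + Real.log (1 + δ)) = (1 + δ) * Y := by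
    rw [Real.exp_add, hexpη, Real.exp_log hY, mul_comm]
  set η := Real.log (1 + δ)
  set U := Real.log Y + η
  have hint : Integrable fun u ↦ ‖windowedError η U u‖ ^ 2 :=
    (memLp_two_iff_integrable_sq_norm (integrable_windowedError η U).aestronglyMeasurable).1
      (memLp_windowedError η U)
  rw [setLIntegral_Icc_one_eq_lintegral_exp hY, ← integral_const_mul,
    ofReal_integral_eq_lintegral_ofReal (hint.const_mul _)
      (Eventually.of_forall fun u ↦ by positivity)]
  refine le_trans (le_of_eq ?_) (setLIntegral_le_lintegral (Icc 0 (Real.log Y)) _)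
  refine setLIntegral_congr_fun measurableSet_Icc fun u hu ↦ ?_
  have hu' : u + η ≤ U := by linarith [hu.2]
  rw [norm_windowedError_sq hη hu.1 hu', hexpη, hexpU, sqError,
    ← ENNReal.ofReal_mul (Real.exp_pos u).le, add_sub_cancel_left,
    mul_inv_cancel_left₀ (by positivity)]

lemma exists_setLIntegral_sqError_mul_le (hRH : RiemannHypothesis) :
    ∃ C : ℝ, 0 < C ∧ ∀ δ : ℝ, 0 < δ → δ ≤ 3 → ∀ Y : ℝ, 0 < Y →
      ∫⁻ x in Icc 1 Y, sqError x (δ * x) ≤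
        ENNReal.ofReal (C * δ * Y ^ 2 * Real.log (2 + 1 / δ) ^ 2) := by
  obtain ⟨C, hC, hbound⟩ := exists_integral_norm_windowedError_sq_le hRH
  refine ⟨144 * C, by positivity, fun δ hδ hδ3 Y hY ↦ ?_⟩
  rcases lt_or_ge Y 1 with hY1 | hY1
  · simp [Icc_eq_empty (not_le.2 hY1)]
  refine (setLIntegral_sqError_le_integral_windowedError hδ hY).trans
    (ENNReal.ofReal_le_ofReal ?_)
  have hη : 0 < Real.log (1 + δ) := Real.log_pos (by linarith)
  have hηδ : Real.log (1 + δ) ≤ δ := by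
    linarith [Real.log_le_sub_one_of_pos (show 0 < 1 + δ by linarith)]
  have hlog : 0 ≤ Real.log (2 + 1 / Real.log (1 + δ)) :=
    (half_le_log_two_add (by positivity)).trans' (by norm_num)
  calc ((1 + δ) * Y) ^ 2 *
        ∫ u, ‖windowedError (Real.log (1 + δ)) (Real.log Y + Real.log (1 + δ)) u‖ ^ 2
      ≤ ((1 + 3) * Y) ^ 2 *
        (C * Real.log (1 + δ) * Real.log (2 + 1 / Real.log (1 + δ)) ^ 2) := by
        gcongr
        exact hbound _ (add_nonneg (Real.log_nonneg hY1) hη.le) _ hη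
    _ ≤ ((1 + 3) * Y) ^ 2 * (C * δ * (3 * Real.log (2 + 1 / δ)) ^ 2) := by
        gcongr
        exact log_two_add_inv_log_one_add_le hδ hδ3
    _ = 144 * C * δ * Y ^ 2 * Real.log (2 + 1 / δ) ^ 2 := by ring

/-! ### Cramér's mean square of `ψ(x) - x` -/

@[fun_prop]
lemma measurable_psiError {α : Type*} [MeasurableSpace α] {f g : α → ℝ} (hf : Measurable f)
    (hg : Measurable g) : Measurable fun a ↦ psiError (f a) (g a) := by
  have hψ : Measurable ψ := Chebyshev.psi_mono.measurable
  exact ((hψ.comp (hf.add hg)).sub (hψ.comp hf)).sub hg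

@[fun_prop]
lemma measurable_sqError {α : Type*} [MeasurableSpace α] {f g : α → ℝ} (hf : Measurable f)
    (hg : Measurable g) : Measurable fun a ↦ sqError (f a) (g a) :=
  ((measurable_psiError hf hg).pow_const 2).ennreal_ofReal

lemma psiError_add (x v w : ℝ) : psiError x (v + w) = psiError x v + psiError (x + v) w := by
  rw [psiError, psiError, psiError, add_assoc]
  ring

lemma ofReal_sub_sq_le (a b : ℝ) :
    ENNReal.ofReal ((a - b) ^ 2) ≤ 2 * ENNReal.ofReal (a ^ 2) + 2 * ENNReal.ofReal (b ^ 2) := by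
  rw [← ENNReal.ofReal_ofNat 2, ← ENNReal.ofReal_mul zero_le_two, ← ENNReal.ofReal_mul zero_le_two,
    ← ENNReal.ofReal_add (by positivity) (by positivity)]
  refine ENNReal.ofReal_le_ofReal ?_
  linarith [sq_nonneg (a + b)]

lemma sqError_le_of_add_left (x v w : ℝ) :
    sqError (x + v) w ≤ 2 * sqError x (v + w) + 2 * sqError x v := by
  have hsub : psiError (x + v) w = psiError x (v + w) - psiError x v := by
    rw [psiError_add, add_sub_cancel_left]
  rw [sqError, hsub]
  exact ofReal_sub_sq_le _ _

lemma sqError_le_of_add_right (x v w : ℝ) :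
    sqError x v ≤ 2 * sqError x (v + w) + 2 * sqError (x + v) w := by
  have hsub : psiError x v = psiError x (v + w) - psiError (x + v) w := by
    rw [psiError_add, add_sub_cancel_right]
  rw [sqError, hsub]
  exact ofReal_sub_sq_le _ _

lemma two_mul_sqError_zero_mul_two_le (x : ℝ) :
    2 * sqError 0 (x * 2) ≤ 3 * sqError 0 x + 6 * sqError x x := by
  rw [sqError, mul_two, psiError_add, zero_add, sqError, sqError, ← ENNReal.ofReal_ofNat 2,
    ← ENNReal.ofReal_ofNat 3, ← ENNReal.ofReal_ofNat 6, ← ENNReal.ofReal_mul (by norm_num),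
    ← ENNReal.ofReal_mul (by norm_num), ← ENNReal.ofReal_mul (by norm_num),
    ← ENNReal.ofReal_add (by positivity) (by positivity)]
  refine ENNReal.ofReal_le_ofReal ?_
  linarith [sq_nonneg (psiError 0 x - 2 * psiError x x)]

lemma setLIntegral_Icc_mul_right {c : ℝ} (hc : 0 < c) {a b : ℝ} (hab : a ≤ b) (f : ℝ → ℝ≥0∞) :
    ∫⁻ v in Icc (a * c) (b * c), f v = ∫⁻ t in Icc a b, ENNReal.ofReal c * f (t * c) := by
  rw [← image_mul_right_Icc hab hc.le,
    lintegral_image_eq_lintegral_abs_deriv_mul (f' := fun _ ↦ c) measurableSet_Icc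
      (fun t _ ↦ (hasDerivAt_mul_const c).hasDerivWithinAt) (mul_left_injective₀ hc.ne').injOn,
    abs_of_pos hc]

lemma setLIntegral_Icc_comp_add_right_le {a b a' b' h : ℝ} (ha : a' ≤ a + h) (hb : b + h ≤ b')
    (f : ℝ → ℝ≥0∞) : ∫⁻ x in Icc a b, f (x + h) ≤ ∫⁻ x in Icc a' b', f x := by
  rw [← (measurePreserving_add_right volume h).setLIntegral_comp_preimage_emb
    (measurableEmbedding_addRight h) f]
  exact lintegral_mono_set fun x hx ↦ ⟨by linarith [hx.1], by linarith [hx.2]⟩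

lemma setLIntegral_sqError_zero_mul_two_le {Z : ℝ} (hZ : 1 ≤ Z) :
    ∫⁻ x in Icc 1 (Z * 2), sqError 0 x ≤ (∫⁻ x in Icc 1 2, sqError 0 x) +
      (3 * (∫⁻ x in Icc 1 Z, sqError 0 x) + 6 * ∫⁻ x in Icc 1 Z, sqError x x) := by
  have hcover : Icc 1 (Z * 2) ⊆ Icc 1 2 ∪ Icc (1 * 2) (Z * 2) := by
    rw [one_mul, Icc_union_Icc_eq_Icc one_le_two (by linarith)]
  refine (lintegral_mono_set hcover).trans ((lintegral_union_le _ _ _).trans ?_)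
  gcongr
  rw [setLIntegral_Icc_mul_right two_pos hZ, ← lintegral_const_mul _ (by fun_prop),
    ← lintegral_const_mul _ (by fun_prop), ← lintegral_add_left (by fun_prop),
    ENNReal.ofReal_ofNat]
  exact lintegral_mono two_mul_sqError_zero_mul_two_le

lemma le_mul_sq_of_doubling {f : ℝ → ℝ≥0∞} (hf : Monotone f) {c : ℝ≥0∞}
    (hdouble : ∀ Z, 1 ≤ Z → f (Z * 2) ≤ f 2 + (3 * f Z + c * ENNReal.ofReal Z ^ 2)) {Y : ℝ}
    (hY : 1 ≤ Y) : f Y ≤ (f 2 + c) * ENNReal.ofReal Y ^ 2 := by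
  have one_le_sq {Z : ℝ} (hZ : 1 ≤ Z) : 1 ≤ ENNReal.ofReal Z ^ 2 :=
    one_le_pow₀ (ENNReal.one_le_ofReal.2 hZ)
  have hdyadic (n : ℕ) :
      ∀ Y : ℝ, 1 ≤ Y → Y ≤ 2 ^ n → f Y ≤ (f 2 + c) * ENNReal.ofReal Y ^ 2 := by
    induction n with
    | zero =>
      intro Y h1 h2
      exact (hf (h2.trans (by norm_num))).trans
        (le_self_add.trans (le_mul_of_one_le_right' (one_le_sq h1)))
    | succ n ih =>
      intro Y h1 h2
      rcases le_total Y 2 with hY2 | hY2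
      · exact (hf hY2).trans (le_self_add.trans (le_mul_of_one_le_right' (one_le_sq h1)))
      obtain ⟨Z, rfl⟩ : ∃ Z, Y = Z * 2 := ⟨Y / 2, by ring⟩
      have hZ : 1 ≤ Z := by linarith
      have hfZ := ih Z hZ (by rw [pow_succ] at h2; linarith)
      calc f (Z * 2) ≤ f 2 + (3 * f Z + c * ENNReal.ofReal Z ^ 2) := hdouble Z hZ
        _ ≤ f 2 * ENNReal.ofReal Z ^ 2 +
            (3 * ((f 2 + c) * ENNReal.ofReal Z ^ 2) + c * ENNReal.ofReal Z ^ 2) := by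
            gcongr
            exact le_mul_of_one_le_right' (one_le_sq hZ)
        _ = (f 2 + c) * ENNReal.ofReal (Z * 2) ^ 2 := by
            rw [ENNReal.ofReal_mul (by linarith), ENNReal.ofReal_ofNat]
            ring
  obtain ⟨n, hn⟩ := pow_unbounded_of_one_lt Y one_lt_two
  exact hdyadic n Y hY hn.le

lemma setLIntegral_sqError_zero_lt_top (a b : ℝ) : ∫⁻ x in Icc a b, sqError 0 x < ∞ := by
  refine setLIntegral_lt_top_of_le_nnreal (by simp) ⟨Real.toNNReal ((ψ b + (|a| + |b|)) ^ 2), ?_⟩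
  intro x hx
  refine ENNReal.ofReal_le_ofReal (sq_le_sq' ?_ ?_)
  all_goals
    rw [psiError, zero_add, Chebyshev.psi_zero]
    linarith [Chebyshev.psi_mono hx.2, Chebyshev.psi_nonneg x, Chebyshev.psi_nonneg b, hx.1, hx.2,
      neg_abs_le a, le_abs_self b, abs_nonneg a, abs_nonneg b]

lemma exists_setLIntegral_sqError_zero_le (hRH : RiemannHypothesis) :
    ∃ K : ℝ, 0 ≤ K ∧ ∀ Y : ℝ, 1 ≤ Y →
      ∫⁻ x in Icc 1 Y, sqError 0 x ≤ ENNReal.ofReal (K * Y ^ 2) := by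
  obtain ⟨C, -, hbound⟩ := exists_setLIntegral_sqError_mul_le hRH
  set f : ℝ → ℝ≥0∞ := fun Y ↦ ∫⁻ x in Icc 1 Y, sqError 0 x
  set c : ℝ≥0∞ := 6 * ENNReal.ofReal (C * Real.log 3 ^ 2)
  have hf : Monotone f := fun Y Z h ↦ lintegral_mono_set (Icc_subset_Icc_right h)
  have hdouble (Z : ℝ) (hZ : 1 ≤ Z) :
      f (Z * 2) ≤ f 2 + (3 * f Z + c * ENNReal.ofReal Z ^ 2) := by
    refine (setLIntegral_sqError_zero_mul_two_le hZ).trans ?_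
    have hδ := hbound 1 one_pos (by norm_num) Z (by linarith)
    simp only [one_mul] at hδ
    rw [mul_assoc, ← ENNReal.ofReal_pow (by linarith), ← ENNReal.ofReal_mul' (by positivity)]
    gcongr
    refine hδ.trans_eq ?_
    norm_num
    ring_nf
  have hfin : f 2 + c ≠ ∞ := ENNReal.add_ne_top.2
    ⟨(setLIntegral_sqError_zero_lt_top 1 2).ne, ENNReal.mul_ne_top (by simp) (by simp)⟩
  refine ⟨(f 2 + c).toReal, ENNReal.toReal_nonneg, fun Y hY ↦ ?_⟩
  rw [ENNReal.ofReal_mul ENNReal.toReal_nonneg, ENNReal.ofReal_toReal hfin,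
    ENNReal.ofReal_pow (by linarith)]
  exact le_mul_sq_of_doubling hf hdouble hY

lemma exists_setLIntegral_sqError_Icc_one_self_le (hRH : RiemannHypothesis) :
    ∃ K : ℝ, 0 ≤ K ∧ ∀ h : ℝ, ∫⁻ x in Icc 1 h, sqError x h ≤ ENNReal.ofReal (K * h ^ 2) := by
  obtain ⟨K, hK, hbound⟩ := exists_setLIntegral_sqError_zero_le hRH
  refine ⟨16 * K, by positivity, fun h ↦ ?_⟩
  rcases lt_or_ge h 1 with h1 | h1
  · simp [Icc_eq_empty (not_le.2 h1)]
  calc ∫⁻ x in Icc 1 h, sqError x h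
      ≤ ∫⁻ x in Icc 1 h, (2 * sqError 0 (x + h) + 2 * sqError 0 x) :=
        lintegral_mono fun x ↦ by simpa only [zero_add] using sqError_le_of_add_left 0 x h
    _ = 2 * (∫⁻ x in Icc 1 h, sqError 0 (x + h)) + 2 * ∫⁻ x in Icc 1 h, sqError 0 x := by
        rw [lintegral_add_left (by fun_prop), lintegral_const_mul _ (by fun_prop),
          lintegral_const_mul _ (by fun_prop)]
    _ ≤ 2 * (∫⁻ x in Icc 1 (2 * h), sqError 0 x) + 2 * ∫⁻ x in Icc 1 (2 * h), sqError 0 x := by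
        gcongr 2 * ?_ + 2 * ?_
        · exact setLIntegral_Icc_comp_add_right_le (by linarith) (by linarith) _
        · exact lintegral_mono_set (Icc_subset_Icc_right (by linarith))
    _ = 4 * ∫⁻ x in Icc 1 (2 * h), sqError 0 x := by ring
    _ ≤ 4 * ENNReal.ofReal (K * (2 * h) ^ 2) := by
        gcongr
        exact hbound _ (by linarith)
    _ = ENNReal.ofReal (16 * K * h ^ 2) := by
        rw [← ENNReal.ofReal_ofNat 4, ← ENNReal.ofReal_mul (by norm_num)]
        ring_nf

/-! ### Averaging over the interval length -/

/-- The integral of `sqError x v` over the lengths `v ∈ [h, 3h]`: the average that controls the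
single length `h`. -/
noncomputable def averagedSqError (h x : ℝ) : ℝ≥0∞ := ∫⁻ v in Icc h (3 * h), sqError x v

@[fun_prop]
lemma measurable_averagedSqError (h : ℝ) : Measurable (averagedSqError h) :=
  (measurable_sqError measurable_fst measurable_snd).lintegral_prod_right'

lemma ofReal_mul_sqError_le {h : ℝ} (hh : 0 ≤ h) (x : ℝ) :
    ENNReal.ofReal h * sqError x h ≤
      2 * averagedSqError h x + 2 * averagedSqError h (x + h) := by
  have hvolume : ENNReal.ofReal h = volume (Icc (2 * h) (3 * h)) := by
    rw [Real.volume_Icc]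
    ring_nf
  calc ENNReal.ofReal h * sqError x h = ∫⁻ _ in Icc (2 * h) (3 * h), sqError x h := by
        rw [setLIntegral_const, hvolume, mul_comm]
    _ ≤ ∫⁻ v in Icc (2 * h) (3 * h), (2 * sqError x v + 2 * sqError (x + h) (v + -h)) :=
        lintegral_mono fun v ↦ by
          simpa only [add_neg_cancel_comm_assoc] using sqError_le_of_add_right x h (v + -h)
    _ = 2 * (∫⁻ v in Icc (2 * h) (3 * h), sqError x v) +
          2 * ∫⁻ v in Icc (2 * h) (3 * h), sqError (x + h) (v + -h) := by
        rw [lintegral_add_left (by fun_prop), lintegral_const_mul _ (by fun_prop),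
          lintegral_const_mul _ (by fun_prop)]
    _ ≤ 2 * averagedSqError h x + 2 * averagedSqError h (x + h) := by
        gcongr 2 * ?_ + 2 * ?_
        · exact lintegral_mono_set (Icc_subset_Icc_left (by linarith))
        · exact setLIntegral_Icc_comp_add_right_le (by linarith) (by linarith) _

lemma ofReal_mul_setLIntegral_sqError_le {h a b : ℝ} (hh : 0 ≤ h) :
    ENNReal.ofReal h * ∫⁻ x in Icc a b, sqError x h ≤
      4 * ∫⁻ x in Icc a (b + h), averagedSqError h x := by
  rw [← lintegral_const_mul _ (by fun_prop)]
  calc ∫⁻ x in Icc a b, ENNReal.ofReal h * sqError x h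
      ≤ ∫⁻ x in Icc a b, (2 * averagedSqError h x + 2 * averagedSqError h (x + h)) :=
        lintegral_mono (ofReal_mul_sqError_le hh)
    _ = 2 * (∫⁻ x in Icc a b, averagedSqError h x) +
          2 * ∫⁻ x in Icc a b, averagedSqError h (x + h) := by
        rw [lintegral_add_left (by fun_prop), lintegral_const_mul _ (by fun_prop),
          lintegral_const_mul _ (by fun_prop)]
    _ ≤ 2 * (∫⁻ x in Icc a (b + h), averagedSqError h x) +
          2 * ∫⁻ x in Icc a (b + h), averagedSqError h x := by
        gcongr 2 * ?_ + 2 * ?_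
        · exact lintegral_mono_set (Icc_subset_Icc_right (by linarith))
        · exact setLIntegral_Icc_comp_add_right_le (by linarith) le_rfl _
    _ = 4 * ∫⁻ x in Icc a (b + h), averagedSqError h x := by ring

/-- The integrand of `averagedSqError h x` after the substitution `v = δ * x`, with only the upper
limit `v ≤ 3h` retained, as an indicator: the remaining domain of `δ` can then be chosen
independently of `x`. -/
noncomputable def dilatedSqError (h x δ : ℝ) : ℝ≥0∞ :=
  {p : ℝ × ℝ | p.1 * p.2 ≤ 3 * h}.indicator
    (fun p ↦ ENNReal.ofReal p.1 * sqError p.1 (p.2 * p.1)) (x, δ)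

lemma measurable_dilatedSqError (h : ℝ) : Measurable (Function.uncurry (dilatedSqError h)) :=
  (measurable_fst.ennreal_ofReal.mul
    (measurable_sqError measurable_fst (measurable_snd.mul measurable_fst))).indicator
    (measurableSet_le (by fun_prop) (by fun_prop))

lemma averagedSqError_le_setLIntegral_dilatedSqError {h x B : ℝ} (hh : 0 < h) (hx : h ≤ x)
    (hB : x ≤ B) : averagedSqError h x ≤ ∫⁻ δ in Icc (h / B) 3, dilatedSqError h x δ := by
  have hx0 : 0 < x := hh.trans_le hx
  have hle : h / x ≤ 3 * h / x := by gcongr; linarith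
  calc averagedSqError h x
      = ∫⁻ δ in Icc (h / x) (3 * h / x), ENNReal.ofReal x * sqError x (δ * x) := by
        rw [← setLIntegral_Icc_mul_right hx0 hle, div_mul_cancel₀ _ hx0.ne',
          div_mul_cancel₀ _ hx0.ne', averagedSqError]
    _ = ∫⁻ δ in Icc (h / x) (3 * h / x), dilatedSqError h x δ := by
        refine setLIntegral_congr_fun measurableSet_Icc fun δ hδ ↦ ?_
        have hmem : (x, δ) ∈ {p : ℝ × ℝ | p.1 * p.2 ≤ 3 * h} := (le_div_iff₀' hx0).1 hδ.2
        rw [dilatedSqError, indicator_of_mem hmem]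
    _ ≤ ∫⁻ δ in Icc (h / B) 3, dilatedSqError h x δ := by
        refine lintegral_mono_set (Icc_subset_Icc (by gcongr) ?_)
        rw [div_le_iff₀ hx0]
        linarith

lemma setLIntegral_dilatedSqError_le {δ : ℝ} (hδ : 0 < δ) (h : ℝ) :
    ∫⁻ x in Ici 1, dilatedSqError h x δ ≤
      ENNReal.ofReal (3 * h / δ) * ∫⁻ x in Icc 1 (3 * h / δ), sqError x (δ * x) := by
  rw [← lintegral_const_mul _ (by fun_prop),
    ← lintegral_indicator measurableSet_Ici, ← lintegral_indicator measurableSet_Icc]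
  refine lintegral_mono fun x ↦ ?_
  by_cases hx : 1 ≤ x ∧ x * δ ≤ 3 * h
  · have hle : x ≤ 3 * h / δ := (le_div_iff₀ hδ).2 hx.2
    have hmem : (x, δ) ∈ {p : ℝ × ℝ | p.1 * p.2 ≤ 3 * h} := hx.2
    rw [indicator_of_mem (mem_Ici.2 hx.1), indicator_of_mem (mem_Icc.2 ⟨hx.1, hle⟩),
      dilatedSqError, indicator_of_mem hmem]
    gcongr
  · refine le_of_eq_of_le (indicator_apply_eq_zero.2 fun hx1 ↦ ?_) zero_le
    rw [dilatedSqError, indicator_of_notMem]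
    exact fun hxδ ↦ hx ⟨hx1, hxδ⟩

lemma setLIntegral_Ici_rpow_neg_two {a : ℝ} (ha : 0 < a) :
    ∫⁻ δ in Ici a, ENNReal.ofReal (δ ^ (-2 : ℝ)) = ENNReal.ofReal (1 / a) := by
  rw [← setLIntegral_congr Ioi_ae_eq_Ici, ← ofReal_integral_eq_lintegral_ofReal
    (integrableOn_Ioi_rpow_of_lt (by norm_num) ha), integral_Ioi_rpow_of_lt (by norm_num) ha]
  · norm_num [Real.rpow_neg_one]
  · filter_upwards [ae_restrict_mem measurableSet_Ioi] with δ hδ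
    exact Real.rpow_nonneg (ha.trans hδ).le _

lemma half_le_log_two_mul_div {X h : ℝ} (hh : 0 < h) (hX : h ≤ X) :
    1 / 2 ≤ Real.log (2 * X / h) := by
  have htwo : 2 ≤ 2 * X / h := by rw [le_div_iff₀ hh]; linarith
  linarith [Real.log_two_gt_d9, Real.log_le_log two_pos htwo]

lemma log_two_add_two_mul_div_le {X h : ℝ} (hh : 0 < h) (hX : h ≤ X) :
    Real.log (2 + 2 * X / h) ≤ 2 * Real.log (2 * X / h) := by
  have htwo : 2 ≤ 2 * X / h := by rw [le_div_iff₀ hh]; linarith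
  calc Real.log (2 + 2 * X / h) ≤ Real.log ((2 * X / h) ^ 2) :=
        Real.log_le_log (by linarith) (by nlinarith)
    _ = 2 * Real.log (2 * X / h) := by rw [Real.log_pow]; norm_num

lemma exists_setLIntegral_dilatedSqError_le (hRH : RiemannHypothesis) :
    ∃ C : ℝ, 0 < C ∧ ∀ X h : ℝ, 0 < h → h ≤ X → ∀ δ ∈ Icc (h / (2 * X)) 3,
      ∫⁻ x in Ici 1, dilatedSqError h x δ ≤
        ENNReal.ofReal (C * h ^ 3 * Real.log (2 * X / h) ^ 2 * δ ^ (-2 : ℝ)) := by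
  obtain ⟨C, hC, hbound⟩ := exists_setLIntegral_sqError_mul_le hRH
  refine ⟨108 * C, by positivity, fun X h hh hX δ hδ ↦ ?_⟩
  have : 0 < X := hh.trans_le hX
  have hδ0 : 0 < δ := lt_of_lt_of_le (by positivity) hδ.1
  have hlog : Real.log (2 + 1 / δ) ≤ 2 * Real.log (2 * X / h) := by
    refine (Real.log_le_log (by positivity) ?_).trans (log_two_add_two_mul_div_le hh hX)
    have := one_div_le_one_div_of_le (by positivity) hδ.1
    rw [one_div_div] at this
    linarith
  have hlog0 : 0 ≤ Real.log (2 + 1 / δ) :=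
    (half_le_log_two_add (by positivity)).trans' (by norm_num)
  have hpow : δ ^ (-2 : ℝ) = (δ ^ 2)⁻¹ := by
    rw [Real.rpow_neg hδ0.le, Real.rpow_ofNat]
  calc ∫⁻ x in Ici 1, dilatedSqError h x δ
      ≤ ENNReal.ofReal (3 * h / δ) *
          ENNReal.ofReal (C * δ * (3 * h / δ) ^ 2 * Real.log (2 + 1 / δ) ^ 2) := by
        refine (setLIntegral_dilatedSqError_le hδ0 h).trans ?_
        gcongr
        exact hbound δ hδ0 hδ.2 _ (by positivity)
    _ = ENNReal.ofReal (27 * C * h ^ 3 * Real.log (2 + 1 / δ) ^ 2 * δ ^ (-2 : ℝ)) := by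
        rw [← ENNReal.ofReal_mul (by positivity), hpow]
        congr 1
        field_simp
        ring
    _ ≤ ENNReal.ofReal (27 * C * h ^ 3 * (2 * Real.log (2 * X / h)) ^ 2 * δ ^ (-2 : ℝ)) := by
        gcongr
    _ = ENNReal.ofReal (108 * C * h ^ 3 * Real.log (2 * X / h) ^ 2 * δ ^ (-2 : ℝ)) := by
        ring_nf

lemma exists_setLIntegral_averagedSqError_le (hRH : RiemannHypothesis) :
    ∃ C : ℝ, 0 < C ∧ ∀ X h : ℝ, 0 < h → h ≤ X →
      ∫⁻ x in Icc (max 1 h) (2 * X), averagedSqError h x ≤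
        ENNReal.ofReal (C * h ^ 2 * X * Real.log (2 * X / h) ^ 2) := by
  obtain ⟨C, hC, hbound⟩ := exists_setLIntegral_dilatedSqError_le hRH
  refine ⟨2 * C, by positivity, fun X h hh hX ↦ ?_⟩
  have : 0 < X := hh.trans_le hX
  set A := C * h ^ 3 * Real.log (2 * X / h) ^ 2
  have hA : 0 ≤ A := by positivity
  calc ∫⁻ x in Icc (max 1 h) (2 * X), averagedSqError h x
      ≤ ∫⁻ x in Icc (max 1 h) (2 * X), ∫⁻ δ in Icc (h / (2 * X)) 3, dilatedSqError h x δ :=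
        setLIntegral_mono' measurableSet_Icc fun x hx ↦
          averagedSqError_le_setLIntegral_dilatedSqError hh ((le_max_right 1 h).trans hx.1) hx.2
    _ = ∫⁻ δ in Icc (h / (2 * X)) 3, ∫⁻ x in Icc (max 1 h) (2 * X), dilatedSqError h x δ :=
        lintegral_lintegral_swap (measurable_dilatedSqError h).aemeasurable
    _ ≤ ∫⁻ δ in Icc (h / (2 * X)) 3, ENNReal.ofReal (A * δ ^ (-2 : ℝ)) := by
        refine setLIntegral_mono' measurableSet_Icc fun δ hδ ↦ ?_
        refine (lintegral_mono_set ?_).trans (hbound X h hh hX δ hδ)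
        exact Icc_subset_Ici_self.trans (Ici_subset_Ici.2 (le_max_left 1 h))
    _ ≤ ENNReal.ofReal A * ∫⁻ δ in Ici (h / (2 * X)), ENNReal.ofReal (δ ^ (-2 : ℝ)) := by
        simp_rw [ENNReal.ofReal_mul hA]
        rw [lintegral_const_mul _ (by fun_prop)]
        gcongr
        exact Icc_subset_Ici_self
    _ = ENNReal.ofReal (2 * C * h ^ 2 * X * Real.log (2 * X / h) ^ 2) := by
        rw [setLIntegral_Ici_rpow_neg_two (by positivity), ← ENNReal.ofReal_mul hA]
        congr 1
        simp only [A]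
        field_simp

lemma exists_setLIntegral_sqError_Icc_max_le (hRH : RiemannHypothesis) :
    ∃ C : ℝ, 0 < C ∧ ∀ X h : ℝ, 0 < h → h ≤ X →
      ∫⁻ x in Icc (max 1 h) X, sqError x h ≤
        ENNReal.ofReal (C * h * X * Real.log (2 * X / h) ^ 2) := by
  obtain ⟨C, hC, hbound⟩ := exists_setLIntegral_averagedSqError_le hRH
  refine ⟨4 * C, by positivity, fun X h hh hX ↦ ?_⟩
  refine (ENNReal.mul_le_mul_iff_right (ENNReal.ofReal_pos.2 hh).ne' ENNReal.ofReal_ne_top).1 ?_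
  calc ENNReal.ofReal h * ∫⁻ x in Icc (max 1 h) X, sqError x h
      ≤ 4 * ∫⁻ x in Icc (max 1 h) (X + h), averagedSqError h x :=
        ofReal_mul_setLIntegral_sqError_le hh.le
    _ ≤ 4 * ∫⁻ x in Icc (max 1 h) (2 * X), averagedSqError h x := by
        gcongr
        linarith
    _ ≤ 4 * ENNReal.ofReal (C * h ^ 2 * X * Real.log (2 * X / h) ^ 2) := by
        gcongr
        exact hbound X h hh hX
    _ = ENNReal.ofReal h * ENNReal.ofReal (4 * C * h * X * Real.log (2 * X / h) ^ 2) := by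
        rw [← ENNReal.ofReal_ofNat 4, ← ENNReal.ofReal_mul (by norm_num),
          ← ENNReal.ofReal_mul hh.le]
        ring_nf

lemma exists_setLIntegral_sqError_le (hRH : RiemannHypothesis) :
    ∃ C : ℝ, 0 < C ∧ ∀ X h : ℝ, 0 < h → h ≤ X →
      ∫⁻ x in Icc 1 X, sqError x h ≤ ENNReal.ofReal (C * h * X * Real.log (2 * X / h) ^ 2) := by
  obtain ⟨K, hK, hsmall⟩ := exists_setLIntegral_sqError_Icc_one_self_le hRH
  obtain ⟨C, hC, hlarge⟩ := exists_setLIntegral_sqError_Icc_max_le hRH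
  refine ⟨4 * K + C, by positivity, fun X h hh hX ↦ ?_⟩
  have : 0 < X := hh.trans_le hX
  have hcover : Icc 1 X ⊆ Icc 1 h ∪ Icc (max 1 h) X := fun x hx ↦
    (le_total x h).imp (fun hxh ↦ ⟨hx.1, hxh⟩) fun hhx ↦ ⟨max_le hx.1 hhx, hx.2⟩
  have hsq : h ^ 2 ≤ 4 * h * X * Real.log (2 * X / h) ^ 2 := by
    have hlog := half_le_log_two_mul_div hh hX
    calc h ^ 2 = 4 * h * h * (1 / 2) ^ 2 := by ring
      _ ≤ 4 * h * X * Real.log (2 * X / h) ^ 2 := by gcongr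
  calc ∫⁻ x in Icc 1 X, sqError x h
      ≤ ENNReal.ofReal (K * h ^ 2) + ENNReal.ofReal (C * h * X * Real.log (2 * X / h) ^ 2) :=
        (lintegral_mono_set hcover).trans ((lintegral_union_le _ _ _).trans
          (add_le_add (hsmall h) (hlarge X h hh hX)))
    _ = ENNReal.ofReal (K * h ^ 2 + C * h * X * Real.log (2 * X / h) ^ 2) :=
        (ENNReal.ofReal_add (by positivity) (by positivity)).symm
    _ ≤ ENNReal.ofReal ((4 * K + C) * h * X * Real.log (2 * X / h) ^ 2) := by
        refine ENNReal.ofReal_le_ofReal ?_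
        linarith [mul_le_mul_of_nonneg_left hsq hK]

lemma chebyshevPsi_eq_psi (x : ℝ) : chebyshevPsi x = ψ x := by
  rw [Chebyshev.psi_eq_sum_Icc, chebyshevPsi, Finset.range_eq_Ico]
  rfl

end SaffariVaughan

/-- **Saffari–Vaughan bound.** Assuming RH,
`∫_{1}^{X} (ψ(x+h) - ψ(x) - h)² dx ≪ h X (log(2X/h))²` for `0 < h ≤ X`. -/
theorem saffari_vaughan_h (hRH : RiemannHypothesis) :
    ∃ C : ℝ, 0 < C ∧ ∀ X : ℝ, 1 ≤ X → ∀ h : ℝ, 0 < h → h ≤ X →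
      (∫ x in (1:ℝ)..X, (chebyshevPsi (x + h) - chebyshevPsi x - h) ^ 2)
        ≤ C * h * X * (Real.log (2 * X / h)) ^ 2 := by
  obtain ⟨C, hC, hbound⟩ := SaffariVaughan.exists_setLIntegral_sqError_le hRH
  refine ⟨C, hC, fun X hX1 h hh hX ↦ ?_⟩
  simp only [SaffariVaughan.chebyshevPsi_eq_psi, ← SaffariVaughan.psiError.eq_def]
  rw [intervalIntegral.integral_of_le hX1, ← integral_Icc_eq_integral_Ioc,
    integral_eq_lintegral_of_nonneg_ae (.of_forall fun x ↦ sq_nonneg _) (by fun_prop)]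
  exact ENNReal.toReal_le_of_le_ofReal (by positivity) (hbound X h hh hX)
end

section
/- ∫_{0}^{∞} (sin u / u)² · log u du = (π/2)·(1 − γ₀ − log 2). -/
open Real MeasureTheory

/-!
The integral is the derivative at `s = -1` of the Mellin transform `M(s)` of `sin²`, which is
holomorphic for `-2 < Re s < 0`. Writing `u ^ (s - 1)` as a Gamma integral and applying Fubini
relates `M` to the Mellin transform of the Laplace transform `2 / (t (t² + 4))` of `sin²`:
`Γ(1 - s) M(s) = 2 ^ (-(s + 1)) K(-s)`, where `K` is the Mellin transform of `1 / (1 + t²)`.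
The substitution `t ↦ 1 / t` gives `K(2 - s) = K(s)`, hence `K'(1) = 0`, so no closed form of `K`
beyond `K(1) = π / 2` is needed when both sides are differentiated at `s = -1`.
-/

open Set Filter Asymptotics Topology

section Mellin

variable {E : Type*} [NormedAddCommGroup E] [NormedSpace ℂ E] {f : ℝ → E} {s : ℂ}

/-- The one-sided Laplace transform `z ↦ ∫₀^∞ e^{-zu} f(u) du`, through which a Mellin transform is
evaluated. As a Bochner integral it takes the value `0` where the integral does not converge. -/
noncomputable def laplace (f : ℝ → E) (z : ℂ) : E :=
  ∫ u in Ioi (0 : ℝ), Complex.exp (-(z * u)) • f u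

theorem aestronglyMeasurable_of_mellinConvergent (hf : MellinConvergent f s) :
    AEStronglyMeasurable f (volume.restrict (Ioi 0)) := by
  have hpow : Measurable fun u : ℝ ↦ (u : ℂ) ^ (1 - s) := by fun_prop
  refine (hpow.aestronglyMeasurable.smul hf.aestronglyMeasurable).congr ?_
  filter_upwards [ae_restrict_mem measurableSet_Ioi] with u hu
  have hu : (u : ℂ) ≠ 0 := Complex.ofReal_ne_zero.2 (ne_of_gt hu)
  simp [smul_smul, ← Complex.cpow_add _ _ hu]

theorem integral_cpow_neg_mul_exp_neg_mul_Ioi (hs : s.re < 1) {u : ℝ} (hu : 0 < u) :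
    ∫ t in Ioi (0 : ℝ), (t : ℂ) ^ (-s) * Complex.exp (-(t * u))
      = Complex.Gamma (1 - s) * (u : ℂ) ^ (s - 1) := by
  have hGamma := Complex.integral_cpow_mul_exp_neg_mul_Ioi (a := 1 - s) (by simpa using hs) hu
  have harg : (u : ℂ).arg ≠ π := by simp [Complex.arg_ofReal_of_nonneg hu.le, pi_ne_zero.symm]
  simp only [sub_sub_cancel_left, one_div, Complex.inv_cpow _ _ harg, ← Complex.cpow_neg, neg_sub]
    at hGamma
  simpa only [mul_comm] using hGamma

theorem norm_cpow_neg_mul_exp_neg_mul {t : ℝ} (ht : 0 < t) (u : ℝ) :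
    ‖(t : ℂ) ^ (-s) * Complex.exp (-(t * u))‖ = t ^ (-s.re) * exp (-(u * t)) := by
  rw [norm_mul, Complex.norm_cpow_eq_rpow_re_of_pos ht, Complex.norm_exp]
  simp [mul_comm]

theorem integral_norm_cpow_neg_mul_exp_neg_mul_Ioi (hs : s.re < 1) {u : ℝ} (hu : 0 < u) :
    ∫ t in Ioi (0 : ℝ), ‖(t : ℂ) ^ (-s) * Complex.exp (-(t * u))‖
      = Gamma (1 - s.re) * u ^ (s.re - 1) := by
  rw [setIntegral_congr_fun measurableSet_Ioi
      fun t ht ↦ norm_cpow_neg_mul_exp_neg_mul (s := s) ht u,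
    show -s.re = (1 - s.re) - 1 by ring, integral_rpow_mul_exp_neg_mul_Ioi (sub_pos.2 hs) hu,
    one_div, inv_rpow hu.le, ← rpow_neg hu.le, neg_sub, mul_comm]

theorem integrable_mellin_laplace_kernel (hs : s.re < 1) (hf : MellinConvergent f s) :
    Integrable (Function.uncurry fun u t : ℝ ↦ ((t : ℂ) ^ (-s) * Complex.exp (-(t * u))) • f u)
      ((volume.restrict (Ioi 0)).prod (volume.restrict (Ioi 0))) := by
  refine (integrable_prod_iff ?_).2 ⟨?_, ?_⟩
  · refine AEStronglyMeasurable.smul (Measurable.aestronglyMeasurable ?_)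
      (aestronglyMeasurable_of_mellinConvergent hf).comp_fst
    fun_prop
  · filter_upwards [ae_restrict_mem measurableSet_Ioi] with u hu
    have hnorm : ∫ t in Ioi (0 : ℝ), ‖(t : ℂ) ^ (-s) * Complex.exp (-(t * u))‖ ≠ 0 := by
      rw [integral_norm_cpow_neg_mul_exp_neg_mul_Ioi hs hu]
      exact (mul_pos (Gamma_pos_of_pos (sub_pos.2 hs)) (rpow_pos_of_pos hu _)).ne'
    exact ((integrable_norm_iff (by fun_prop)).1 (.of_integral_ne_zero hnorm)).smul_const (f u)
  · refine (hf.norm.const_mul (Gamma (1 - s.re))).congr ?_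
    filter_upwards [ae_restrict_mem measurableSet_Ioi] with u hu
    simp only [Function.uncurry, norm_smul]
    rw [integral_mul_const, integral_norm_cpow_neg_mul_exp_neg_mul_Ioi hs hu,
      Complex.norm_cpow_eq_rpow_re_of_pos hu, Complex.sub_re, Complex.one_re, mul_assoc]

theorem Gamma_smul_mellin_eq_mellin_laplace [CompleteSpace E]
    (hs : s.re < 1) (hf : MellinConvergent f s) :
    Complex.Gamma (1 - s) • mellin f s = mellin (fun t : ℝ ↦ laplace f t) (1 - s) := by
  calc Complex.Gamma (1 - s) • mellin f s
      = ∫ u in Ioi (0 : ℝ), ∫ t in Ioi (0 : ℝ),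
          ((t : ℂ) ^ (-s) * Complex.exp (-(t * u))) • f u := by
        rw [mellin, ← integral_smul]
        refine setIntegral_congr_fun measurableSet_Ioi fun u hu ↦ ?_
        rw [integral_smul_const, integral_cpow_neg_mul_exp_neg_mul_Ioi hs hu, mul_smul]
    _ = ∫ t in Ioi (0 : ℝ), ∫ u in Ioi (0 : ℝ),
          ((t : ℂ) ^ (-s) * Complex.exp (-(t * u))) • f u :=
        integral_integral_swap (integrable_mellin_laplace_kernel hs hf)
    _ = mellin (fun t : ℝ ↦ laplace f t) (1 - s) := by
        simp only [mellin, laplace, mul_smul, integral_smul, sub_sub_cancel_left]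

theorem mellin_neg_of_comp_inv_eq {a : ℂ}
    (hf : ∀ t : ℝ, 0 < t → f t⁻¹ = (t : ℂ) ^ a • f t) (s : ℂ) :
    mellin f (-s) = mellin f (s + a) := by
  rw [← mellin_comp_inv, ← mellin_cpow_smul]
  exact setIntegral_congr_fun measurableSet_Ioi fun t ht ↦ by simp only [hf t ht]

end Mellin

theorem hasDerivAt_eq_zero_of_comp_const_sub_eq {𝕜 F : Type*} [NontriviallyNormedField 𝕜]
    [NormedAddCommGroup F] [NormedSpace 𝕜 F] [IsAddTorsionFree F] {f : 𝕜 → F} {f' : F} {a : 𝕜}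
    (hf : HasDerivAt f f' a) (hsymm : ∀ x, f (2 * a - x) = f x) : f' = 0 := by
  have hreflect : HasDerivAt (fun x ↦ f (2 * a - x)) (-f') a :=
    HasDerivAt.comp_const_sub (2 * a) a (by simpa [two_mul] using hf)
  exact self_eq_neg.1 (hf.unique (by simpa only [hsymm] using hreflect))

theorem laplace_sum_mul_exp_mul {ι : Type*} (S : Finset ι) (c a : ι → ℂ) {z : ℂ}
    (ha : ∀ i ∈ S, (a i).re < z.re) :
    laplace (fun u : ℝ ↦ ∑ i ∈ S, c i * Complex.exp (a i * u)) z = ∑ i ∈ S, c i / (z - a i) := by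
  have hre : ∀ i ∈ S, (a i - z).re < 0 := fun i hi ↦ by simpa using ha i hi
  have hexp : ∀ (i : ι) (u : ℝ), Complex.exp (-(z * u)) * (c i * Complex.exp (a i * u))
      = c i * Complex.exp ((a i - z) * u) := fun i u ↦ by
    rw [mul_left_comm, ← Complex.exp_add, sub_mul, neg_add_eq_sub]
  simp only [laplace, smul_eq_mul, Finset.mul_sum, hexp]
  rw [integral_finsetSum _ fun i hi ↦ (integrableOn_exp_mul_complex_Ioi (hre i hi) 0).const_mul _]
  refine Finset.sum_congr rfl fun i hi ↦ ?_
  rw [integral_const_mul, integral_exp_mul_complex_Ioi (hre i hi) 0, ← neg_sub z (a i),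
    neg_div_neg_eq]
  simp [div_eq_mul_inv]

theorem sin_sq_eq_sum_exp (x : ℂ) :
    Complex.sin x ^ 2 = ∑ i : Fin 3, (![1 / 2, -1 / 4, -1 / 4] : Fin 3 → ℂ) i *
      Complex.exp ((![0, 2 * Complex.I, -(2 * Complex.I)] : Fin 3 → ℂ) i * x) := by
  have hhalf : Complex.sin x ^ 2 = 1 / 2 - Complex.cos (2 * x) / 2 := by
    rw [Complex.cos_two_mul, Complex.cos_sq']
    ring
  rw [hhalf, Complex.cos]
  simp only [Fin.sum_univ_three, Matrix.cons_val, zero_mul, Complex.exp_zero]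
  ring_nf

theorem laplace_sin_sq {z : ℂ} (hz : 0 < z.re) :
    laplace (fun u : ℝ ↦ Complex.sin u ^ 2) z = 2 / (z * (z ^ 2 + 4)) := by
  have hne : ∀ b : ℂ, b.re = 0 → z - b ≠ 0 := fun b hb h ↦
    hz.ne' (by simpa [hb] using congrArg Complex.re h)
  have hne₀ : z ≠ 0 := by simpa using hne 0 rfl
  have hne₁ := hne (2 * Complex.I) (by simp)
  have hne₂ := hne (-(2 * Complex.I)) (by simp)
  have hfactor : z ^ 2 + 4 = (z - 2 * Complex.I) * (z - -(2 * Complex.I)) := by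
    linear_combination 4 * Complex.I_sq
  simp only [sin_sq_eq_sum_exp]
  rw [laplace_sum_mul_exp_mul _ _ _ fun i _ ↦ by fin_cases i <;> simpa using hz]
  simp only [Fin.sum_univ_three, Matrix.cons_val, sub_zero]
  rw [hfactor]
  field_simp
  linear_combination -16 * Complex.I_sq

theorem sin_sq_isBigO_atTop :
    (fun u : ℝ ↦ Complex.sin u ^ 2) =O[atTop] fun u : ℝ ↦ u ^ (-0 : ℝ) := by
  refine .of_bound' (.of_forall fun u ↦ ?_)
  rw [← Complex.ofReal_sin, ← Complex.ofReal_pow, Complex.norm_real]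
  simpa using abs_sin_le_one u

theorem sin_sq_isBigO_nhdsGT_zero :
    (fun u : ℝ ↦ Complex.sin u ^ 2) =O[𝓝[>] 0] fun u : ℝ ↦ u ^ (-(-2) : ℝ) := by
  refine .of_bound' (.of_forall fun u ↦ ?_)
  rw [← Complex.ofReal_sin, ← Complex.ofReal_pow, Complex.norm_real]
  simpa using sq_le_sq.2 abs_sin_le_abs

theorem inv_one_add_sq_isBigO_atTop :
    (fun t : ℝ ↦ (1 + (t : ℂ) ^ 2)⁻¹) =O[atTop] fun t : ℝ ↦ t ^ (-2 : ℝ) := by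
  refine .of_bound' ?_
  filter_upwards [eventually_gt_atTop 0] with t ht
  rw [← Complex.ofReal_pow, ← Complex.ofReal_one, ← Complex.ofReal_add, ← Complex.ofReal_inv,
    Complex.norm_real, norm_of_nonneg (by positivity), norm_of_nonneg (by positivity),
    rpow_neg ht.le, rpow_two]
  gcongr
  linarith

theorem inv_one_add_sq_isBigO_nhdsGT_zero :
    (fun t : ℝ ↦ (1 + (t : ℂ) ^ 2)⁻¹) =O[𝓝[>] 0] fun t : ℝ ↦ t ^ (-0 : ℝ) := by
  have hcont : ContinuousAt (fun t : ℝ ↦ (1 + (t : ℂ) ^ 2)⁻¹) 0 := by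
    fun_prop (disch := simp)
  simpa using (hcont.isBigO_one ℝ).mono nhdsWithin_le_nhds

theorem locallyIntegrableOn_sin_sq :
    LocallyIntegrableOn (fun u : ℝ ↦ Complex.sin u ^ 2) (Ioi 0) :=
  ContinuousOn.locallyIntegrableOn (by fun_prop) measurableSet_Ioi

theorem mellinConvergent_sin_sq {s : ℂ} (hs_bot : -2 < s.re) (hs_top : s.re < 0) :
    MellinConvergent (fun u : ℝ ↦ Complex.sin u ^ 2) s :=
  mellinConvergent_of_isBigO_rpow locallyIntegrableOn_sin_sq
    sin_sq_isBigO_atTop hs_top sin_sq_isBigO_nhdsGT_zero hs_bot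

theorem hasDerivAt_mellin_sin_sq {s : ℂ} (hs_bot : -2 < s.re) (hs_top : s.re < 0) :
    HasDerivAt (mellin fun u : ℝ ↦ Complex.sin u ^ 2)
      (mellin (fun u : ℝ ↦ log u • Complex.sin u ^ 2) s) s :=
  (mellin_hasDerivAt_of_isBigO_rpow locallyIntegrableOn_sin_sq
    sin_sq_isBigO_atTop hs_top sin_sq_isBigO_nhdsGT_zero hs_bot).2

theorem one_add_ofReal_sq_ne_zero (t : ℝ) : 1 + (t : ℂ) ^ 2 ≠ 0 := by
  exact_mod_cast (by positivity : 1 + t ^ 2 ≠ 0)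

theorem differentiableAt_mellin_inv_one_add_sq {s : ℂ} (hs_bot : 0 < s.re) (hs_top : s.re < 2) :
    DifferentiableAt ℂ (mellin fun t : ℝ ↦ (1 + (t : ℂ) ^ 2)⁻¹) s := by
  have hcont : Continuous fun t : ℝ ↦ (1 + (t : ℂ) ^ 2)⁻¹ := by
    fun_prop (disch := exact one_add_ofReal_sq_ne_zero)
  exact mellin_differentiableAt_of_isBigO_rpow (hcont.locallyIntegrable.locallyIntegrableOn _)
    inv_one_add_sq_isBigO_atTop hs_top inv_one_add_sq_isBigO_nhdsGT_zero hs_bot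

theorem mellin_inv_one_add_sq_two_sub (s : ℂ) :
    mellin (fun t : ℝ ↦ (1 + (t : ℂ) ^ 2)⁻¹) (2 - s) =
      mellin (fun t : ℝ ↦ (1 + (t : ℂ) ^ 2)⁻¹) s := by
  have hinv : ∀ t : ℝ, 0 < t →
      (1 + ((t⁻¹ : ℝ) : ℂ) ^ 2)⁻¹ = (t : ℂ) ^ (2 : ℂ) • (1 + (t : ℂ) ^ 2)⁻¹ := by
    intro t ht
    have ht : (t : ℂ) ≠ 0 := Complex.ofReal_ne_zero.2 ht.ne'
    have hne := one_add_ofReal_sq_ne_zero t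
    have hne' : (t : ℂ) ^ 2 + 1 ≠ 0 := by rwa [add_comm]
    rw [Complex.cpow_ofNat, Complex.ofReal_inv, smul_eq_mul]
    field_simp
    ring
  simpa [neg_sub, sub_add_cancel] using mellin_neg_of_comp_inv_eq
    (f := fun t : ℝ ↦ (1 + (t : ℂ) ^ 2)⁻¹) hinv (s - 2)

theorem hasDerivAt_mellin_inv_one_add_sq_one :
    HasDerivAt (mellin fun t : ℝ ↦ (1 + (t : ℂ) ^ 2)⁻¹) 0 1 := by
  have hderiv := (differentiableAt_mellin_inv_one_add_sq (s := 1) (by simp) (by simp)).hasDerivAt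
  have hzero := hasDerivAt_eq_zero_of_comp_const_sub_eq hderiv fun s ↦ by
    rw [mul_one, mellin_inv_one_add_sq_two_sub]
  rwa [hzero] at hderiv

theorem mellin_inv_one_add_sq_one :
    mellin (fun t : ℝ ↦ (1 + (t : ℂ) ^ 2)⁻¹) 1 = (π / 2 : ℂ) := by
  have hreal := congrArg ((↑) : ℝ → ℂ) (integral_Ioi_inv_one_add_sq (i := 0))
  rw [← integral_complex_ofReal] at hreal
  simpa [mellin] using hreal

theorem Gamma_mul_mellin_sin_sq {s : ℂ} (hs_bot : -2 < s.re) (hs_top : s.re < 0) :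
    Complex.Gamma (1 - s) * mellin (fun u : ℝ ↦ Complex.sin u ^ 2) s
      = 2 ^ (-(s + 1)) * mellin (fun t : ℝ ↦ (1 + (t : ℂ) ^ 2)⁻¹) (-s) := by
  have hlaplace : ∀ t ∈ Ioi (0 : ℝ), laplace (fun u : ℝ ↦ Complex.sin u ^ 2) t
      = (t : ℂ) ^ (-1 : ℂ) • ((1 / 2 : ℂ) • (1 + ((2⁻¹ * t : ℝ) : ℂ) ^ 2)⁻¹) := by
    intro t ht
    have ht₀ : (t : ℂ) ≠ 0 := Complex.ofReal_ne_zero.2 (ne_of_gt ht)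
    have hfactor : (t : ℂ) ^ 2 + 4 = 4 * (1 + ((2⁻¹ * t : ℝ) : ℂ) ^ 2) := by
      push_cast
      ring
    rw [laplace_sin_sq (by simpa using ht), Complex.cpow_neg_one, hfactor, smul_eq_mul, smul_eq_mul]
    field_simp
    norm_num
  have hpow : (1 / 2 : ℂ) * ((2⁻¹ : ℝ) : ℂ) ^ s = 2 ^ (-(s + 1)) := by
    have harg : (2 : ℂ).arg ≠ π := by simp [pi_ne_zero.symm]
    rw [Complex.ofReal_inv, Complex.ofReal_ofNat, Complex.inv_cpow _ _ harg, ← Complex.cpow_neg,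
      neg_add, Complex.cpow_add _ _ two_ne_zero, Complex.cpow_neg_one, one_div, mul_comm]
  calc Complex.Gamma (1 - s) * mellin (fun u : ℝ ↦ Complex.sin u ^ 2) s
      = mellin (fun t : ℝ ↦ laplace (fun u : ℝ ↦ Complex.sin u ^ 2) t) (1 - s) :=
        Gamma_smul_mellin_eq_mellin_laplace (hs_top.trans one_pos)
          (mellinConvergent_sin_sq hs_bot hs_top)
    _ = mellin (fun t : ℝ ↦ (t : ℂ) ^ (-1 : ℂ) •
          ((1 / 2 : ℂ) • (1 + ((2⁻¹ * t : ℝ) : ℂ) ^ 2)⁻¹)) (1 - s) :=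
        setIntegral_congr_fun measurableSet_Ioi fun t ht ↦ by simp only [hlaplace t ht]
    _ = 2 ^ (-(s + 1)) * mellin (fun t : ℝ ↦ (1 + (t : ℂ) ^ 2)⁻¹) (-s) := by
        rw [mellin_cpow_smul, mellin_const_smul,
          mellin_comp_mul_left (fun t : ℝ ↦ (1 + (t : ℂ) ^ 2)⁻¹) _ (by norm_num : (0 : ℝ) < 2⁻¹),
          show 1 - s + -1 = -s by ring, neg_neg, smul_smul, smul_eq_mul, hpow]

theorem mellin_sin_sq_neg_one : mellin (fun u : ℝ ↦ Complex.sin u ^ 2) (-1) = (π / 2 : ℂ) := by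
  have h := Gamma_mul_mellin_sin_sq (s := -1) (by simp) (by simp)
  simpa [one_add_one_eq_two, mellin_inv_one_add_sq_one] using h

theorem hasDerivAt_Gamma_two : HasDerivAt Complex.Gamma (1 - eulerMascheroniConstant) 2 := by
  simpa [one_add_one_eq_two, harmonic_succ, neg_add_eq_sub] using Complex.hasDerivAt_Gamma_nat 1

theorem hasDerivAt_Gamma_mul_mellin_sin_sq_neg_one :
    HasDerivAt (fun s ↦ Complex.Gamma (1 - s) * mellin (fun u : ℝ ↦ Complex.sin u ^ 2) s)
      (-(1 - eulerMascheroniConstant) * (π / 2)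
        + mellin (fun u : ℝ ↦ log u • Complex.sin u ^ 2) (-1)) (-1) := by
  have hGamma : HasDerivAt (fun s ↦ Complex.Gamma (1 - s)) (-(1 - eulerMascheroniConstant)) (-1) :=
    HasDerivAt.comp_const_sub 1 (-1)
      (by rw [sub_neg_eq_add, one_add_one_eq_two]; exact hasDerivAt_Gamma_two)
  have hmul := hGamma.fun_mul (hasDerivAt_mellin_sin_sq (s := -1) (by simp) (by simp))
  simpa [one_add_one_eq_two, mellin_sin_sq_neg_one] using hmul

theorem hasDerivAt_two_cpow_mul_mellin_inv_one_add_sq_neg_one :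
    HasDerivAt (fun s : ℂ ↦ 2 ^ (-(s + 1)) * mellin (fun t : ℝ ↦ (1 + (t : ℂ) ^ 2)⁻¹) (-s))
      (-log 2 * (π / 2) : ℂ) (-1) := by
  have hpow : HasDerivAt (fun s : ℂ ↦ (2 : ℂ) ^ (-(s + 1))) (-log 2) (-1) := by
    simpa using ((hasDerivAt_id (-1 : ℂ)).add_const 1).fun_neg.const_cpow (c := 2) (by simp)
  have hmellin : HasDerivAt (fun s ↦ mellin (fun t : ℝ ↦ (1 + (t : ℂ) ^ 2)⁻¹) (-s)) 0 (-1) := by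
    have hcenter := hasDerivAt_mellin_inv_one_add_sq_one
    rw [← neg_neg (1 : ℂ)] at hcenter
    simpa [Function.comp_def] using hcenter.scomp (-1) (hasDerivAt_neg (-1))
  simpa [mellin_inv_one_add_sq_one] using hpow.fun_mul hmellin

theorem mellin_log_smul_sin_sq_neg_one :
    mellin (fun u : ℝ ↦ log u • Complex.sin u ^ 2) (-1)
      = (π / 2 * (1 - eulerMascheroniConstant - log 2) : ℂ) := by
  have hfunctional : (fun s ↦ Complex.Gamma (1 - s) * mellin (fun u : ℝ ↦ Complex.sin u ^ 2) s)
      =ᶠ[𝓝 (-1)] fun s ↦ 2 ^ (-(s + 1)) * mellin (fun t : ℝ ↦ (1 + (t : ℂ) ^ 2)⁻¹) (-s) := by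
    have hstrip : ∀ᶠ s : ℂ in 𝓝 (-1), s.re ∈ Ioo (-2 : ℝ) 0 :=
      Complex.continuous_re.continuousAt.eventually (Ioo_mem_nhds (by simp) (by simp))
    filter_upwards [hstrip] with s hs
    exact Gamma_mul_mellin_sin_sq hs.1 hs.2
  have hderiv := hasDerivAt_Gamma_mul_mellin_sin_sq_neg_one.unique
    (hasDerivAt_two_cpow_mul_mellin_inv_one_add_sq_neg_one.congr_of_eventuallyEq hfunctional)
  linear_combination hderiv

/-- `∫_0^∞ (sin u / u)² log u du = (π/2)(1 - γ₀ - log 2)`. -/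
theorem integral_sinc_sq_mul_log :
    (∫ u in Set.Ioi (0:ℝ), (Real.sin u / u) ^ 2 * Real.log u)
      = π / 2 * (1 - Real.eulerMascheroniConstant - Real.log 2) := by
  have hmellin : mellin (fun u : ℝ ↦ log u • Complex.sin u ^ 2) (-1)
      = ∫ u in Ioi (0 : ℝ), (((sin u / u) ^ 2 * log u : ℝ) : ℂ) := by
    refine setIntegral_congr_fun measurableSet_Ioi fun u _ ↦ ?_
    have hpow : (u : ℂ) ^ (-1 - 1 : ℂ) = ((u : ℂ) ^ 2)⁻¹ := by
      rw [show (-1 - 1 : ℂ) = -2 by norm_num, Complex.cpow_neg, Complex.cpow_ofNat]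
    simp only [hpow, smul_eq_mul, Complex.real_smul]
    push_cast
    ring
  rw [mellin_log_smul_sin_sq_neg_one, integral_complex_ofReal] at hmellin
  exact_mod_cast hmellin.symm
end
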